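/- arXiv:2411.16307 — 2 statements merged into one kernel-verified Lean document; each statement's English description precedes it below -/
import Mathlib

section
/- Up to isomorphism, there are exactly 3 Steiner triple systems of order 19 that contain exactly one Veblen point. -/
/-!
A Steiner triple system on `α` is the same thing as a Steiner loop on `Option α`: a commutative
loop with `x * (x * y) = y`, where `a * b` is the third point of the triple through `a ≠ b`.
Isomorphisms correspond to loop isomorphisms, and Veblen points to the nuclear elements `z ≠ 1`,
those with `z * (a * b) = (z * a) * b` (`STSLoop.isVeblen_iff`).

If a Steiner loop of order 20 has a nuclear `z ≠ 1`, then modulo `{1, z}` it is a Steiner loop of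
order 10, which is the loop of the affine plane `AG(2,3)` (`exists_affine_coordinates`). The loop
is thus an extension of that loop by `ZMod 2`, and the cocycle is a function on the 12 lines of
the plane: `Model F`, where `F i c` is the value on the line of direction `i` and intercept `c`
(`exists_model`). Conversely every `Model F` has exactly one nuclear element other than `1`,
because the loop of `AG(2,3)` has none.

Functions on lines matter only up to coboundaries `g u + g v + g w` of functions `g` on the nine
points, and up to affine maps. Functions `g` that are sums of functions of the four linear forms
give as coboundaries every `F` summing to zero over each parallel class, so only the four sums
`∑ c, F i c` matter (`Model.equiv_pencil`). The indicator of the origin adds one to all four of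
them, and `GL(2,3)` permutes the four directions as the full symmetric group; hence the number of
directions with nonzero sum may be taken to be 0, 1 or 2 (`Model.equiv_rep`).

The three resulting loops are told apart by an identity `Med` in three variables
(`Model.rep_injective`): it holds identically in the first only, while the existence of a
non-associating triple satisfying it in three different orders separates the second from the third.
-/

universe u v

/-- `T` is the triple set of a Steiner triple system on the point set `α`:
every member of `T` has three elements, and every pair of distinct points
lies in exactly one member of `T`. -/
def IsSTS {α : Type u} (T : Set (Finset α)) : Prop :=
  (∀ t ∈ T, t.card = 3) ∧
  ∀ a b : α, a ≠ b → ∃! t : Finset α, t ∈ T ∧ a ∈ t ∧ b ∈ t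

/-- `x` is a Veblen point of the Steiner triple system with triple set `T`:
whenever `{x,a,b}`, `{x,c,d}` and `{t,a,c}` are triples, so is `{t,b,d}`. -/
def IsVeblen {α : Type u} [DecidableEq α] (T : Set (Finset α)) (x : α) : Prop :=
  ∀ a b c d t : α, ({x, a, b} : Finset α) ∈ T → ({x, c, d} : Finset α) ∈ T →
    ({t, a, c} : Finset α) ∈ T → ({t, b, d} : Finset α) ∈ T

/-- Isomorphism of Steiner triple systems: a bijection of the point sets carrying
the triples of one system exactly onto the triples of the other. -/
def STSIso {α : Type u} {β : Type v} [DecidableEq β]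
    (T₁ : Set (Finset α)) (T₂ : Set (Finset β)) : Prop :=
  ∃ e : α ≃ β, ∀ t : Finset α, t ∈ T₁ ↔ t.image (e : α → β) ∈ T₂

/-- The points of the quotient system at a point `x`: the triples through `x`. -/
abbrev QuotPts {α : Type u} (T : Set (Finset α)) (x : α) : Type u :=
  {t : Finset α // t ∈ T ∧ x ∈ t}

/-- The triples of the quotient system at a Veblen point `x`: three distinct
triples `T1`, `T2`, `T3` through `x` form a triple iff there are `a ∈ T1 \ {x}`
and `c ∈ T2 \ {x}` such that the third point of the triple through `a` and `c`
lies in `T3`. -/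
def QuotTriples {α : Type u} [DecidableEq α] (T : Set (Finset α)) (x : α) :
    Set (Finset (QuotPts T x)) :=
  {b | ∃ T1 T2 T3 : QuotPts T x, T1 ≠ T2 ∧ T1 ≠ T3 ∧ T2 ≠ T3 ∧ b = {T1, T2, T3} ∧
      ∃ a ∈ T1.1, a ≠ x ∧ ∃ c ∈ T2.1, c ≠ x ∧
        ∃ d, ({a, c, d} : Finset α) ∈ T ∧ d ∈ T3.1}

/-- The nonzero vectors of `GF(2)^n`, i.e. the points of `PG(n-1,2)`. -/
abbrev PGPt (n : ℕ) : Type := {u : Fin n → ZMod 2 // u ≠ 0}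

/-- The lines of `PG(n-1,2)`: sets `{u,v,w}` of distinct nonzero vectors of
`GF(2)^n` with `u + v + w = 0`. -/
def PGTriples (n : ℕ) : Set (Finset (PGPt n)) :=
  {t | ∃ u v w : PGPt n, u ≠ v ∧ u ≠ w ∧ v ≠ w ∧ t = {u, v, w} ∧
      u.1 + v.1 + w.1 = 0}

/-- The system contains a Pasch configuration: six distinct points
`x, a, b, c, d, t` with `{x,a,b}`, `{x,c,d}`, `{t,a,c}`, `{t,b,d}` all triples. -/
def HasPasch {α : Type u} [DecidableEq α] (T : Set (Finset α)) : Prop :=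
  ∃ x a b c d t : α, ({x, a, b, c, d, t} : Finset α).card = 6 ∧
    ({x, a, b} : Finset α) ∈ T ∧ ({x, c, d} : Finset α) ∈ T ∧
    ({t, a, c} : Finset α) ∈ T ∧ ({t, b, d} : Finset α) ∈ T

/-! ### Steiner loops -/

/-- A commutative loop in which `x * (x * y) = y`. -/
class SteinerLoop (L : Type*) extends MulOneClass L, CommMagma L where
  mul_mul_cancel : ∀ x y : L, x * (x * y) = y

namespace SteinerLoop

section Basic
variable {L : Type*} [SteinerLoop L]

theorem mul_self (x : L) : x * x = 1 := by
  have := mul_mul_cancel x 1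
  rwa [mul_one] at this

theorem left_cancel {x y y' : L} (h : x * y = x * y') : y = y' := by
  rw [← mul_mul_cancel x y, h, mul_mul_cancel]

theorem right_cancel {x x' y : L} (h : x * y = x' * y) : x = x' := by
  rw [mul_comm x, mul_comm x'] at h
  exact left_cancel h

theorem eq_mul_of_mul_eq {x y t : L} (h : x * y = t) : x * t = y := by
  rw [← h, mul_mul_cancel]

theorem mul_ne_one {x y : L} (h : x ≠ y) : x * y ≠ 1 := by
  intro h'
  exact h (left_cancel (x := x) (by rw [h', mul_self]))

/-- `z` lies in the (left) nucleus. In a Steiner loop the left nucleus is also the centre. -/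
def Nuclear (z : L) : Prop := ∀ a b : L, z * (a * b) = (z * a) * b

end Basic

end SteinerLoop

open SteinerLoop

/-! ### The Steiner loop of a Steiner triple system -/

section STSLoop
variable {α : Type*} [DecidableEq α] {T : Set (Finset α)}

theorem IsSTS.exists_third (h : IsSTS T) {a b : α} (hab : a ≠ b) :
    ∃ c, c ≠ a ∧ c ≠ b ∧ ({a, b, c} : Finset α) ∈ T := by
  obtain ⟨t, ⟨ht, ha, hb⟩, -⟩ := h.2 a b hab
  have h1 : ((t.erase a).erase b).card = 1 := by
    rw [Finset.card_erase_of_mem (Finset.mem_erase.2 ⟨hab.symm, hb⟩),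
      Finset.card_erase_of_mem ha, h.1 t ht]
  obtain ⟨c, hc⟩ := Finset.card_eq_one.1 h1
  have hc' : c ∈ (t.erase a).erase b := by simp [hc]
  simp only [Finset.mem_erase] at hc'
  refine ⟨c, hc'.2.1, hc'.1, ?_⟩
  have : ({a, b, c} : Finset α) = t := by
    rw [← hc, Finset.insert_erase (Finset.mem_erase.2 ⟨hab.symm, hb⟩), Finset.insert_erase ha]
  rwa [this]

theorem IsSTS.distinct (h : IsSTS T) {a b c : α} (ht : ({a, b, c} : Finset α) ∈ T) :
    a ≠ b ∧ a ≠ c ∧ b ≠ c := by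
  have h3 := h.1 _ ht
  have h2 (x y : α) : ({x, y} : Finset α).card ≠ 3 := by
    have := Finset.card_le_two (a := x) (b := y)
    omega
  refine ⟨?_, ?_, ?_⟩ <;> rintro rfl
  · exact h2 a c (by simpa using h3)
  · exact h2 b a (by simpa using h3)
  · exact h2 a b (by simpa using h3)

theorem IsSTS.third_unique (h : IsSTS T) {a b c d : α} (hc : ({a, b, c} : Finset α) ∈ T)
    (hd : ({a, b, d} : Finset α) ∈ T) : c = d := by
  obtain ⟨hab, hac, hbc⟩ := h.distinct hc
  have he := (h.2 a b hab).unique ⟨hc, by simp, by simp⟩ ⟨hd, by simp, by simp⟩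
  have : c ∈ ({a, b, d} : Finset α) := by rw [← he]; simp
  simp only [Finset.mem_insert, Finset.mem_singleton] at this
  rcases this with h | h | h
  · exact absurd h.symm hac
  · exact absurd h.symm hbc
  · exact h

/-- The third point of the triple through `a` and `b`; by convention `a` when `a = b`. -/
noncomputable def IsSTS.third (h : IsSTS T) (a b : α) : α :=
  if hab : a = b then a else (h.exists_third hab).choose

theorem IsSTS.third_mem (h : IsSTS T) {a b : α} (hab : a ≠ b) :
    ({a, b, h.third a b} : Finset α) ∈ T := by
  rw [IsSTS.third, dif_neg hab]
  exact (h.exists_third hab).choose_spec.2.2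

theorem IsSTS.mem_iff (h : IsSTS T) {a b c : α} :
    ({a, b, c} : Finset α) ∈ T ↔ a ≠ b ∧ h.third a b = c := by
  constructor
  · intro hc
    exact ⟨(h.distinct hc).1, h.third_unique (h.third_mem (h.distinct hc).1) hc⟩
  · rintro ⟨hab, rfl⟩
    exact h.third_mem hab

/-- The Steiner loop of a triple system: the points together with an identity element `none`. -/
def STSLoop (_h : IsSTS T) : Type _ := Option α

namespace STSLoop

/-- A point of the system, as an element of its Steiner loop. -/
def of (h : IsSTS T) (a : α) : STSLoop h := some a

instance (h : IsSTS T) : One (STSLoop h) := ⟨(none : Option α)⟩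

noncomputable instance (h : IsSTS T) : Mul (STSLoop h) where
  mul x y := match x, y with
    | none, y => y
    | some a, none => some a
    | some a, some b => if a = b then none else some (h.third a b)

theorem eq_one_or_of {h : IsSTS T} (x : STSLoop h) : x = 1 ∨ ∃ a, x = of h a := by
  rcases x with _ | a
  · exact .inl rfl
  · exact .inr ⟨a, rfl⟩

theorem of_mul_self (h : IsSTS T) (a : α) : of h a * of h a = 1 := if_pos rfl

theorem of_mul_of (h : IsSTS T) {a b : α} (hab : a ≠ b) :
    of h a * of h b = of h (h.third a b) := if_neg hab

noncomputable instance (h : IsSTS T) : SteinerLoop (STSLoop h) where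
  one_mul _ := rfl
  mul_one x := by cases x <;> rfl
  mul_comm x y := by
    rcases eq_one_or_of x with rfl | ⟨a, rfl⟩ <;> rcases eq_one_or_of y with rfl | ⟨b, rfl⟩ <;>
      try rfl
    rcases eq_or_ne a b with rfl | hab
    · rfl
    · rw [of_mul_of h hab, of_mul_of h hab.symm]
      have := h.third_mem hab.symm
      rw [Finset.insert_comm] at this
      rw [(h.mem_iff.1 this).2]
  mul_mul_cancel x y := by
    rcases eq_one_or_of x with rfl | ⟨a, rfl⟩
    · rfl
    rcases eq_one_or_of y with rfl | ⟨b, rfl⟩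
    · exact of_mul_self h a
    rcases eq_or_ne a b with rfl | hab
    · rw [of_mul_self]
      rfl
    · have h1 := h.third_mem hab
      rw [Finset.pair_comm, h.mem_iff] at h1
      rw [of_mul_of h hab, of_mul_of h h1.1, h1.2]

theorem of_ne_one (h : IsSTS T) (a : α) : of h a ≠ 1 := Option.some_ne_none a

theorem of_injective (h : IsSTS T) : Function.Injective (of h) := Option.some_injective α

theorem mem_iff (h : IsSTS T) {a b c : α} :
    ({a, b, c} : Finset α) ∈ T ↔ a ≠ b ∧ of h a * of h b = of h c := by
  rw [h.mem_iff]
  refine and_congr_right fun hab => ?_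
  rw [of_mul_of h hab, (of_injective h).eq_iff]

/-- A point is a Veblen point iff it is nuclear in the Steiner loop. -/
theorem isVeblen_iff (h : IsSTS T) (x : α) : IsVeblen T x ↔ Nuclear (of h x) := by
  constructor
  · intro hv a b
    rcases eq_or_ne a 1 with rfl | ha
    · simp
    rcases eq_or_ne a (of h x) with rfl | hax
    · rw [mul_mul_cancel, mul_self, one_mul]
    rcases eq_or_ne b (of h x) with rfl | hbx
    · rw [mul_comm a, mul_mul_cancel, mul_comm _ a, mul_comm a, mul_comm, mul_mul_cancel]
    rcases eq_or_ne b 1 with rfl | hb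
    · simp
    rcases eq_or_ne a b with rfl | hab
    · rw [mul_self, mul_one, mul_comm, mul_comm _ a, mul_mul_cancel]
    rcases eq_or_ne (of h x) (a * b) with hx | hx
    · rw [← hx, mul_self, eq_comm, hx, mul_comm (a * b), mul_mul_cancel, mul_self]
    obtain ⟨a, rfl⟩ := (eq_one_or_of a).resolve_left ha
    obtain ⟨b, rfl⟩ := (eq_one_or_of b).resolve_left hb
    obtain ⟨t, ht⟩ := (eq_one_or_of (of h a * of h b)).resolve_left (mul_ne_one hab)
    obtain ⟨s, hs⟩ := (eq_one_or_of (of h x * of h t)).resolve_left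
      (mul_ne_one (by rwa [← ht]))
    obtain ⟨r, hr⟩ := (eq_one_or_of (of h x * of h a)).resolve_left (mul_ne_one hax.symm)
    have h3 := hv t s a r b ((mem_iff h).2 ⟨?_, hs⟩) ((mem_iff h).2 ⟨?_, hr⟩)
      ((mem_iff h).2 ⟨?_, ?_⟩)
    · have h4 := ((mem_iff h).1 h3).2
      rw [ht, hs, hr, mul_comm]
      exact (eq_mul_of_mul_eq h4).symm ▸ rfl
    · rintro rfl; exact hx ht.symm
    · rintro rfl; exact hax rfl
    · rintro rfl
      exact ha (right_cancel (y := of h b) (by rw [ht, one_mul]))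
    · exact eq_mul_of_mul_eq (by rw [mul_comm, ht])
  · intro hn a b c d t h1 h2 h3
    obtain ⟨-, h1⟩ := (mem_iff h).1 h1
    obtain ⟨-, h2⟩ := (mem_iff h).1 h2
    obtain ⟨hta, h3'⟩ := (mem_iff h).1 h3
    have hac := (h.distinct h3).2.2
    have key : of h b * of h d = of h t := by
      rw [← h1, ← h2, ← hn, mul_comm (of h a), ← hn, mul_mul_cancel, mul_comm (of h c),
        ← h3', mul_comm (of h t), mul_mul_cancel]
    have : ({b, d, t} : Finset α) ∈ T := by
      refine (mem_iff h).2 ⟨?_, key⟩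
      rintro rfl
      exact of_ne_one h t (by rw [← key, mul_self])
    convert this using 1
    ext y; simp; tauto

end STSLoop

end STSLoop

/-! ### Isomorphisms of systems and of loops -/

section Transport

theorem STSIso.nonempty_mulEquiv {α β : Type*} [DecidableEq α] [DecidableEq β]
    {T₁ : Set (Finset α)} {T₂ : Set (Finset β)} (h₁ : IsSTS T₁) (h₂ : IsSTS T₂)
    (hiso : STSIso T₁ T₂) : Nonempty (STSLoop h₁ ≃* STSLoop h₂) := by
  obtain ⟨e, he⟩ := hiso
  let φ : STSLoop h₁ ≃ STSLoop h₂ := e.optionCongr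
  have φ_of (a : α) : φ (STSLoop.of h₁ a) = STSLoop.of h₂ (e a) := rfl
  have φ_one : φ 1 = 1 := rfl
  refine ⟨⟨φ, fun x y => ?_⟩⟩
  change φ (x * y) = φ x * φ y
  rcases STSLoop.eq_one_or_of x with rfl | ⟨a, rfl⟩
  · rw [one_mul, φ_one, one_mul]
  rcases STSLoop.eq_one_or_of y with rfl | ⟨b, rfl⟩
  · rw [mul_one, φ_one, mul_one]
  rcases eq_or_ne a b with rfl | hab
  · rw [mul_self, mul_self, φ_one]
  · have h3 := (he _).1 (h₁.third_mem hab)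
    simp only [Finset.image_insert, Finset.image_singleton] at h3
    rw [STSLoop.of_mul_of h₁ hab, φ_of, φ_of, φ_of, ((STSLoop.mem_iff h₂).1 h3).2]

theorem STSIso.of_mulEquiv {α β : Type*} [DecidableEq α] [DecidableEq β]
    {T₁ : Set (Finset α)} {T₂ : Set (Finset β)} (h₁ : IsSTS T₁) (h₂ : IsSTS T₂)
    (φ : STSLoop h₁ ≃* STSLoop h₂) : STSIso T₁ T₂ := by
  let e : α ≃ β := Equiv.removeNone (φ.toEquiv : Option α ≃ Option β)
  have he (a : α) : STSLoop.of h₂ (e a) = φ (STSLoop.of h₁ a) := by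
    obtain ⟨b, hb⟩ := (STSLoop.eq_one_or_of (φ (STSLoop.of h₁ a))).resolve_left
      (fun h => STSLoop.of_ne_one h₁ a (by simpa using h))
    exact Equiv.removeNone_some (φ.toEquiv : Option α ≃ Option β) ⟨b, hb⟩
  have key (a b c : α) : ({a, b, c} : Finset α) ∈ T₁ ↔
      ({a, b, c} : Finset α).image (e : α → β) ∈ T₂ := by
    simp only [Finset.image_insert, Finset.image_singleton]
    rw [STSLoop.mem_iff h₁, STSLoop.mem_iff h₂, he, he, he, ← map_mul,
      EmbeddingLike.apply_eq_iff_eq, e.injective.ne_iff]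
  refine ⟨e, fun t => ⟨fun ht => ?_, fun ht => ?_⟩⟩
  · obtain ⟨a, b, c, -, -, -, rfl⟩ := Finset.card_eq_three.1 (h₁.1 t ht)
    exact (key a b c).1 ht
  · have h3 := h₂.1 _ ht
    rw [Finset.card_image_of_injective _ e.injective] at h3
    obtain ⟨a, b, c, -, -, -, rfl⟩ := Finset.card_eq_three.1 h3
    exact (key a b c).2 ht

/-- Every finite Steiner loop is the loop of a Steiner triple system on its non-identity elements. -/
theorem exists_sts_of_loop {L : Type*} [SteinerLoop L] {n : ℕ} (hc : Nat.card L = n + 1) :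
    ∃ (T : Set (Finset (Fin n))) (h : IsSTS T), Nonempty (STSLoop h ≃* L) := by
  classical
  have : Finite L := Nat.finite_of_card_ne_zero (by omega)
  obtain ⟨E, hE⟩ : ∃ E : Option (Fin n) ≃ L, E none = 1 := by
    obtain ⟨E₀⟩ := (Finite.card_eq (α := Option (Fin n)) (β := L)).1 (by simp [hc])
    exact ⟨E₀.trans (Equiv.swap (E₀ none) 1), by simp⟩
  have inj {a b : Fin n} (h : E (some a) = E (some b)) : a = b :=
    Option.some_injective _ (E.injective h)
  have ne1 (a : Fin n) : E (some a) ≠ 1 := by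
    rw [← hE]
    exact fun h => Option.some_ne_none a (E.injective h)
  have surj (x : L) (hx : x ≠ 1) : ∃ a, E (some a) = x := by
    obtain ⟨_ | a, rfl⟩ := E.surjective x
    · exact absurd hE hx
    · exact ⟨a, rfl⟩
  let T : Set (Finset (Fin n)) :=
    {t | ∃ a b c, a ≠ b ∧ t = {a, b, c} ∧ E (some a) * E (some b) = E (some c)}
  have mem (a b c : Fin n) (hab : a ≠ b) (habc : E (some a) * E (some b) = E (some c)) :
      ({a, b, c} : Finset (Fin n)) ∈ T := ⟨a, b, c, hab, rfl, habc⟩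
  have hT : IsSTS T := by
    constructor
    · rintro _ ⟨a, b, c, hab, rfl, habc⟩
      refine Finset.card_eq_three.2 ⟨a, b, c, hab, ?_, ?_, rfl⟩
      · rintro rfl
        exact ne1 b (left_cancel (x := E (some a)) (by rw [habc, mul_one]))
      · rintro rfl
        exact ne1 a (right_cancel (y := E (some b)) (by rw [habc, one_mul]))
    · intro a b hab
      obtain ⟨c, hc⟩ := surj (E (some a) * E (some b)) (mul_ne_one fun h => hab (inj h))
      refine ⟨{a, b, c}, ⟨mem a b c hab hc.symm, by simp, by simp⟩, ?_⟩
      rintro _ ⟨⟨a', b', c', hab', rfl, habc'⟩, ha, hb⟩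
      have h2 := eq_mul_of_mul_eq habc'
      have h3 := eq_mul_of_mul_eq ((mul_comm _ _).trans habc')
      have hc1 : E (some c) = E (some b) * E (some a) := by rw [hc, mul_comm]
      simp only [Finset.mem_insert, Finset.mem_singleton] at ha hb
      have fin (c₁ c₂ : Fin n) (h : E (some c₁) = E (some c₂)) : c₁ = c₂ := inj h
      rcases ha with rfl | rfl | rfl <;> rcases hb with rfl | rfl | rfl <;>
        first
        | exact absurd rfl hab
        | (obtain rfl := fin _ _ (hc.trans habc'); rfl)
        | (obtain rfl := fin _ _ (hc1.trans habc'); ext; simp; tauto)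
        | (obtain rfl := fin _ _ (hc.trans h2); ext; simp; tauto)
        | (obtain rfl := fin _ _ (hc1.trans h2); ext; simp; tauto)
        | (obtain rfl := fin _ _ (hc.trans h3); ext; simp; tauto)
        | (obtain rfl := fin _ _ (hc1.trans h3); ext; simp; tauto)
  refine ⟨T, hT, ⟨⟨(E : STSLoop hT ≃ L), fun x y => ?_⟩⟩⟩
  let φ : STSLoop hT ≃ L := E
  change φ (x * y) = φ x * φ y
  have φ_one : φ 1 = 1 := hE
  rcases STSLoop.eq_one_or_of x with rfl | ⟨a, rfl⟩
  · rw [one_mul, φ_one, one_mul]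
  rcases STSLoop.eq_one_or_of y with rfl | ⟨b, rfl⟩
  · rw [mul_one, φ_one, mul_one]
  rcases eq_or_ne a b with rfl | hab
  · rw [mul_self, mul_self, φ_one]
  · obtain ⟨c, hc⟩ := surj (E (some a) * E (some b)) (mul_ne_one fun h => hab (inj h))
    rw [((STSLoop.mem_iff hT).1 (mem a b c hab hc.symm)).2]
    exact hc

end Transport

/-! ### The Steiner loop of order 10 -/

section OrderTen

/-- The points of the affine plane `AG(2,3)`. -/
abbrev V : Type := ZMod 3 × ZMod 3

/-- Linear forms whose kernels are the four directions of `AG(2,3)`. The lines are the sets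
`{u | form i u = c}`. -/
def form : Fin 4 → V → ZMod 3
  | 0, u => u.1
  | 1, u => u.2
  | 2, u => u.1 + u.2
  | 3, u => u.1 - u.2

/-- The direction of the line through `u` and `v`, for `u ≠ v`. -/
def dir (u v : V) : Fin 4 :=
  if u.1 = v.1 then 0 else if u.2 = v.2 then 1 else if u.1 + u.2 = v.1 + v.2 then 2 else 3

/-- A point of the line `form i = c`. -/
def fstPt : Fin 4 → ZMod 3 → V
  | 0, c => (c, 0)
  | 1, c => (0, c)
  | 2, c => (0, c)
  | 3, c => (c, 0)

/-- A second point of the line `form i = c`. -/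
def sndPt : Fin 4 → ZMod 3 → V
  | 0, c => (c, 1)
  | 1, c => (1, c)
  | 2, c => (1, c - 1)
  | 3, c => (c + 1, 1)

theorem line_cases : ∀ u v : V, u ≠ v →
    let p := fstPt (dir u v) (form (dir u v) u)
    let q := sndPt (dir u v) (form (dir u v) u)
    (u = p ∧ v = q) ∨ (u = q ∧ v = p) ∨ (u = p ∧ v = -p - q) ∨ (u = -p - q ∧ v = p) ∨
      (u = q ∧ v = -q - p) ∨ (u = -q - p ∧ v = q) := by
  decide +kernel

theorem fstPt_ne_sndPt : ∀ i c, fstPt i c ≠ sndPt i c := by decide +kernel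

theorem dir_pts : ∀ i c, dir (fstPt i c) (sndPt i c) = i ∧ form i (fstPt i c) = c := by
  decide +kernel

theorem third_ne : ∀ u v : V, u ≠ v → u ≠ -u - v := by decide +kernel

theorem dir_comm : ∀ u v : V, dir v u = dir u v := by decide +kernel

theorem dir_third : ∀ u v : V, u ≠ v → dir u (-u - v) = dir u v := by decide +kernel

theorem form_dir : ∀ u v : V, form (dir u v) v = form (dir u v) u := by decide +kernel

/-- A property of ordered pairs of distinct points that is stable under swapping and under passing to
the third point of the line need only be checked once on each line. -/
theorem line_induction {R : V → V → Prop} (symm : ∀ u v, u ≠ v → R u v → R v u)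
    (third : ∀ u v, u ≠ v → R u v → R u (-u - v))
    (base : ∀ i c, R (fstPt i c) (sndPt i c)) (u v : V) (huv : u ≠ v) : R u v := by
  have hne := fstPt_ne_sndPt (dir u v) (form (dir u v) u)
  have hb := base (dir u v) (form (dir u v) u)
  have hcases := line_cases u v huv
  generalize fstPt (dir u v) (form (dir u v) u) = p at *
  generalize sndPt (dir u v) (form (dir u v) u) = q at *
  rcases hcases with ⟨h1, h2⟩ | ⟨h1, h2⟩ | ⟨h1, h2⟩ | ⟨h1, h2⟩ | ⟨h1, h2⟩ | ⟨h1, h2⟩ <;>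
    rw [h1, h2]
  · exact hb
  · exact symm _ _ hne hb
  · exact third _ _ hne hb
  · exact symm _ _ (third_ne _ _ hne) (third _ _ hne hb)
  · exact third _ _ hne.symm (symm _ _ hne hb)
  · exact symm _ _ (third_ne _ _ hne.symm) (third _ _ hne.symm (symm _ _ hne hb))

variable {Q : Type*} [SteinerLoop Q]

/-- Elements `o`, `a`, `b` of a Steiner loop of order 10 for which the ten listed products are distinct,
hence exhaust the loop. -/
theorem exists_frame (hc : Nat.card Q = 10) :
    ∃ o a b : Q, [1, o, a, b, o * a, o * b, a * b, o * (a * b), (a * b) * (o * a),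
      o * ((a * b) * (o * a))].Nodup := by
  classical
  have : Finite Q := Nat.finite_of_card_ne_zero (by omega)
  have := Fintype.ofFinite Q
  have avoid (l : List Q) (hl : l.length < 10) : ∃ x, x ∉ l := by
    by_contra! hcon
    have h1 : l.toFinset = Finset.univ := by ext; simp [hcon]
    have h2 := List.toFinset_card_le l
    rw [h1, Finset.card_univ, ← Nat.card_eq_fintype_card] at h2
    omega
  obtain ⟨o, ho⟩ := avoid [1] (by simp)
  obtain ⟨a, ha⟩ := avoid [1, o] (by simp)
  obtain ⟨b, hb⟩ := avoid [1, o, a, o * a] (by simp)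
  have m1 := mul_one (M := Q)
  have m2 := one_mul (M := Q)
  have mc := mul_comm (G := Q)
  have mm := mul_mul_cancel (L := Q)
  have ms := mul_self (L := Q)
  -- Otherwise any `u` outside the eight products below yields, with `o * u` and `(a * b) * u`,
  -- eleven distinct elements.
  have pasch : (a * b) * (o * a) ≠ o * b := by
    intro hp
    obtain ⟨u, hu⟩ := avoid [1, o, a, b, o * a, o * b, a * b, o * (a * b)] (by simp)
    have : [1, o, a, b, o * a, o * b, a * b, o * (a * b), u, o * u, (a * b) * u].Nodup := by
      simp at ho ha hb hu ⊢
      clear avoid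
      and_intros <;> first | assumption | (intro h; grind)
    have h2 := this.length_le_card
    rw [← Nat.card_eq_fintype_card] at h2
    simp only [List.length_cons, List.length_nil] at h2
    omega
  refine ⟨o, a, b, ?_⟩
  simp at ho ha hb ⊢
  clear avoid
  and_intros <;> first | assumption | (intro h; grind)

/-- Uniqueness of the Steiner triple system of order 9: every Steiner loop of order 10 is the loop
of `AG(2,3)`, in which three distinct points form a triple iff their sum is zero. -/
theorem exists_affine_coordinates (hc : Nat.card Q = 10) :
    ∃ γ : Option V → Q, Function.Bijective γ ∧ γ none = 1 ∧
      ∀ u v : V, u ≠ v → γ (some u) * γ (some v) = γ (some (-u - v)) := by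
  classical
  have : Finite Q := Nat.finite_of_card_ne_zero (by omega)
  have := Fintype.ofFinite Q
  obtain ⟨o, a, b, hnd⟩ := exists_frame hc
  have hall (x : Q) : x ∈ [1, o, a, b, o * a, o * b, a * b, o * (a * b), (a * b) * (o * a),
      o * ((a * b) * (o * a))] := by
    have h := Finset.eq_univ_of_card _ ((List.toFinset_card_of_nodup hnd).trans
      (hc.symm.trans Nat.card_eq_fintype_card))
    rw [← List.mem_toFinset, h]
    exact Finset.mem_univ x
  have m1 := mul_one (M := Q)
  have m2 := one_mul (M := Q)
  have mc := mul_comm (G := Q)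
  have mm := mul_mul_cancel (L := Q)
  have ms := mul_self (L := Q)
  obtain ⟨p, hp⟩ : ∃ p, o * a = p := ⟨_, rfl⟩
  obtain ⟨q, hq⟩ : ∃ q, o * b = q := ⟨_, rfl⟩
  obtain ⟨c, hc'⟩ : ∃ c, a * b = c := ⟨_, rfl⟩
  rw [hp, hq, hc'] at hnd
  simp only [hp, hq, hc'] at hall
  obtain ⟨w, hw⟩ : ∃ w, o * c = w := ⟨_, rfl⟩
  obtain ⟨v, hv⟩ : ∃ v, c * p = v := ⟨_, rfl⟩
  rw [hw, hv] at hnd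
  simp only [hw, hv] at hall
  obtain ⟨u, hu⟩ : ∃ u, o * v = u := ⟨_, rfl⟩
  rw [hu] at hnd
  simp only [hu] at hall
  simp only [List.mem_cons, List.not_mem_nil, or_false] at hall
  simp at hnd
  -- The remaining products are forced, as all other values are excluded by cancellation.
  have hbw : b * w = v := by
    have := hall (b * v)
    grind
  have hav : a * v = q := by
    have := hall (a * v)
    grind
  have hqu : q * u = c := by
    have := hall (q * c)
    grind
  have haw : a * w = u := by
    have := hall (a * w)
    grind
  have hpb : p * b = u := by
    have := hall (p * b)
    grind
  have hqw : q * w = p := by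
    have := hall (q * w)
    grind
  -- Coordinates with `o` at the origin, `a` at `(1, 0)` and `b` at `(0, 1)`.
  let γ : Option V → Q := fun x =>
    x.elim 1 fun y => (![![o, b, q], ![a, w, u], ![p, v, c]] : Fin 3 → Fin 3 → Q) y.1 y.2
  have hsurj : Function.Surjective γ := by
    intro x
    rcases hall x with h | h | h | h | h | h | h | h | h | h <;> rw [h]
    exacts [⟨none, rfl⟩, ⟨some (0, 0), rfl⟩, ⟨some (1, 0), rfl⟩, ⟨some (0, 1), rfl⟩,
      ⟨some (2, 0), rfl⟩, ⟨some (0, 2), rfl⟩, ⟨some (2, 2), rfl⟩, ⟨some (1, 1), rfl⟩,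
      ⟨some (2, 1), rfl⟩, ⟨some (1, 2), rfl⟩]
  refine ⟨γ, (Nat.bijective_iff_surjective_and_card γ).2 ⟨hsurj, by rw [hc]; simp⟩, rfl, ?_⟩
  refine line_induction (fun x y _ h => ?_) (fun x y _ h => ?_) (fun i d => ?_)
  · rw [mul_comm, h]
    congr 2
    ring
  · have e : -x - (-x - y) = y := by ring
    rw [e]
    exact eq_mul_of_mul_eq h
  · fin_cases i <;> fin_cases d
    exacts [hq, haw, eq_mul_of_mul_eq ((mul_comm p c).trans hv),
      hp, hbw, hqu, eq_mul_of_mul_eq hu, (mul_comm b a).trans hc', hqw, eq_mul_of_mul_eq hw, hav, hpb]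

end OrderTen

/-! ### Extensions of the loop of `AG(2,3)` by `ZMod 2` -/

section Model

/-- The extension of the loop of `AG(2,3)` (with identity `none`) by `ZMod 2` whose cocycle takes the
value `F i c` on the line `form i = c`. -/
@[ext]
structure Model (F : Fin 4 → ZMod 3 → ZMod 2) where
  pt : Option V
  bit : ZMod 2
  deriving DecidableEq

/-- Multiplication in the loop of `AG(2,3)`. -/
def agMul : Option V → Option V → Option V
  | none, y => y
  | some u, none => some u
  | some u, some v => if u = v then none else some (-u - v)

namespace Model
variable {F : Fin 4 → ZMod 3 → ZMod 2}

instance : One (Model F) := ⟨⟨none, 0⟩⟩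

instance : Mul (Model F) where
  mul x y := match x, y with
    | ⟨none, s⟩, ⟨y, t⟩ => ⟨y, s + t⟩
    | ⟨some u, s⟩, ⟨none, t⟩ => ⟨some u, s + t⟩
    | ⟨some u, s⟩, ⟨some v, t⟩ =>
      if u = v then ⟨none, s + t⟩ else ⟨some (-u - v), s + t + F (dir u v) (form (dir u v) u)⟩

theorem none_mul (y : Option V) (s t : ZMod 2) : (⟨none, s⟩ * ⟨y, t⟩ : Model F) = ⟨y, s + t⟩ := rfl

theorem mul_none (y : Option V) (s t : ZMod 2) :
    (⟨y, s⟩ * ⟨none, t⟩ : Model F) = ⟨y, s + t⟩ := by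
  cases y <;> rfl

theorem some_mul_self (u : V) (s t : ZMod 2) :
    (⟨some u, s⟩ * ⟨some u, t⟩ : Model F) = ⟨none, s + t⟩ := if_pos rfl

theorem some_mul_some {u v : V} (h : u ≠ v) (s t : ZMod 2) :
    (⟨some u, s⟩ * ⟨some v, t⟩ : Model F) =
      ⟨some (-u - v), s + t + F (dir u v) (form (dir u v) u)⟩ := if_neg h

instance : SteinerLoop (Model F) where
  one_mul x := by
    obtain ⟨x, s⟩ := x
    exact (none_mul x 0 s).trans (by rw [zero_add])
  mul_one x := by
    obtain ⟨x, s⟩ := x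
    exact (mul_none x s 0).trans (by rw [add_zero])
  mul_comm x y := by
    obtain ⟨x, s⟩ := x
    obtain ⟨y, t⟩ := y
    rcases x with _ | u
    · rw [none_mul, mul_none, add_comm]
    rcases y with _ | v
    · rw [none_mul, mul_none, add_comm]
    rcases eq_or_ne u v with rfl | huv
    · rw [some_mul_self, some_mul_self, add_comm]
    · rw [some_mul_some huv, some_mul_some huv.symm, dir_comm u v, form_dir u v, add_comm s t,
        sub_eq_add_neg, sub_eq_add_neg, add_comm (-u)]
  mul_mul_cancel x y := by
    obtain ⟨x, s⟩ := x
    obtain ⟨y, t⟩ := y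
    have h2 (r : ZMod 2) : r + r = 0 := CharTwo.add_self_eq_zero r
    rcases x with _ | u
    · rw [none_mul, none_mul, ← add_assoc, h2, zero_add]
    rcases y with _ | v
    · rw [mul_none, some_mul_self, ← add_assoc, h2, zero_add]
    rcases eq_or_ne u v with rfl | huv
    · rw [some_mul_self, mul_none, ← add_assoc, h2, zero_add]
    · rw [some_mul_some huv, some_mul_some (third_ne u v huv), dir_third u v huv]
      have e : -u - (-u - v) = v := by ring
      have e' (r : ZMod 2) : s + (s + t + r) + r = t := by
        rw [← add_assoc, ← add_assoc, h2, zero_add, add_assoc, h2, add_zero]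
      rw [e, e']

theorem card_model : Nat.card (Model F) = 20 := by
  have e : Model F ≃ Option V × ZMod 2 :=
    ⟨fun x => (x.pt, x.bit), fun p => ⟨p.1, p.2⟩, fun _ => rfl, fun _ => rfl⟩
  rw [Nat.card_congr e]
  simp

/-- The generator of the kernel of the extension. -/
def zeta : Model F := ⟨none, 1⟩

theorem zeta_ne_one : (zeta : Model F) ≠ 1 := fun h => one_ne_zero (congrArg Model.bit h)

theorem nuclear_zeta : Nuclear (zeta : Model F) := by
  rintro ⟨x, s⟩ ⟨y, t⟩
  unfold zeta
  rcases x with _ | u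
  · exact Model.ext rfl (add_assoc 1 s t).symm
  rcases y with _ | v
  · rw [mul_none, none_mul, none_mul, mul_none, add_assoc]
  rcases eq_or_ne u v with rfl | huv
  · rw [some_mul_self, none_mul, none_mul, some_mul_self, add_assoc]
  · rw [some_mul_some huv, none_mul, none_mul, some_mul_some huv]
    simp only [add_assoc]

theorem pt_mul (x y : Model F) : (x * y).pt = agMul x.pt y.pt := by
  obtain ⟨x, s⟩ := x
  obtain ⟨y, t⟩ := y
  rcases x with _ | u
  · rfl
  rcases y with _ | v
  · rfl
  rcases eq_or_ne u v with rfl | huv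
  · rw [some_mul_self]
    exact (if_pos rfl).symm
  · rw [some_mul_some huv]
    exact (if_neg huv).symm

/-- The loop of `AG(2,3)` has trivial nucleus, so `zeta` is the only nuclear element except `1`. -/
theorem eq_zeta {x : Model F} (hx : Nuclear x) (h1 : x ≠ 1) : x = zeta := by
  obtain ⟨x, s⟩ := x
  have hnone : x = none := by
    by_contra h
    obtain ⟨y, w, hyw⟩ : ∃ y w, agMul x (agMul y w) ≠ agMul (agMul x y) w := by
      clear hx h1
      revert x
      decide +kernel
    have := congrArg Model.pt (hx ⟨y, 0⟩ ⟨w, 0⟩)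
    simp only [pt_mul] at this
    exact hyw this
  subst hnone
  fin_cases s
  · exact absurd rfl h1
  · rfl

end Model

end Model

/-! ### Loops of order 20 with a nuclear element are models -/

section Lift

variable {L : Type*} [SteinerLoop L]

namespace SteinerLoop

theorem Nuclear.mul_left_comm {z : L} (hz : Nuclear z) (a b : L) : a * (z * b) = z * (a * b) := by
  rw [mul_comm, ← hz, mul_comm b]

/-- The cosets of `{1, z}`, for a nuclear element `z`. -/
def Nuclear.setoid {z : L} (hz : Nuclear z) : Setoid L where
  r x y := x = y ∨ x = z * y
  iseqv :=
    { refl := fun x => .inl rfl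
      symm := by
        rintro x y (rfl | rfl)
        · exact .inl rfl
        · exact .inr (mul_mul_cancel z y).symm
      trans := by
        rintro x y w (rfl | rfl) (rfl | rfl)
        · exact .inl rfl
        · exact .inr rfl
        · exact .inr rfl
        · exact .inl (mul_mul_cancel z w) }

/-- The quotient of the loop by `{1, z}`. -/
def Nuclear.Quo {z : L} (hz : Nuclear z) : Type _ := Quotient hz.setoid

/-- The class of an element modulo `{1, z}`. -/
def Nuclear.mk {z : L} (hz : Nuclear z) (x : L) : hz.Quo := Quotient.mk hz.setoid x

theorem Nuclear.mk_eq_iff {z : L} (hz : Nuclear z) {x y : L} :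
    hz.mk x = hz.mk y ↔ x = y ∨ x = z * y := Quotient.eq (r := hz.setoid)

instance {z : L} (hz : Nuclear z) : SteinerLoop hz.Quo where
  one := hz.mk 1
  mul := Quotient.map₂ (· * ·) (by
    rintro x x' (rfl | rfl) y y' (rfl | rfl)
    · exact .inl rfl
    · exact .inr (hz.mul_left_comm _ _)
    · exact .inr (hz _ _).symm
    · refine .inl ?_
      change z * x' * (z * y') = x' * y'
      rw [hz.mul_left_comm, ← hz, mul_mul_cancel])
  one_mul := by rintro ⟨x⟩; exact congrArg hz.mk (one_mul x)
  mul_one := by rintro ⟨x⟩; exact congrArg hz.mk (mul_one x)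
  mul_comm := by rintro ⟨x⟩ ⟨y⟩; exact congrArg hz.mk (mul_comm x y)
  mul_mul_cancel := by rintro ⟨x⟩ ⟨y⟩; exact congrArg hz.mk (mul_mul_cancel x y)

theorem Nuclear.mk_mul {z : L} (hz : Nuclear z) (x y : L) : hz.mk (x * y) = hz.mk x * hz.mk y := rfl

theorem Nuclear.mk_one {z : L} (hz : Nuclear z) : hz.mk 1 = 1 := rfl

/-- `z ^ s` for `s` modulo `2`. -/
def zpw (z : L) (s : ZMod 2) : L := if s = 0 then 1 else z

theorem zpw_add (z : L) : ∀ s t : ZMod 2, zpw z (s + t) = zpw z s * zpw z t := by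
  intro s t
  fin_cases s <;> fin_cases t
  · exact (one_mul 1).symm
  · exact (one_mul z).symm
  · exact (mul_one z).symm
  · exact (mul_self z).symm

theorem Nuclear.zpw {z : L} (hz : Nuclear z) (s : ZMod 2) : Nuclear (zpw z s) := by
  unfold SteinerLoop.zpw
  split_ifs
  · intro a b
    rw [one_mul, one_mul]
  · exact hz

theorem Nuclear.mk_zpw_mul {z : L} (hz : Nuclear z) (s : ZMod 2) (x : L) :
    hz.mk (SteinerLoop.zpw z s * x) = hz.mk x := by
  unfold SteinerLoop.zpw
  split_ifs
  · rw [one_mul]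
  · exact hz.mk_eq_iff.2 (.inr rfl)

theorem zpw_injective {z : L} (h : z ≠ 1) : Function.Injective (zpw z) := by
  intro s t hst
  fin_cases s <;> fin_cases t
  · rfl
  · exact absurd hst.symm h
  · exact absurd hst h
  · rfl

theorem Nuclear.exists_zpw {z : L} (hz : Nuclear z) {x y : L} (h : hz.mk x = hz.mk y) :
    ∃ s, x = SteinerLoop.zpw z s * y := by
  rcases hz.mk_eq_iff.1 h with h | h
  · exact ⟨0, by rw [h]; exact (one_mul y).symm⟩
  · exact ⟨1, h⟩

theorem Nuclear.card_quo {z : L} (hz : Nuclear z) (hz1 : z ≠ 1) :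
    Nat.card L = Nat.card hz.Quo * 2 := by
  have e : hz.Quo × ZMod 2 ≃ L := by
    refine Equiv.ofBijective (fun p => SteinerLoop.zpw z p.2 * Quotient.out p.1) ⟨?_, ?_⟩
    · rintro ⟨x, s⟩ ⟨y, t⟩ h
      have h1 := congrArg hz.mk h
      simp only [hz.mk_zpw_mul] at h1
      have h2 : x = y := by
        rw [← Quotient.out_eq x, ← Quotient.out_eq y]
        exact h1
      subst h2
      exact Prod.ext rfl (zpw_injective hz1 (right_cancel h))
    · intro x
      obtain ⟨s, hs⟩ := hz.exists_zpw (x := x) (y := Quotient.out (hz.mk x))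
        (Quotient.out_eq (hz.mk x)).symm
      exact ⟨(hz.mk x, s), hs.symm⟩
  rw [← Nat.card_congr e, Nat.card_prod]
  simp

end SteinerLoop

/-- Choosing representatives `σ` of the points of `AG(2,3)`, one has
`σ u * σ v = z ^ s * σ (-u - v)`, where `s` depends only on the line through `u` and `v`. -/
theorem exists_model (hc : Nat.card L = 20) {z : L} (hz1 : z ≠ 1) (hz : Nuclear z) :
    ∃ F, Nonempty (Model F ≃* L) := by
  have hQ : Nat.card hz.Quo = 10 := by
    have := hz.card_quo hz1
    omega
  obtain ⟨γ, ⟨γinj, -⟩, γ1, γmul⟩ := exists_affine_coordinates hQ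
  have hlift (x : hz.Quo) : ∃ y, hz.mk y = x := Quotient.exists_rep x
  choose ρ hρ using hlift
  let σ : Option V → L := fun x => x.elim 1 fun u => ρ (γ (some u))
  have hσ (x : Option V) : hz.mk (σ x) = γ x := by
    rcases x with _ | u
    · exact γ1.symm
    · exact hρ _
  have hF (i : Fin 4) (c : ZMod 3) : ∃ s : ZMod 2,
      σ (some (fstPt i c)) * σ (some (sndPt i c)) =
        zpw z s * σ (some (-fstPt i c - sndPt i c)) := by
    refine hz.exists_zpw ?_
    rw [hz.mk_mul, hσ, hσ, hσ, γmul _ _ (fstPt_ne_sndPt i c)]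
  choose F hF using hF
  have hmul : ∀ u v : V, u ≠ v → σ (some u) * σ (some v) =
      zpw z (F (dir u v) (form (dir u v) u)) * σ (some (-u - v)) := by
    refine line_induction (fun u v _ h => ?_) (fun u v huv h => ?_) (fun i c => ?_)
    · have e : -v - u = -u - v := by ring
      rw [mul_comm, h, dir_comm u v, form_dir u v, e]
    · have e : -u - (-u - v) = v := by ring
      rw [dir_third u v huv, e]
      generalize F (dir u v) (form (dir u v) u) = s at *
      have h1 := eq_mul_of_mul_eq h
      rw [(hz.zpw s).mul_left_comm] at h1
      exact (eq_mul_of_mul_eq h1).symm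
    · rw [hF, (dir_pts i c).1, (dir_pts i c).2]
  let Λ : Model F → L := fun x => zpw z x.bit * σ x.pt
  have hΛ (x : Option V) (s : ZMod 2) : Λ ⟨x, s⟩ = zpw z s * σ x := rfl
  have hΛmul (x y : Model F) : Λ (x * y) = Λ x * Λ y := by
    obtain ⟨x, s⟩ := x
    obtain ⟨y, t⟩ := y
    have e : Λ ⟨x, s⟩ * Λ ⟨y, t⟩ = zpw z (s + t) * (σ x * σ y) := by
      rw [hΛ, hΛ, (hz.zpw t).mul_left_comm, ← (hz.zpw s), zpw_add, ← (hz.zpw s),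
        (hz.zpw t).mul_left_comm]
    rw [e]
    rcases x with _ | u
    · rw [Model.none_mul]
      exact congrArg (zpw z (s + t) * ·) (one_mul (σ y)).symm
    rcases y with _ | v
    · rw [Model.mul_none]
      exact congrArg (zpw z (s + t) * ·) (mul_one (σ (some u))).symm
    rcases eq_or_ne u v with rfl | huv
    · rw [Model.some_mul_self, mul_self]
      rfl
    · rw [Model.some_mul_some huv, hmul u v huv, hΛ, zpw_add, ← (hz.zpw (s + t))]
  have hinj : Function.Injective Λ := by
    rintro ⟨x, s⟩ ⟨y, t⟩ h
    rw [hΛ, hΛ] at h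
    have h1 := congrArg hz.mk h
    rw [hz.mk_zpw_mul, hz.mk_zpw_mul, hσ, hσ] at h1
    obtain rfl := γinj h1
    exact Model.ext rfl (zpw_injective hz1 (right_cancel h))
  have : Finite L := Nat.finite_of_card_ne_zero (by omega)
  have hbij : Function.Bijective Λ :=
    (Nat.bijective_iff_injective_and_card Λ).2 ⟨hinj, by rw [hc, Model.card_model]⟩
  exact ⟨F, ⟨⟨Equiv.ofBijective Λ hbij, hΛmul⟩⟩⟩

end Lift

/-! ### Reduction to three models -/

section NormalForm

/-- Cocycles that agree up to an affine map `e` and the coboundary of `g` define isomorphic models. -/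
theorem Model.nonempty_mulEquiv {F F' : Fin 4 → ZMod 3 → ZMod 2} (e : V ≃ V) (g : V → ZMod 2)
    (he : ∀ u v, e (-u - v) = -e u - e v)
    (h : ∀ u v, u ≠ v → F' (dir (e u) (e v)) (form (dir (e u) (e v)) (e u)) =
      F (dir u v) (form (dir u v) u) + (g u + g v + g (-u - v))) :
    Nonempty (Model F ≃* Model F') := by
  let g' : Option V → ZMod 2 := fun x => x.elim 0 g
  let Φ : Model F ≃ Model F' :=
    { toFun := fun x => ⟨x.pt.map e, x.bit + g' x.pt⟩
      invFun := fun x => ⟨x.pt.map e.symm, x.bit + g' (x.pt.map e.symm)⟩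
      left_inv := fun x => by
        obtain ⟨_ | u, s⟩ := x <;> simp [add_assoc, CharTwo.add_self_eq_zero]
      right_inv := fun x => by
        obtain ⟨_ | u, s⟩ := x <;> simp [add_assoc, CharTwo.add_self_eq_zero] }
  have hnone (s : ZMod 2) : Φ ⟨none, s⟩ = ⟨none, s⟩ := Model.ext rfl (add_zero s)
  have hsome (u : V) (s : ZMod 2) : Φ ⟨some u, s⟩ = ⟨some (e u), s + g u⟩ := rfl
  refine ⟨⟨Φ, fun x y => ?_⟩⟩
  change Φ (x * y) = Φ x * Φ y
  obtain ⟨x, s⟩ := x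
  obtain ⟨y, t⟩ := y
  have h2 (r : ZMod 2) : r + r = 0 := CharTwo.add_self_eq_zero r
  rcases x with _ | u
  · rcases y with _ | v
    · rw [Model.none_mul, hnone, hnone, hnone, Model.none_mul]
    · rw [Model.none_mul, hnone, hsome, hsome, Model.none_mul, add_assoc]
  rcases y with _ | v
  · rw [Model.mul_none, hnone, hsome, hsome, Model.mul_none, add_right_comm]
  rcases eq_or_ne u v with rfl | huv
  · rw [Model.some_mul_self, hnone, hsome, hsome, Model.some_mul_self, add_add_add_comm, h2,
      add_zero]
  · rw [Model.some_mul_some huv, hsome, hsome, hsome,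
      Model.some_mul_some (e.injective.ne huv), h u v huv, he]
    refine Model.ext rfl ?_
    change _ + _ = _ + _
    linear_combination -h2 (g u) - h2 (g v)

/-- The function on lines supported on the four lines through the origin, with value `k i` on the
one in direction `i`. -/
def pencil (k : Fin 4 → ZMod 2) (i : Fin 4) (c : ZMod 3) : ZMod 2 := if c = 0 then k i else 0

theorem sum_eq_of_distinct (H : ZMod 3 → ZMod 2) : ∀ a b c : ZMod 3, a ≠ b → a ≠ c → b ≠ c →
    H a + H b + H c = H 0 + H 1 + H 2 := by
  intro a b c
  fin_cases a <;> fin_cases b <;> fin_cases c <;> intro h1 h2 h3 <;>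
    first
    | exact absurd rfl h1
    | exact absurd rfl h2
    | exact absurd rfl h3
    | exact (by ring : H 0 + H 1 + H 2 = H 0 + H 1 + H 2)
    | exact (by ring : H 0 + H 2 + H 1 = H 0 + H 1 + H 2)
    | exact (by ring : H 1 + H 0 + H 2 = H 0 + H 1 + H 2)
    | exact (by ring : H 1 + H 2 + H 0 = H 0 + H 1 + H 2)
    | exact (by ring : H 2 + H 0 + H 1 = H 0 + H 1 + H 2)
    | exact (by ring : H 2 + H 1 + H 0 = H 0 + H 1 + H 2)

theorem form_ne_of_ne_dir : ∀ u v : V, u ≠ v → ∀ j, j ≠ dir u v →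
    form j u ≠ form j v ∧ form j u ≠ form j (-u - v) ∧ form j v ≠ form j (-u - v) := by
  decide +kernel

theorem form_dir_third : ∀ u v : V, form (dir u v) (-u - v) = form (dir u v) u := by
  decide +kernel

/-- Only the sums of the cocycle over the four parallel classes matter. Here `H`, the difference of the
two cocycles, has zero sum over each parallel class. It is the coboundary of `∑ i, H i (form i u)`:
along a line, each form of another direction takes each value once. -/
theorem Model.equiv_pencil (F : Fin 4 → ZMod 3 → ZMod 2) :
    Nonempty (Model F ≃* Model (pencil fun i => F i 0 + F i 1 + F i 2)) := by
  set k : Fin 4 → ZMod 2 := fun i => F i 0 + F i 1 + F i 2 with hk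
  let H : Fin 4 → ZMod 3 → ZMod 2 := fun i c => F i c + pencil k i c
  have h2 (r : ZMod 2) : r + r = 0 := CharTwo.add_self_eq_zero r
  have hH (i : Fin 4) : H i 0 + H i 1 + H i 2 = 0 := by
    have e0 : pencil k i 0 = k i := if_pos rfl
    have e1 : pencil k i 1 = 0 := if_neg (by decide)
    have e2 : pencil k i 2 = 0 := if_neg (by decide)
    have ek : k i = F i 0 + F i 1 + F i 2 := rfl
    change (F i 0 + pencil k i 0) + (F i 1 + pencil k i 1) + (F i 2 + pencil k i 2) = 0
    rw [e0, e1, e2, ek]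
    linear_combination h2 (F i 0 + F i 1 + F i 2)
  refine Model.nonempty_mulEquiv (Equiv.refl V) (fun u => ∑ i, H i (form i u))
    (fun _ _ => rfl) fun u v huv => ?_
  simp only [Equiv.refl_apply]
  have hsum : (∑ i, H i (form i u)) + (∑ i, H i (form i v)) + (∑ i, H i (form i (-u - v))) =
      H (dir u v) (form (dir u v) u) := by
    rw [← Finset.sum_add_distrib, ← Finset.sum_add_distrib, Finset.sum_eq_single (dir u v)]
    · rw [form_dir, form_dir_third, h2, zero_add]
    · intro j _ hj
      obtain ⟨n1, n2, n3⟩ := form_ne_of_ne_dir u v huv j hj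
      rw [sum_eq_of_distinct (H j) _ _ _ n1 n2 n3, hH]
    · simp
  rw [hsum]
  simp only [H]
  rw [← add_assoc, h2, zero_add]

/-- The three representatives: the value is one on `n` of the four directions. -/
def rep (n : Fin 3) : Fin 4 → ZMod 2 := fun i => if i.val < n.val then 1 else 0

/-- The linear map with matrix `(a, b; c, d)`. -/
def lin (a b c d : ZMod 3) (u : V) : V := (a * u.1 + b * u.2, c * u.1 + d * u.2)

/-- Every function on directions is brought to one of the representatives by an invertible linear map
and the addition of a constant. The determinant is a unit of `ZMod 3` iff its square is one. -/
theorem exists_lin : ∀ k₀ k₁ k₂ k₃ : ZMod 2, ∃ n : Fin 3, ∃ s : ZMod 2, ∃ a b c d : ZMod 3,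
    (a * d - b * c) * (a * d - b * c) = 1 ∧ ∀ i : Fin 4,
      rep n (dir (lin a b c d (fstPt i 0)) (lin a b c d (sndPt i 0))) =
        ![k₀, k₁, k₂, k₃] i + s := by
  decide +kernel

/-- Invertible linear maps act on directions and preserve the set of lines through the origin. -/
theorem dir_lin : ∀ a b c d : ZMod 3, (a * d - b * c) * (a * d - b * c) = 1 → ∀ u v : V, u ≠ v →
    dir (lin a b c d u) (lin a b c d v) =
        dir (lin a b c d (fstPt (dir u v) 0)) (lin a b c d (sndPt (dir u v) 0)) ∧
      (form (dir (lin a b c d u) (lin a b c d v)) (lin a b c d u) = 0 ↔ form (dir u v) u = 0) := by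
  decide +kernel

/-- The coboundary of the indicator of the origin is the indicator of the lines through it. -/
theorem delta_sum : ∀ (s : ZMod 2) (u v : V), u ≠ v →
    (if u = 0 then s else 0) + (if v = 0 then s else 0) + (if -u - v = 0 then s else 0) =
      if form (dir u v) u = 0 then s else 0 := by
  decide +kernel

theorem Model.equiv_rep (k : Fin 4 → ZMod 2) :
    ∃ n, Nonempty (Model (pencil k) ≃* Model (pencil (rep n))) := by
  obtain ⟨n, s, a, b, c, d, hdet, hk⟩ := exists_lin (k 0) (k 1) (k 2) (k 3)
  have hk' (i : Fin 4) : ![k 0, k 1, k 2, k 3] i = k i := by fin_cases i <;> rfl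
  set δ := a * d - b * c with hδ
  let e : V ≃ V :=
    { toFun := lin a b c d
      invFun := lin (δ * d) (-(δ * b)) (-(δ * c)) (δ * a)
      left_inv := fun u => Prod.ext
        (by simp only [lin]; linear_combination u.1 * hdet - u.1 * δ * hδ)
        (by simp only [lin]; linear_combination u.2 * hdet - u.2 * δ * hδ)
      right_inv := fun u => Prod.ext
        (by simp only [lin]; linear_combination u.1 * hdet - u.1 * δ * hδ)
        (by simp only [lin]; linear_combination u.2 * hdet - u.2 * δ * hδ) }
  refine ⟨n, Model.nonempty_mulEquiv e (fun u => if u = 0 then s else 0)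
    (fun u v => ?_) fun u v huv => ?_⟩
  · change lin a b c d _ = -lin a b c d u - lin a b c d v
    refine Prod.ext ?_ ?_ <;> simp only [lin, Prod.fst_sub, Prod.snd_sub, Prod.fst_neg,
      Prod.snd_neg] <;> ring
  · obtain ⟨h1, h2⟩ := dir_lin a b c d hdet u v huv
    change pencil (rep n) (dir (lin a b c d u) (lin a b c d v))
      (form (dir (lin a b c d u) (lin a b c d v)) (lin a b c d u)) = _
    rw [delta_sum s u v huv]
    by_cases h0 : form (dir u v) u = 0
    · rw [pencil, pencil, if_pos (h2.2 h0), if_pos h0, if_pos h0, h1, hk, hk']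
    · rw [pencil, pencil, if_neg (mt h2.1 h0), if_neg h0, if_neg h0, add_zero]

end NormalForm

/-! ### The three models are not isomorphic -/

section Invariants

/-- An instance at `a`, `b`, `c` of the identity `(ab)(c(a(bc))) = (ac)(b(a(bc)))`. -/
def Med {L : Type*} [Mul L] (a b c : L) : Prop :=
  (a * b) * (c * (a * (b * c))) = (a * c) * (b * (a * (b * c)))

/-- `Med` holds identically. -/
def AllMed (L : Type*) [Mul L] : Prop := ∀ a b c : L, Med a b c

/-- Some non-associating triple satisfies `Med` with each of its members in first position. -/
def SomeMed (L : Type*) [Mul L] : Prop :=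
  ∃ a b c : L, (a * b) * c ≠ a * (b * c) ∧ Med a b c ∧ Med b a c ∧ Med c a b

theorem Med.map {L M : Type*} [Mul L] [Mul M] (φ : L ≃* M) {a b c : L} (h : Med a b c) :
    Med (φ a) (φ b) (φ c) := by
  have := congrArg φ h
  simpa only [Med, map_mul] using this

theorem AllMed.map {L M : Type*} [Mul L] [Mul M] (φ : L ≃* M) (h : AllMed L) : AllMed M := by
  intro a b c
  have := (h (φ.symm a) (φ.symm b) (φ.symm c)).map φ
  simpa only [MulEquiv.apply_symm_apply] using this

theorem SomeMed.map {L M : Type*} [Mul L] [Mul M] (φ : L ≃* M) (h : SomeMed L) : SomeMed M := by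
  obtain ⟨a, b, c, h0, h1, h2, h3⟩ := h
  refine ⟨φ a, φ b, φ c, fun h => h0 (φ.injective ?_), h1.map φ, h2.map φ, h3.map φ⟩
  simpa only [map_mul] using h

namespace Model
variable {F : Fin 4 → ZMod 3 → ZMod 2}

/-- The cocycle of `Model F`. -/
def cocycle (F : Fin 4 → ZMod 3 → ZMod 2) : Option V → Option V → ZMod 2
  | some u, some v => if u = v then 0 else F (dir u v) (form (dir u v) u)
  | _, _ => 0

theorem bit_mul (x y : Model F) : (x * y).bit = x.bit + y.bit + cocycle F x.pt y.pt := by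
  obtain ⟨x, s⟩ := x
  obtain ⟨y, t⟩ := y
  rcases x with _ | u
  · exact (add_zero _).symm
  rcases y with _ | v
  · exact (add_zero _).symm
  rcases eq_or_ne u v with rfl | huv
  · rw [some_mul_self]
    simp [cocycle]
  · rw [some_mul_some huv]
    simp [cocycle, huv]

instance (a b c : Model F) : Decidable (Med a b c) := inferInstanceAs (Decidable (_ = _))

/-- Every variable occurs equally often on both sides of `Med`, so its validity does not depend on
the `ZMod 2` components. -/
theorem med_iff (x y w : Model F) :
    Med x y w ↔ Med (⟨x.pt, 0⟩ : Model F) ⟨y.pt, 0⟩ ⟨w.pt, 0⟩ := by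
  simp only [Med, Model.ext_iff, pt_mul, bit_mul]
  refine and_congr Iff.rfl ⟨fun h => ?_, fun h => ?_⟩ <;> linear_combination h

theorem assoc_iff (x y w : Model F) : (x * y) * w = x * (y * w) ↔
    (⟨x.pt, 0⟩ * ⟨y.pt, 0⟩ : Model F) * ⟨w.pt, 0⟩ = ⟨x.pt, 0⟩ * (⟨y.pt, 0⟩ * ⟨w.pt, 0⟩) := by
  simp only [Model.ext_iff, pt_mul, bit_mul]
  refine and_congr Iff.rfl ⟨fun h => ?_, fun h => ?_⟩ <;> linear_combination h

theorem allMed_rep_zero : AllMed (Model (pencil (rep 0))) := by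
  intro x y w
  rw [med_iff]
  generalize x.pt = p, y.pt = q, w.pt = r
  revert p q r
  decide +kernel

theorem not_allMed_rep_one : ¬ AllMed (Model (pencil (rep 1))) := by
  intro h
  have h' (p q r : Option V) := h ⟨p, 0⟩ ⟨q, 0⟩ ⟨r, 0⟩
  revert h'
  decide +kernel

theorem not_allMed_rep_two : ¬ AllMed (Model (pencil (rep 2))) := by
  intro h
  have h' (p q r : Option V) := h ⟨p, 0⟩ ⟨q, 0⟩ ⟨r, 0⟩
  revert h'
  decide +kernel

theorem someMed_rep_one : SomeMed (Model (pencil (rep 1))) := by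
  have h : ∃ p q r : Option V,
      (⟨p, 0⟩ * ⟨q, 0⟩ : Model (pencil (rep 1))) * ⟨r, 0⟩ ≠ ⟨p, 0⟩ * (⟨q, 0⟩ * ⟨r, 0⟩) ∧
      Med (⟨p, 0⟩ : Model (pencil (rep 1))) ⟨q, 0⟩ ⟨r, 0⟩ ∧
      Med (⟨q, 0⟩ : Model (pencil (rep 1))) ⟨p, 0⟩ ⟨r, 0⟩ ∧
      Med (⟨r, 0⟩ : Model (pencil (rep 1))) ⟨p, 0⟩ ⟨q, 0⟩ := by
    decide +kernel
  obtain ⟨p, q, r, h⟩ := h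
  exact ⟨_, _, _, h⟩

theorem not_someMed_rep_two : ¬ SomeMed (Model (pencil (rep 2))) := by
  have h : ∀ p q r : Option V,
      ¬ ((⟨p, 0⟩ * ⟨q, 0⟩ : Model (pencil (rep 2))) * ⟨r, 0⟩ ≠ ⟨p, 0⟩ * (⟨q, 0⟩ * ⟨r, 0⟩) ∧
      Med (⟨p, 0⟩ : Model (pencil (rep 2))) ⟨q, 0⟩ ⟨r, 0⟩ ∧
      Med (⟨q, 0⟩ : Model (pencil (rep 2))) ⟨p, 0⟩ ⟨r, 0⟩ ∧
      Med (⟨r, 0⟩ : Model (pencil (rep 2))) ⟨p, 0⟩ ⟨q, 0⟩) := by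
    decide +kernel
  rintro ⟨x, y, w, h0, h1, h2, h3⟩
  exact h x.pt y.pt w.pt ⟨mt (assoc_iff x y w).2 h0, (med_iff _ _ _).1 h1, (med_iff _ _ _).1 h2,
    (med_iff _ _ _).1 h3⟩

theorem rep_injective {m n : Fin 3}
    (φ : Model (pencil (rep m)) ≃* Model (pencil (rep n))) : m = n := by
  have hA : AllMed (Model (pencil (rep m))) ↔ AllMed (Model (pencil (rep n))) :=
    ⟨.map φ, .map φ.symm⟩
  have hS : SomeMed (Model (pencil (rep m))) ↔ SomeMed (Model (pencil (rep n))) :=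
    ⟨.map φ, .map φ.symm⟩
  clear φ
  have a0 := allMed_rep_zero
  have a1 := not_allMed_rep_one
  have a2 := not_allMed_rep_two
  have s1 := someMed_rep_one
  have s2 := not_someMed_rep_two
  match m, n with
  | 0, 0 | 1, 1 | 2, 2 => rfl
  | 0, 1 => exact absurd (hA.1 a0) a1
  | 0, 2 => exact absurd (hA.1 a0) a2
  | 1, 0 => exact absurd (hA.2 a0) a1
  | 2, 0 => exact absurd (hA.2 a0) a2
  | 1, 2 => exact absurd (hS.1 s1) s2
  | 2, 1 => exact absurd (hS.2 s1) s2

end Model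

theorem SteinerLoop.Nuclear.map {L M : Type*} [SteinerLoop L] [SteinerLoop M] (φ : L ≃* M) {z : L}
    (h : Nuclear z) : Nuclear (φ z) := by
  intro a b
  have := congrArg φ (h (φ.symm a) (φ.symm b))
  simpa only [map_mul, MulEquiv.apply_symm_apply] using this

end Invariants

/-! ### Counting -/

section Count

/-- The isomorphism classes counted by the theorem. -/
abbrev Classes : Type :=
  Quot (fun S₁ S₂ : {T : Set (Finset (Fin 19)) //
    IsSTS T ∧ ∃! x : Fin 19, IsVeblen T x} => STSIso S₁.1 S₂.1)

/-- Each of the three models is realised by a system with exactly one Veblen point. -/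
theorem exists_sts_rep (n : Fin 3) : ∃ S : {T : Set (Finset (Fin 19)) //
    IsSTS T ∧ ∃! x : Fin 19, IsVeblen T x},
    Nonempty (STSLoop S.2.1 ≃* Model (pencil (rep n))) := by
  obtain ⟨T, h, ⟨φ⟩⟩ := exists_sts_of_loop (Model.card_model (F := pencil (rep n)))
  refine ⟨⟨T, h, ?_⟩, ⟨φ⟩⟩
  obtain ⟨x, hx⟩ := (STSLoop.eq_one_or_of (φ.symm Model.zeta)).resolve_left
    fun h1 => Model.zeta_ne_one (by simpa using h1)
  refine ⟨x, (STSLoop.isVeblen_iff h x).2 (hx ▸ Model.nuclear_zeta.map φ.symm), fun y hy => ?_⟩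
  have hy' := Model.eq_zeta (((STSLoop.isVeblen_iff h y).1 hy).map φ)
    fun h1 => STSLoop.of_ne_one h y (by simpa using h1)
  refine STSLoop.of_injective h ?_
  rw [← hx, ← hy', MulEquiv.symm_apply_apply]

theorem exists_rep_of_veblen {T : Set (Finset (Fin 19))} (h : IsSTS T) {x : Fin 19}
    (hx : IsVeblen T x) : ∃ n, Nonempty (STSLoop h ≃* Model (pencil (rep n))) := by
  have hc : Nat.card (STSLoop h) = 20 := by
    change Nat.card (Option (Fin 19)) = 20
    simp
  obtain ⟨F, ⟨φ⟩⟩ := exists_model hc (STSLoop.of_ne_one h x) ((STSLoop.isVeblen_iff h x).1 hx)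
  obtain ⟨ψ⟩ := Model.equiv_pencil F
  obtain ⟨n, ⟨χ⟩⟩ := Model.equiv_rep fun i => F i 0 + F i 1 + F i 2
  exact ⟨n, ⟨φ.symm.trans (ψ.trans χ)⟩⟩

theorem card_classes : Nat.card Classes = 3 := by
  choose S hS using exists_sts_rep
  let f : Fin 3 → Classes := fun n => Quot.mk _ (S n)
  have hf : Function.Bijective f := by
    constructor
    · intro m n hmn
      -- The property of being isomorphic to the `n`-th model descends to isomorphism classes.
      let P : Classes → Prop := Quot.lift
        (fun R => Nonempty (STSLoop R.2.1 ≃* Model (pencil (rep n)))) fun R₁ R₂ hR => by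
          obtain ⟨φ⟩ := STSIso.nonempty_mulEquiv R₁.2.1 R₂.2.1 hR
          exact propext ⟨fun ⟨ψ⟩ => ⟨φ.symm.trans ψ⟩, fun ⟨ψ⟩ => ⟨φ.trans ψ⟩⟩
      have hn : P (f n) := hS n
      rw [← hmn] at hn
      obtain ⟨ψ⟩ : Nonempty (STSLoop (S m).2.1 ≃* Model (pencil (rep n))) := hn
      obtain ⟨φ⟩ := hS m
      exact Model.rep_injective (φ.symm.trans ψ)
    · rintro ⟨R⟩
      obtain ⟨x, hx, -⟩ := R.2.2
      obtain ⟨n, ⟨ψ⟩⟩ := exists_rep_of_veblen R.2.1 hx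
      obtain ⟨φ⟩ := hS n
      exact ⟨n, Quot.sound (STSIso.of_mulEquiv (S n).2.1 R.2.1 (φ.trans ψ.symm))⟩
  rw [← Nat.card_eq_of_bijective f hf, Nat.card_fin]

end Count

/-- Up to isomorphism, there are exactly 3 Steiner triple systems of order 19
containing exactly one Veblen point. -/
theorem sts19_exactly_one_veblen_count :
    Nat.card (Quot (fun S₁ S₂ : {T : Set (Finset (Fin 19)) //
        IsSTS T ∧ ∃! x : Fin 19, IsVeblen T x} => STSIso S₁.1 S₂.1)) = 3 :=
  card_classes
end

section
/- Up to isomorphism, there are exactly 1736 Steiner triple systems of order 27 that contain exactly one Veblen point. -/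
/-!
A Steiner triple system becomes a Steiner loop by adding a neutral element, with `a · b` the third
point of the triple through `a ≠ b` and `a · a` neutral. Triple systems are isomorphic exactly when
their loops are (`IsLoopOf.iso_iff`), and a point is a Veblen point exactly when it is central in
the loop (`IsLoopOf.veblen_iff`). So a system of order 27 with a Veblen point is a central extension
of a Steiner loop of order 14 by a group of order two (`exists_ext`); the base belongs to a Steiner
triple system of order 13, of which there are two, `Q false` and `Q true` (`classified`).

The extensions of `Q i` are given by cocycles in `GF(2)^26`, one bit for each block, and two of them
are isomorphic exactly when the cocycles agree up to a coboundary and an automorphism of `Q i`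
(`liso_of_eq`, `eq_of_liso`): since `Q i` has no Veblen points, the center of the extension has order
two and every isomorphism preserves it. For the same reason each extension has exactly one Veblen
point (`exists_sts_of_ext`). The coboundaries have dimension 13, so the isomorphism classes over
`Q i` are the orbits of its automorphism group on `GF(2)^13` (the syndromes). Each orbit is
represented by its minimal element when bit vectors are read as numbers, and these are counted by
evaluation in the kernel: 1504 for `Q false`, with 6 automorphisms, and 232 for `Q true`, with 39.

Three further facts rest on finite evaluations: that the listed automorphisms are all of them and
that `Q false` and `Q true` are not isomorphic (`hom_classification`, by trying all images of the
three generators), and the classification for order 13 (`classified`), by a search over partial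
systems with labelled points. The search is guided by a certificate that says which pair of points
to join next and which labelling identifies each complete system with one of the two.
-/

universe u v

namespace STS27

/-! ### The two Steiner triple systems of order 13 -/

/-- The 26 blocks of the two Steiner triple systems `Q false`, `Q true` of order 13. The points are
labelled so that in both systems `0`, `1`, `3` generate everything: `0·1 = 2`, `0·3 = 4`,
`1·4 = 5`, `0·5 = 6`, `1·6 = 7`, and so on alternately up to `0·11 = 12`. -/
def blocks : Bool → List (ℕ × ℕ × ℕ)
  | false => [
    (0, 1, 2), (0, 3, 4), (0, 5, 6), (0, 7, 8), (0, 9, 10), (0, 11, 12), (1, 3, 12), (1, 4, 5),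
    (1, 6, 7), (1, 8, 9), (1, 10, 11), (2, 3, 6), (2, 4, 11), (2, 5, 10), (2, 7, 9), (2, 8, 12),
    (3, 5, 8), (3, 7, 10), (3, 9, 11), (4, 6, 9), (4, 7, 12), (4, 8, 10), (5, 7, 11), (5, 9, 12),
    (6, 8, 11), (6, 10, 12)]
  | true => [
    (0, 1, 2), (0, 3, 4), (0, 5, 6), (0, 7, 8), (0, 9, 10), (0, 11, 12), (1, 3, 12), (1, 4, 5),
    (1, 6, 7), (1, 8, 9), (1, 10, 11), (2, 3, 9), (2, 4, 12), (2, 5, 7), (2, 6, 11), (2, 8, 10),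
    (3, 5, 10), (3, 6, 8), (3, 7, 11), (4, 6, 10), (4, 7, 9), (4, 8, 11), (5, 8, 12), (5, 9, 11),
    (6, 9, 12), (7, 10, 12)]

/-- Multiplication table of `Q i`: the third point of the block through `p ≠ q` is the hexadecimal
digit number `13 p + q`; on the diagonal the digit is `p`. -/
def opTable : Bool → ℕ
  | false => 235630274679043947595714453616395672076138578518323024580530379444174668894740520121758210518769415325431949486049318986863697921916683166574371855690591546245803247257037406699598688166480065999325577504
  | true => 235712611671504261315876113980431309764777506436308059558577779454387636963685591613384510770780151736322761890349991550836756796996669403056600188141824093815008264071441019521810329236811869343369609504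

/-- The index in `blocks i` of the block through `p ≠ q`, stored as the byte number `13 p + q`. -/
def blkTable : Bool → ℕ
  | false => 7646711907803343581133818704824689848455971378349062069072635897526755087023107013088693369087422635225689848182805124274343253287247350255590542559661218641419794342975453826021227426741236081380348168505450072663617225027244967836060650291067227929298291292905445761491429112316847221670660006616043880441707602865185003630199459122105453930964101699253112190960139130729785906376552645887685925273600
  | true => 7646735422657270969034904446391103381914061271667143819357473553084230299238390397504376579177612743108041219341807678463078979935865336970702942687689187437448026629911974217995667418246217082485295197873044433939889891639342145843031562087390577050910507959996905800123745610825710988447203895681439777854941022210055112107376442085645165060450976182266187591350690409379350233351510745637494676520960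

/-- Third point of the block of `Q i` through `p ≠ q`, on natural numbers below 13. -/
def opN (i : Bool) (p q : ℕ) : ℕ :=
  Nat.land (Nat.shiftRight (opTable i) (Nat.mul 4 (Nat.add (Nat.mul 13 p) q))) 15

/-- Index of the block of `Q i` through `p ≠ q`. -/
def blkN (i : Bool) (p q : ℕ) : ℕ :=
  Nat.land (Nat.shiftRight (blkTable i) (Nat.mul 8 (Nat.add (Nat.mul 13 p) q))) 255

/-- The hexadecimal digit number `x` of `c`: a map `{0,…,12} → {0,…,15}` is coded by the number
`c` whose digits are its values. -/
def dig (c x : ℕ) : ℕ := Nat.land (Nat.shiftRight c (Nat.mul 4 x)) 15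

/-! ### Bit vectors and the linear algebra of cocycles -/

/-- The `GF(2)`-linear map with columns `cs`, on bit vectors coded as natural numbers. -/
def lin : List ℕ → ℕ → ℕ
  | [], _ => 0
  | c :: cs, v => Nat.xor (bif Nat.beq (Nat.land v 1) 1 then c else 0) (lin cs (Nat.shiftRight v 1))

/-- Columns of the embedding `GF(2)^13 → GF(2)^26` onto a complement of the coboundaries of `Q i`. -/
def embCols : Bool → List ℕ
  | false => [
    4096, 8192, 16384, 32768, 131072, 262144, 524288, 1048576, 2097152, 4194304, 8388608,
    16777216, 33554432]
  | true => [
    2048, 4096, 8192, 32768, 131072, 262144, 524288, 1048576, 2097152, 4194304, 8388608, 16777216,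
    33554432]

/-- Columns of the syndrome map `GF(2)^26 → GF(2)^13`, whose kernel consists of the coboundaries. -/
def synCols : Bool → List ℕ
  | false => [
    2796, 488, 6619, 2540, 7024, 67, 5323, 41, 2936, 7956, 2658, 2787, 1, 2, 4, 8, 8176, 16, 32,
    64, 128, 256, 512, 1024, 2048, 4096]
  | true => [
    7999, 3411, 5477, 4769, 7480, 2192, 4754, 3217, 517, 4537, 4736, 1, 2, 4, 7984, 8, 8176, 16,
    32, 64, 128, 256, 512, 1024, 2048, 4096]

/-- Columns of a linear map assigning to a cocycle `F` a potential whose coboundary is the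
component of `F` in the space of coboundaries. -/
def potCols : Bool → List ℕ
  | false => [
    2735, 3269, 4877, 6502, 1438, 2462, 6558, 3285, 6630, 1950, 414, 2731, 0, 0, 0, 0, 8184, 0, 0,
    0, 0, 0, 0, 0, 0, 0]
  | true => [
    2735, 6550, 1630, 3125, 3893, 5734, 1638, 6534, 3253, 3381, 5325, 0, 0, 0, 2731, 0, 8184, 0,
    0, 0, 0, 0, 0, 0, 0, 0]

/-- The automorphisms of `Q i`, coded by their digits as in `dig`. -/
def auts : Bool → List ℕ
  | false => [
    3582863703552528, 3581828869002288, 3449582501665623, 3454768785347223, 3416528130452328,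
    3418618026747048]
  | true => [
    3582863703552528, 2981376279536448, 2125053772768848, 3015364673372193, 1225643686759473,
    1816786737809553, 1895848401654018, 3458219100382578, 2593424824867458, 732646388536323,
    2360194617067443, 2911958366646723, 2131683980128308, 1433334395898468, 779663000906628,
    365631534139173, 3522440507134053, 1021758767528373, 992939473519878, 3135263658237078,
    2000184339448998, 395843821292343, 2605157722600023, 2261996522515623, 130001491601688,
    1747978827809448, 1618976692081848, 179388998773593, 1249741912781193, 884531525064393,
    1470054399768618, 3119523192538698, 2545452501460938, 213760884553803, 670341454713723,
    458247835518363, 2344299357704988, 1173202581039468, 3105374255266428]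

/-- Columns of the linear map that sends a syndrome `v` to the sequence of its images under all
automorphisms of `Q i`, packed into fields of 13 bits in the order of `auts i`. -/
def packCols : Bool → List ℕ
  | false => [
    36897992296869404673,
    98063037143200257540098,
    75560171106073543966724,
    2472165451458751234056,
    293524667397738414112784,
    2361192271361119895584,
    102822337575694863712320,
    295724402769792139392,
    103156391742736236052736,
    9444751248606290248192,
    151120342064554525590528,
    18016614421236411271168,
    196408012321396921208832]
  | true => [
    868195733635726187088445633613592087988150929328004069093898827497854069850774538026329563640732701108974842566655241318885537404676139130537789227009,
    243932438463016849598666220996747814914914654927270433734086672378244937830936537526747554768125602185949513254262622321831034868729455317020666478239746,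
    232054305178582757752928855617094561236621305094981589054113580312774769696493204030487006722151232178937618179623336334525905762871083667498940395683844,
    409375178771513505516482714136560912068871542417244583559654588159691970181489509763667328467964780327548846662682134580153741055008414990949005918216,
    418178878048259021153325815245435234446765774224849484203777003946102700534642219555419000080387804631067631523087577531346831831140913376723005303955472,
    243151945680157956794503077602855849001463019411553892641648125428820091980158962512841568675961159797814936900634083831994768301014875240578572517179424,
    234268547011063106726864985168881481663883450084815810240948683198670761498010514288968530837557889906420756935039934240088812238427013073951211536448,
    26442877223007323946979979951917202282303854992383941173340321420050780113595894530983865754552366505412496475495285485497357594310485925942417039556736,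
    209522575391543224419517612336907759774385401191193883265192548859732815034758952779628484294890387252906066964837222041550421168548662642314428873646336,
    382607304206157835849872157057904703899010827584663574207017407201723474422213531973635304177391951752172036430598624561791703472310824921739649778450944,
    104748549425786234009789736481770466318612446388185240857903276698256720226027028180055397605597788054391892260670276457828813147738263113140471947330560,
    280180574949770860967211866605689756506781968136465368467355949974295538179805720874061644304437848228498360219735176955880090585711648366608214877538304,
    409143980001746614114216633148423388463202861675775420677491502808723967100943868411174816316192562037336033143370077904143133717934844972171549883764736]

/-- All fields of `X`, one for each member of the list, are at least `v`. -/
def allGE (v : ℕ) : List ℕ → ℕ → Bool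
  | [], _ => true
  | _ :: l, X => bif Nat.ble v (Nat.land X 8191) then allGE v l (Nat.shiftRight X 13) else false

/-- `v` is the smallest element of its orbit under the automorphisms of `Q i`. -/
def minimal (i : Bool) (v : ℕ) : Bool := allGE v (auts i) (lin (packCols i) v)

/-- The number of minimal `w` with `2 ^ n * v ≤ w < 2 ^ n * (v + 1)`, by bisection. -/
def cnt (i : Bool) : ℕ → ℕ → ℕ
  | 0, v => bif minimal i v then 1 else 0
  | n + 1, v => Nat.add (cnt i n (Nat.mul 2 v)) (cnt i n (Nat.add (Nat.mul 2 v) 1))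

theorem cnt_false : cnt false 13 0 = 1504 := by decide +kernel

theorem cnt_true : cnt true 13 0 = 232 := by decide +kernel

/-! ### Homomorphisms between the two systems -/

/-- The code of the map sending `0, 1, 3` to `a, b, c` and multiplicative along the
generating sequence of `Q i`, with values in `Q j`. -/
def genCode (j : Bool) (a b c : ℕ) : ℕ :=
  let x4 := opN j a c
  let x5 := opN j b x4
  let x6 := opN j a x5
  let x7 := opN j b x6
  let x8 := opN j a x7
  let x9 := opN j b x8
  let x10 := opN j a x9
  let x11 := opN j b x10
  let x12 := opN j a x11
  [a, b, opN j a b, c, x4, x5, x6, x7, x8, x9, x10, x11, x12].foldr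
    (fun x s => Nat.add x (Nat.mul 16 s)) 0

/-- The map coded by `s` sends blocks of `Q i` to blocks of `Q j`. -/
def isHom (i j : Bool) (s : ℕ) : Bool :=
  (blocks i).all fun b => Nat.beq (opN j (dig s b.1) (dig s b.2.1)) (dig s b.2.2)

/-- If `a ≠ b` and the map generated by `a, b, c` is a homomorphism `Q i → Q j`, then `i = j`
and the map is one of the listed automorphisms. -/
def homCheck (i j : Bool) (a b c : ℕ) : Bool :=
  Nat.beq a b || !(isHom i j (genCode j a b c)) ||
    (i == j && (auts i).any fun x => Nat.beq x (genCode j a b c))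

theorem homCheck_all : ∀ i j : Bool, ∀ a < 13, ∀ b < 13, ∀ c < 13, homCheck i j a b c = true := by
  decide +kernel

/-! ### The search for Steiner triple systems of order 13 -/

/-- The position of the ordered triple `(p, q, r)` in a bit set of triples. -/
def pos (p q r : ℕ) : ℕ := Nat.add (Nat.add (Nat.mul 169 p) (Nat.mul 13 q)) r

/-- The set of all `r` such that `(p, q, r)` belongs to the bit set `S` of ordered triples. -/
def row (S p q : ℕ) : ℕ := Nat.land (Nat.shiftRight S (pos p q 0)) 8191

/-- Insert the six orderings of `{p, q, r}` into `S`. -/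
def addBlock (S p q r : ℕ) : ℕ :=
  [pos p q r, pos p r q, pos q p r, pos q r p, pos r p q, pos r q p].foldr
    (fun x s => Nat.lor (Nat.shiftLeft 1 x) s) S

/-- With labels `0, …, k - 1` in use, `r` is a possible third point for the pair `p, q`: it is in
use or the next label, it differs from `p, q`, and `S` has no block joining it to `p` or to `q` in
another way. -/
def cand (S k p q r : ℕ) : Bool :=
  Nat.ble r k && !(Nat.beq r p) && !(Nat.beq r q) &&
    Nat.beq (Nat.land (row S p r) (Nat.xor 8191 (Nat.shiftLeft 1 q))) 0 &&
    Nat.beq (Nat.land (row S q r) (Nat.xor 8191 (Nat.shiftLeft 1 p))) 0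

/-- The map coded by `c` sends the blocks of `Q i` to triples of `S`. -/
def leafCheck (S : ℕ) (i : Bool) (c : ℕ) : Bool :=
  (blocks i).all fun b =>
    Nat.ble (dig c b.1) 12 && Nat.ble (dig c b.2.1) 12 && Nat.ble (dig c b.2.2) 12 &&
    Nat.testBit S (pos (dig c b.1) (dig c b.2.1) (dig c b.2.2))

/-- Run `f` for all candidates `r` in the list, threading the certificate stream. -/
def forCand (S k p q : ℕ) (f : ℕ → ℕ → ℕ → Option ℕ) : List ℕ → ℕ → Option ℕ
  | [], s => some s
  | r :: rs, s =>
    bif cand S k p q r then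
      match f (addBlock S p q r) (bif Nat.beq r k then Nat.add k 1 else k) s with
      | none => none
      | some s' => forCand S k p q f rs s'
    else forCand S k p q f rs s

/-- Depth-first search through the partial systems on the labels `0, …, 12`. Arguments: a bound on
the depth, the bit set `S` of triples found, the number `k` of labels in use, and the certificate
stream `s`, which is read from its low end. A byte `13 p + q` with `p ≠ q` asks to branch over the
third point of the pair `p, q`; with `p = q` it asks to give the next label to some new point. The
bytes 200 and 201 end the branch; they are followed by 13 digits coding an isomorphism from
`Q false` or `Q true`. The result is the rest of the stream, or `none` if the certificate is
wrong. -/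
def dfs : ℕ → ℕ → ℕ → ℕ → Option ℕ
  | 0, _, _, _ => none
  | n + 1, S, k, s =>
    let t := Nat.land s 255
    let s' := Nat.shiftRight s 8
    bif Nat.ble 200 t then
      bif leafCheck S (Nat.beq t 201) (Nat.land s' 4503599627370495) then
        some (Nat.shiftRight s' 52)
      else none
    else
      let p := Nat.div t 13
      let q := Nat.mod t 13
      bif Nat.beq p q then bif Nat.blt k 13 then dfs n S (Nat.add k 1) s' else none
      else bif Nat.blt p k && Nat.blt q k then
        forCand S k p q (dfs n) [0, 1, 2, 3, 4, 5, 6, 7, 8, 9, 10, 11, 12] s'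
      else none

/-- The certificate stream of the search, in pieces of 376 bits, lowest first. -/
def certChunks : List ℕ :=
  [
    22490710132139965192832963979665961021169646759599556962485870075413812283023142824527907527426924578186245373953,
    48568652629913229852039771978253046553592286205239850841435028808532125636005488789618035852288663463505450738225,
    103167040169824477365495064520895907545251221912037640064699314248898473865535290040502362041513232382591648770166,
    22546702223609361498299430147118688717457288654729569820248257056636751555553615855317325281390315393606158665014,
    52506937576811768869152966615785518929986698636564706368440889848049690253563154795522760093135512341589783724962,
    80201149125058575621223998229418427657173600764203244272074289007092149863294172277937009517012926315444190851272,
    121049115187333852479193501907475238864675078091571761547930814476601662758969859165681393088356089626369123395660,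
    37476272626421239099008686885337904970566580104380564049125853934866805890395898701264359416905926782252138411056,
    7562046881099833110995644985567761750140121025271181520747350487484322186350740975399617051968730271930673406750,
    113428354706974331120311672485033617529418282283675719077424919066992492608394317121306909871480785516508154058307,
    36212738957048331567512467812843699332000872430392075933947339252721943725318967522816476116765108243863638779700,
    122331000863587284308978521004377940578544187455924536905199782678286099289359196826221319711564003232563449058901,
    20613848957335167954915811492426239687837169683113360691708946299851415550511363370986876381365186982084800558181,
    97455763177839730800468868016467289074327605461029364207768510340047157504301890332093578364869456612922715218214,
    45867589378973028594991051382748719725037037440592973332132496715855954614457629309709624442319618025944051909555,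
    94219595098928945565726996867349829103194304511726891095260943438876202757829072937140085236036714489867695763787,
    19446486255613855619339466667037668539530205982247266907604056994147059312254115302666015496255894243024873531514,
    28549180235609692534789467151204178239192969387676551668555233719291860385240056742583390400877827688522221042209,
    72304695935050341807839209849301361019495761300052024288040013404566288207561027005607704918277606767801663510050,
    21223103691377237491320161689743410369711403572118607174832662852873447203020092670440805710527866429650117599589,
    18817203739961508871177575942271554896764807189830595091272881643652860255562831301035345267792638134329118269969,
    24266365103554758980832127272178915168077019673932160433529746291368116871058617714567253293435614348052727998027,
    14133706285079893410004864549495652971976538895519669812146979841399769377369291930205988868727902675227307164059,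
    81287871255926881390846090456951398782623928082568606573178788069986724964980852975759460824989580369292939318178,
    11062969113787897793858952398231222476081686878381427580253543201878650240108530016161366081200662812170855453387,
    93379320515115608618507253307167363655144069404256884679521226718203146110019514777774376738876519574144950719426,
    120386826179284676309113246946511738413992574018943814452974845564240234786777842494488957072820052132371976965139,
    38081941731626605930713231229562174023793319222258304100983853340955389313998027686007841778185359269775751480128,
    122251655798973938108716904797076582211421829447358258733420647968745853844579127589475015979116734280351487369302,
    97534131216602293844080392794765929592088779795584108177927647650548544744490198948748249003468340523837212405537,
    78990370575352714785877453594885942056386176250825966237797315355467648902547759316691679417366551169757512238467,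
    112296472842861697392492647618783472030784072825706146722285243356038802158791803356996254444269670108271074429625,
    69521964762803632851991333558904901511789110300606664940113182808338715180954312870756431548170698398188338421829,
    69611584026344949139480873855765853240017123908615561086145474302275224685801408092930701220163878353871339785349,
    18178547484771913113556255345737292046244993304720373129873390973439263502616223614551978170512860885777033216681,
    80238872583557545624522340436931561203830197776405783683475628334123873342093773260049374449951278310409897327139,
    34658431694372033438973902080902216277606430646011983411868061485401654442792955824797632538442943049272511775500,
    22419850288714517492609723718697254934266603868384590348988333868386662454594060340216962183932677442262785986852,
    52023044249687148931974776730028968595803445557407878403682699689358195013703996915147137969249329124162141698905,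
    120450485462929682240086660656886534966014834903193777341182947943739794685701715177182833733201798076985381792033,
    48802216150668039085437745426799658855258656096652326674464040634940763384568557823413682683271641479948708528788,
    22447710668974260155936995951220763851596415625695318612932374886024942771296550491008841176637183362398584706950,
    112296338800492299986892454217287213869420695427788118351938568269556283676947714640959677266703578570733995834428,
    20512751934287801904330498087431890637793274035594841258670457919313242733663812928815428724109812604435981019446,
    101281786764851887019222393775242134000740744906675491125283764315558060324511970051677750508115172877907740087866,
    26535250517339453408616774682969986917612202781671696419845720435640560279414119911736713885024730602317426070345,
    103167040140585309551440263270044924974380376856192901528668456206247397700533224685314765019301790773716926777419,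
    35012477703087165094607772391223216475417563372610910815128574033779730739029604949914518775894430375429524960837,
    80199386526481053287749367548532157004066279972510047311879816036461280663075127167719693247964876946345252378443,
    21156105963436372094521686613497455227519134317924494134461520412731606346416514682197340539298617945470486161500,
    60767748473731544352710698034516247424183547618139530611305122917886489302586473843763439352248892037875464412990,
    79784119633570050172535923339498768712873012127546499455154984996728406167291066611096882600128609741544491211143,
    90053207001762848062913550800145496053604860068506486251158269612539162269567651042784257939492383776403723434316,
    1095182451365644422947704603954011878298664701588235382905803310636982001620043364306838184332754674685878602434,
    26536469736354022755775656844682700023244376442209111550549102866949554957453802626109572804924699026981990478530,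
    116793773296921491458940969907850269849951962158219587787080883516701192332839905660384937195704466169641164654639,
    120417393749379590844454013511342048602249686944722265394946878243088166478765934753239733953461281270271571108866,
    102049178147221224042678250172434718409059238623979403811457170186890535595132718498612047515491452714750833358145,
    65246077692790685596061784834448776621570828545676746746544914103986275734768279572856061901044727735142764127517,
    36210142616260160890934290988152385119969564082618632353823144474272077276675666897594035759537895241844677253928,
    36874772498138058325252188019068884697545784496828674286658389043390631890595411609651650525508295505305508254408,
    34595686860330665505973285553519699895381760180538655452731972625459879746613506890634949263930751684541067436122,
    97491146877886689842575050284615459568762179602567978222739122879466535220295120224940625622312643412976390909814,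
    99429745811390839853244735565296603338867461107163174394727723312596718856544873157547339306493764774570841900419,
    61201774446598144320630030728236099808299797565894678046879035838165169618886294201379652692897421829364490775497,
    36811378690885338928149816078656065566965552359847439420687541798689770066658148356548667619180810375468876998945,
    21127802058140176184026667247086794096043165843046679736104360089695528881836876802432748478133917476041743962568,
    9709422226082151769133900502807527781871637908323872769401303897316746505533668951164689503240419757746470862654,
    107330233961453768170575296163904059315387469326493128166935453191536074570652387752579901759777710513431499756450,
    20043570562704504339000563791966565740803214939808516696122224930090583178681475771476860966770850823116768855321,
    7561900095219848458172055287423566020831144946195657572054720818354596206328235197768337596099741775074438823578,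
    21121115809050125207574851242030495636959499883669552903736260173218465799746877650059856754179418966741178091365,
    21720113038876917062980565219079629600821647887232437316150984071786874559902367908147894296636055650945665278781,
    20011952727353670138609370622783240348993168088873430540693699452524919459509222562009283135216209406940752132922,
    11025474106085033834166360125237989446008450569247144907235816742131983283433317237998575879874116100173123048740,
    59981811469609516699376616087828712559259533575779997897660922422344627837394122908408343250007530945135610058045,
    70577831842021661893631229190150590014722058070291754163272144598674746261612196330226336552791379045438945265013,
    29578355725551387199186673236575264449774036467803346242747984994134199301721649431793516282161435972543700012165,
    29329390823985152809584870140659756198552724421947671186416091290423590769155021020418030316284328086569587656778,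
    78350130770023228965628138527924277346319469264266633955156528832392318437765889959589676110898858722648495273316,
    29667607547624868627174398944452962821564148980459746207654349442849386208018591562901726266683976907221731783188,
    25046002211804477509944486933034252321665696488628772687364182369006777319652030651637284334883586439965698637102,
    40325410015981686649815970951668699777188471325954912482624909191258870314135089193292958163459528974541945864753,
    19375773037963114234029106543936056484017517291318233336931766447657472399877939592569348023017294720048051072046,
    21423513309001411708309255929984472435018384458975370164601838374772982500079859737897116921537172550144149965882,
    120447888214458223238806859189980354119301156058676104760812873825321269872155927019978255812728516074695743855751,
    43972552393235369312755822278692884083979061538692566113000272900126822497456214518048618459041133997696936097360,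
    7561753313817820752157773014939365067390790005632605886683905776754043017530274073463786719163242177701930475046,
    12878898172836537485283005901642528338379932218089235872540332466102144988774479436237460049997182139127096056387,
    53589339350808999469293378520599979775279767506268064063972651741879519077377748057814513154759720161611785475234,
    107930373210554419390232871110626702787753736643455526638787545152178691227700079939964008731896983016225380660057,
    35516526361094159127707641662108132595201568168920233139071565066356892887840138205450464438738913069039821945290,
    68409139397819228117779489023745420681992364992905798738411076511968847449464796482088299335659131109857910734705,
    36752914829165802441123559169215509097617706729938585260043372840997806052445168852872033556902568064520114428598,
    113108954365590812225830567500749075285352086820485833624706778908809703288311256716132028794557628339217363509790,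
    145426658546776257273748692853244925446139947273695445246637580701838335062549106271270161039498461170781959506732,
    113348188168961183915005269289044192923402367204873230999719614792656160939278158179818248318062217883196585018771,
    12162182612894116774113629029785316280128217002903597612121906136678010244627903712474873923745046511561635616425,
    112136124351688523665349342204116344287482066846965365997573958868464967397413803885446478020862807524713514128530,
    97418584292999531145978952866140403423257913138217895141604882719253814019416137051854978878460589454962209245543,
    36750272177285314711229134579808499270365115964286383695122642526788047045922366151768483979201140579168123914003,
    26527480152253302233610588777471353585401251321945301674689408035533135164683803329313663413397539016317289416790,
    119870010248825324024026028221375248913100214529865410634731282209303192961589566287285383131124969541219691412270,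
    12167134352557362473998295135539469205478530686752386868942347241947797031623978912471725434600965360972761770041,
    120447888214458770057875790444770037035167393828784815047396717673857544800692904771396181590391096877249342972450,
    72190918352330463599515858762341174613379863912161325020047492778593419247119123783073351399105085510169977835778,
    145577513540898205989567838285202407711636530412403425859899979528044233190701102376030361805648640028145803861793,
    61434242298264443758702595131684326400098279807186243753419216432215486692085241263040392358121052617276481840499,
    128410253891128970645550035861674590120068681315433225990779109070782242564374353600218891089004772943134091529032,
    113234186800617689300399747745136772620313771184744984559621612150005810051055779681852862419073063307769800696291,
    21343946763048032256475765301090243482465687414273521897597528147768306435769747473712241368958419815228016573202,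
    4077860970478390475319713262341515635821545854473001904361798924099392634422750522787565177033450713213044089762,
    22318745059583677221486601745110813333448008587727776939824383445858950134897334386633556973653569710629305729957,
    80343678525132123850970179393387600067360917611747434096210102093678672621936792594819654527391360720320121683486,
    38082160440059575192559248699906156671710989688789072383069293549120106263528603198838193684826222372636210910388,
    103842042507535260269811489235992737531933989406190758614968684662988907529190102906420702220791917470659523781150,
    36149538147355430218721068555646721891655990837700863096662726140683211297349752732275817939597752371187773740089,
    119894284464962320457654079749219394116095911055345295008156986641918991120416064999767760795554284390843648362838,
    93924420285981429175397026665051267916411921973289086272001762800438110495536147247960246871340164621096971273305,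
    53049192858868902211329164940554497527959889622827410210889011303560748421258095316183900283018844794039724351591,
    60959221853108268239750745661964721752626852541314484351444587427849384926948097934281783158576119104094999040201,
    80197171283090813782633314367331245393240644138586766529241290599587775364500251732157008935447371282289974066022,
    26323589881749377626872879674342838767595652879654481299027273383753935389931494702635545888654973724004529279020,
    38554015592184713057460622759460655769612502537777859323200126566381226712561697847887327908142589318684676858689,
    80727369499051645403066608049956240490103109824129093888298361141064799875484340731403556451089109620022538816314,
    60334749734709451379471698830627107420804265338908664798823632373547869828834664537354145321545187016490995958540,
    80197611327302688909431953456605921192193525946905039534493167239504140485680465050088803408873547468835408453669,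
    18181125261445145034377552006961899319760899338773616049766026016035280558657046735688074595540957436958372216892,
    80197171151020692487497111858736598175561238142558629911087802235720237211270752440278089446226142528112805953056,
    22498547857817145700160496194448767512071864479010536997014291691324344227923969979053008444299868309218114883692,
    44627585199933556572254779125183769544004803491598451167823369356094651827842931504033436945006342044497697974145,
    49503503854923679255942359810883764354147563368167513075925314708393877007004766436645089694977024150534355448406,
    51849087599794391596858281125806043661673070711642017035597796646062233425050843185472912316862917253864892785638,
    147037963104352533348017909134390399360344648506528070322233281807722925662052024327273404839826652309152517677257,
    99251247437220588584517171205177978642574557183802351022008131778876119914691164202172574796289547914450590360947,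
    29697492845118265007954754774219001218396090952852029364480738302478834001280551498696376090644849807762764956418,
    116666498624763331016813405403955616716447533771035178366794705415131631515151026237718236645109217785232068076888,
    120523249397575274927797019921276434688997274892067667301086099091160320725937799603369125098778990855916320757107,
    18819461445791534826927020988134174937254349622147584388188423988733081337617002564067714659138995231200359093307,
    101276896908480324069908135298244679263524454753603340638954418301392206179409112827235324672840466003269152546903,
    80197170982334104307318967479849054653196751478595159852942188652798712851648744051827290653732840487807269299817,
    120513905715991746138011193962519118625278038713248448638475114217584137275000256898528382144146421455587013977356,
    99474742429955639994208793039432857371643622204746662205364839431317197527629733496111830459869457720886637593681,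
    36210142609142855918633198103976615023418069698718352471190087350873838958185851499787558371783315791187896849347,
    73136957663532646469933816667051573328073367409920057677521808449274715308766402582267576421647213134696359932105,
    1672953472945765474178111845605469055918821225528836100169937480280312968907997634246674100371328789016586793496,
    64717205789834199125117753982892564114920862066034016717284368537062267125346610516349787519467963594670183262561,
    17147623433232056773631249609079289746025040600844590779749547206520559895752681020701591804107169894153048177445,
    38549318507025919169988195542037598157809865024924923630700146756377186689246216300330110986206126659227196176999,
    89817093815675166577944200565340092915598193808277590436888752927647893975528551753572231331752411948141696666426,
    21786784113260591039518149482240381598597025474756600264404644748039877315051124367313999512248714185099958773004,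
    80235041224942232372963268661354501723314003016726546511649264967882059432674166041337302573898839964009942354033,
    10805143556598491523820037471678148403909252908528577347121318422253902467742862664599658350033630362711666409532,
    9645684957526939495977784613845467282041545783597100542237486320294537119482317959377438533691809423031070229090,
    18708840988407271733878078651836271897450743735935371321922271106164573294696509017339693618886988114599169044269,
    60881384151591228903062370830166089537869838908364886900425880145987626462426680146563349070267621317800823900219,
    39764808117027255859776953177391161142379594436666455245232097345319803598100699856593615327677590198610565774354,
    61121928880104408065142309502050589224716324243960903279257623142878442239073825645291160113684383869239391663255,
    21186745099940330450716317184343898626668303102101418599936685845138277865427778981146789799724936053105864622114,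
    58959650926643283653639685032128162977437686030394495869313670386828532010438911775777880762831217603649451415359,
    55425914872715267188205289196245137369371570479385773909362261499274233609892165528460770822931457118041453347653,
    11914207109931360630707083793819677611018650935548529617588261049740992741241660551983311693626191036625903319428,
    90904763748782977803581906229054190313753875096929440429553831332579505041450762852374612335149905757497435862626,
    80727662428249773606563638901559599247548158205870840888240858477539025961828139026935436660131370040780219613684,
    36210142617926850774226220154072157354725273139240385255710267860285065968288737429761709281414828503167159309404,
    117315972761283933092503660959894999196709668356852620620708633884011143106045166277998334446277245030769361229000,
    127393775148768155825522044370048584272435005446885439188357427407988868611889796637869861151622159704089432314998,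
    36945862312970884607218060893050594380042088234120749767710435527811505138205229610509527315956852138476063577459,
    10851474963009750397424093944290449819074773680459556068760321806496198774898280603807406960732888617593862692682,
    120588326667486552794272344326686504103177589170642040566497490867172570345835379021398360863978214192260795098503,
    31868518409340631013907626345062253906141971929854794503367516400136619988202680136276508590982208868252738788259,
    36217151515818993904505956131552498446670583639394495212179794316342119980252049371020934760725380719374598968488,
    35608879086999209148609077242857101436155288753435393162900385293137394118267762791832414691234699220369756673865,
    62001785868581577454314448844779736452870845326614949803457753927726300840258218270867400229859837808758986662999,
    19417931557850359562943854628801442954020619833771080692152071338499849412483064338218292888261026779515987936069,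
    88236996002553244112791720862429552207019910098075192351195938185741926619450526265970548907640944475367162939751,
    21722213704288998304006984963822966884319213418192142184291208705088980448117452199482713746736678664299736064500,
    128821861116671087704997011211662494667929933742137651090890763063595529844561824623565032588360071290896953985608,
    62249696901972469683058164159067526014813938197831220814642181158211279313985832102585507125095201649445455454737,
    26078405358921886564335400616017860764682528100243011324033584657282998045749417231309869479916629429838284606533,
    111969135546515237059510510912969721905346588509692391240479684833777979968141862732813182641183114454972445852578,
    118185963240928802491158205054952325553550025145100416094613596508844417501592277349724521193219295910155972286567,
    19948926976721820031346275284396069849004279062255206762594101070973790551082907738364107079547478448428652040930,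
    79748320108581477504589687598558696552873998113524550990750305829503978483700423829643966629442740559864173972003,
    35775910477615291460384207534522275666153394221798324740387114645054224898140847382731145412212489248027130222092,
    135857568643765510427706753742607355334444790670217179220438107302629287830659534004283652294916760869555846987111,
    43427480515050561344571153380608896798167451320845555890060365454405806523379697414079691852867616092748819235986,
    31466875587685804926942218692732297396903134411779875221221391287382679937356992683041272355836976318584608334024,
    40600050676631569227098435879821451712151061592389527603781944621802888771892595763044636244401148507334327048892,
    132025143582977368771183279308276338794044922811114945332572890589780785442920619294844074651520600415937717154082,
    13240571996024360133987257817880551794893931742020443745875813104253635713024598168307170651617384280873531216449,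
    145952704142129287378251737381186084339349078543558954352150339728431710843634260299047695312748339777469018834740,
    83796504652734753306431285195648574607650414300501487502628187976869235681882986932379956700610434826072011902082,
    73154068341910759211533830659332134536541895360867617795484900459147103641351083342372404182391606241057333943338,
    120450494561316416546264299604930587960582312361258277036942748554557758357509431696365813384338161389624866505784,
    117879036851150271992643484860017027322933199964531085330426611284468692861877660678698349041435157624667396219408,
    120434687707458456351222441697399297416447075324162266495038245838873934369765564110497689644159747848222040425367,
    19310280317915160432077310358411364096469177223920520164894368738324865407108321190954654659225404257877255591746,
    112027274377149120054449488421111232913938158620960076042019350969983079585780198022014359994861554382789843375676,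
    13387868800087033165895706239571733148164120853180162209831358302954012211421624981356275513409331921729480182830,
    19310050071713530840671118656343334354802067349326394046589386045000958884514704780762044291122027394173566711154,
    46119222101840479984399502398040581061872261470889457231463946246048033896617059874285153870786915812069759014460,
    19310308344803714560995723224722627623352155772434295900015139234685344044248515090903986995797987217845512192531,
    18182721687814198247395635715418456813631988415646118595098709657935243058642945043270937090737048813008241317437,
    44888936502726417157319418887935708040555015930455813220895217556167651805203639168056567173908307511073970731555,
    58775688867090584613058335768149375762045292342848775361381248642659634798067504572632133779440054225880259253832,
    36150044925263914531101159292765606953569929750287827139534385121337100871986442355555137065558285273988839553370,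
    81243249009567104230883927890194751420307805027894918501566020126692363492112813787035843826339821737162781804631,
    60799652008350098185561138135587189967990887043619930634763167141344516954687148769260637060436836260346090212265,
    108989697552869331703452176361739560388223754564747113293136504189231833804990688196473154035580794671063023492894,
    60259205091312191298370452796163252782682030883332769867483631866792956382927462803247321165766235617983729337290,
    31466076716886742876994325290539941291105682060435923564713420118985195908966644964950052270816706233097279645128,
    18241672849941822765645840205922404967938623462398859364993345550910977265742918563425803091158097043466455915196,
    43108845689261225320801298771482375556779227364335557337230050511999080022136222133921595689036867677998879751204,
    45161183998901524239673391487638817663934389369992171671051161460951944569598304974746947612091648449314063128774,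
    35559845987285063382463912646410679772299947480309359775927857858793282550686875746374487530838106413681210706508,
    113153574923452705326990041818510308224521669133198291520777487527029925948345692119484473686038909501939922904094,
    17147918716805780584027255556810869837102996954570208755393217822240385246397118806631138798868319984321698351178,
    23317251251404684148443389951415953226746225925710645516716785105213580283791189798673726637149323345813836630274,
    90347292847291500906324458981074227676461151848183126531166836050315866073702121529505726272500537335066187334010,
    69319006086280282269820320933934873621021041409036980911782863500683591522785161578102703904193199186980441166348,
    121754508757162368310777770910940255097189168821457036123797326625431660630431802100879090710137174072994797561192,
    83512870576123477080173680702353759873078504824698298790115402561272397104497]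

/-- The certificate stream of the search. -/
def cert : ℕ := certChunks.foldr (fun c s => Nat.add c (Nat.shiftLeft s 376)) 0

theorem dfs_succeeds : (dfs 50 0 2 cert).isSome = true := by decide +kernel

/-! ### Linear maps on bit vectors -/

theorem lin_cons (c : ℕ) (cs : List ℕ) (v : ℕ) :
    lin (c :: cs) v = (if v.testBit 0 then c else 0) ^^^ lin cs (v >>> 1) := by
  have h : Nat.beq (Nat.land v 1) 1 = v.testBit 0 := by
    have h1 : Nat.land v 1 = v % 2 := Nat.and_one_is_mod v
    rw [h1, Nat.testBit_zero]
    rcases Nat.mod_two_eq_zero_or_one v with h | h <;> rw [h] <;> rfl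
  change Nat.xor _ _ = Nat.xor _ _
  rw [h]
  cases v.testBit 0 <;> rfl

/-- Additivity for the group structure of bit vectors. -/
def AddX (f : ℕ → ℕ) : Prop := ∀ a b, f (a ^^^ b) = f a ^^^ f b

theorem addX_lin (cs : List ℕ) : AddX (lin cs) := by
  induction cs with
  | nil => intro a b; simp [lin]
  | cons c cs ih =>
    intro a b
    rw [lin_cons, lin_cons, lin_cons, Nat.shiftRight_xor_distrib, ih, Nat.testBit_xor]
    cases a.testBit 0 <;> cases b.testBit 0 <;> simp [Nat.xor_assoc, Nat.xor_left_comm]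

theorem AddX.zero {f : ℕ → ℕ} (hf : AddX f) : f 0 = 0 := by
  have := hf 0 0
  simpa using this

theorem AddX.comp {f g : ℕ → ℕ} (hf : AddX f) (hg : AddX g) : AddX fun x => f (g x) := by
  intro a b
  simp only [hg a b, hf (g a)]

theorem AddX.xor {f g : ℕ → ℕ} (hf : AddX f) (hg : AddX g) : AddX fun x => f x ^^^ g x := by
  intro a b
  simp only [hg a b, hf a b]
  ac_rfl

theorem addX_id : AddX fun x => x := fun _ _ => rfl

theorem addX_zero : AddX fun _ => 0 := fun _ _ => by simp

theorem addX_field (t : ℕ) : AddX fun X => (X >>> t) &&& 8191 := by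
  intro a b
  simp only [Nat.shiftRight_xor_distrib, Nat.and_xor_distrib_right]

/-- Additive maps that agree on the powers of two below `2 ^ n` agree below `2 ^ n`. -/
theorem AddX.ext {f g : ℕ → ℕ} (hf : AddX f) (hg : AddX g) (n : ℕ)
    (h : ∀ t < n, f (2 ^ t) = g (2 ^ t)) : ∀ x < 2 ^ n, f x = g x := by
  induction n with
  | zero =>
    intro x hx
    obtain rfl : x = 0 := by simpa using hx
    rw [hf.zero, hg.zero]
  | succ n ih =>
    intro x hx
    have ih' := ih fun t ht => h t (by omega)
    by_cases hb : x < 2 ^ n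
    · exact ih' x hb
    · -- clear the top bit of `x`
      have hy : x ^^^ 2 ^ n < 2 ^ n := by
        apply Nat.lt_of_testBit n
        · rw [Nat.testBit_xor, Nat.testBit_two_pow_self]
          have : x.testBit n = true := by
            rw [Nat.testBit_eq_decide_div_mod_eq]
            have : x / 2 ^ n = 1 := by
              apply Nat.div_eq_of_lt_le
              · omega
              · rw [pow_succ] at hx; omega
            simp [this]
          simp [this]
        · exact Nat.testBit_two_pow_self
        · intro j hj
          rw [Nat.testBit_xor, Nat.testBit_two_pow_of_ne (by omega),
            Nat.testBit_lt_two_pow (lt_of_lt_of_le hx (Nat.pow_le_pow_right (by omega) hj))]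
          rfl
      have hx' : x = (x ^^^ 2 ^ n) ^^^ 2 ^ n := by simp
      rw [hx', hf, hg, ih' _ hy, h n (by omega)]

theorem lin_lt (n : ℕ) (cs : List ℕ) (h : ∀ c ∈ cs, c < 2 ^ n) (v : ℕ) : lin cs v < 2 ^ n := by
  induction cs generalizing v with
  | nil => exact Nat.two_pow_pos n
  | cons c cs ih =>
    rw [lin_cons]
    apply Nat.xor_lt_two_pow
    · split
      · exact h c (by simp)
      · exact Nat.two_pow_pos n
    · exact ih (fun c hc => h c (by simp [hc])) _

/-- The number with the bits `g 0, …, g 25`. -/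
def ofB (g : ℕ → Bool) : ℕ := Nat.ofBits fun b : Fin 26 => g b

theorem testBit_ofB (g : ℕ → Bool) {b : ℕ} (hb : b < 26) : (ofB g).testBit b = g b :=
  Nat.testBit_ofBits_lt _ _ hb

theorem ofB_lt (g : ℕ → Bool) : ofB g < 2 ^ 26 := Nat.ofBits_lt_two_pow _

theorem eq_of_testBit {F G : ℕ} (hF : F < 2 ^ 26) (hG : G < 2 ^ 26)
    (h : ∀ b < 26, F.testBit b = G.testBit b) : F = G := by
  apply Nat.eq_of_testBit_eq
  intro b
  by_cases hb : b < 26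
  · exact h b hb
  · have : 2 ^ 26 ≤ 2 ^ b := Nat.pow_le_pow_right (by omega) (by omega)
    rw [Nat.testBit_lt_two_pow (by omega), Nat.testBit_lt_two_pow (by omega)]

theorem ofB_xor (g h : ℕ → Bool) : ofB (fun b => g b ^^ h b) = ofB g ^^^ ofB h := by
  apply eq_of_testBit (ofB_lt _) (Nat.xor_lt_two_pow (ofB_lt _) (ofB_lt _))
  intro b hb
  rw [Nat.testBit_xor, testBit_ofB _ hb, testBit_ofB _ hb, testBit_ofB _ hb]

/-! ### Tables on `Fin 13` -/

/-- The third point of the block of `Q i` through `p ≠ q`. -/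
def op (i : Bool) (p q : Fin 13) : Fin 13 := Fin.ofNat 13 (opN i p q)

/-- The index of the block of `Q i` through `p ≠ q`. -/
def blk (i : Bool) (p q : Fin 13) : ℕ := blkN i p q

/-- First point of the block number `b`. -/
def bp (i : Bool) (b : ℕ) : Fin 13 := Fin.ofNat 13 ((blocks i).getD b (0, 0, 0)).1

/-- Second point of the block number `b`. -/
def bq (i : Bool) (b : ℕ) : Fin 13 := Fin.ofNat 13 ((blocks i).getD b (0, 0, 0)).2.1

/-- Third point of the block number `b`. -/
def br (i : Bool) (b : ℕ) : Fin 13 := Fin.ofNat 13 ((blocks i).getD b (0, 0, 0)).2.2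

theorem op_val : ∀ i p q, (op i p q : ℕ) = opN i p q := by decide +kernel

theorem op_comm : ∀ i p q, op i p q = op i q p := by decide +kernel

theorem op_ne : ∀ i p q, p ≠ q → p ≠ op i p q := by decide +kernel

theorem op_op : ∀ i p q, p ≠ q → op i p (op i p q) = q := by decide +kernel

theorem blk_comm : ∀ i p q, blk i p q = blk i q p := by decide +kernel

theorem blk_op : ∀ i p q, p ≠ q → blk i p (op i p q) = blk i p q := by decide +kernel

theorem blk_lt : ∀ i p q, blk i p q < 26 := by decide +kernel

theorem block_spec : ∀ i, ∀ b < 26, bp i b ≠ bq i b ∧ op i (bp i b) (bq i b) = br i b ∧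
    blk i (bp i b) (bq i b) = b := by decide +kernel

theorem mem_blocks : ∀ i, ∀ b < 26,
    ((bp i b : ℕ), (bq i b : ℕ), (br i b : ℕ)) ∈ blocks i := by decide +kernel

theorem of_mem_blocks : ∀ i, ∀ b ∈ blocks i, ∃ x y : Fin 13,
    x ≠ y ∧ b.1 = x ∧ b.2.1 = y ∧ b.2.2 = op i x y := by decide +kernel

/-- Any ordered pair of distinct points, with its third point, is an ordering of a listed block. -/
theorem orderings : ∀ i p q, p ≠ q →
    (p, q, op i p q) ∈ [
      (bp i (blk i p q), bq i (blk i p q), br i (blk i p q)),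
      (bp i (blk i p q), br i (blk i p q), bq i (blk i p q)),
      (bq i (blk i p q), bp i (blk i p q), br i (blk i p q)),
      (bq i (blk i p q), br i (blk i p q), bp i (blk i p q)),
      (br i (blk i p q), bp i (blk i p q), bq i (blk i p q)),
      (br i (blk i p q), bq i (blk i p q), bp i (blk i p q))] := by decide +kernel

/-- To prove a statement about all collinear triples, invariant under reordering, it is enough to
treat the listed blocks. -/
theorem collinear_induction (i : Bool) (P : Fin 13 → Fin 13 → Fin 13 → Prop)
    (h1 : ∀ p q r, P p q r → P q p r) (h2 : ∀ p q r, P p q r → P p r q) (p q : Fin 13)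
    (hpq : p ≠ q) (h : P (bp i (blk i p q)) (bq i (blk i p q)) (br i (blk i p q))) :
    P p q (op i p q) := by
  have := orderings i p q hpq
  generalize bp i (blk i p q) = x at *
  generalize bq i (blk i p q) = y at *
  generalize br i (blk i p q) = z at *
  generalize op i p q = r at *
  simp only [List.mem_cons, Prod.mk.injEq, List.not_mem_nil, or_false] at this
  rcases this with ⟨rfl, rfl, rfl⟩ | ⟨rfl, rfl, rfl⟩ | ⟨rfl, rfl, rfl⟩ | ⟨rfl, rfl, rfl⟩ |
    ⟨rfl, rfl, rfl⟩ | ⟨rfl, rfl, rfl⟩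
  · exact h
  · exact h2 _ _ _ h
  · exact h1 _ _ _ h
  · exact h2 _ _ _ (h1 _ _ _ h)
  · exact h1 _ _ _ (h2 _ _ _ h)
  · exact h1 _ _ _ (h2 _ _ _ (h1 _ _ _ h))

/-- The coboundary of `h`: on a block it is the sum of `h` over the three points. -/
def cob (i : Bool) (h : ℕ) : ℕ :=
  ofB fun b => h.testBit (bp i b) ^^ (h.testBit (bq i b) ^^ h.testBit (br i b))

/-- The pullback of a cocycle `G` along the map coded by `c`. -/
def pull (i : Bool) (c G : ℕ) : ℕ :=
  ofB fun b => G.testBit (blkN i (dig c (bp i b)) (dig c (bq i b)))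

/-- The cocycle representing the syndrome `v`. -/
def emb (i : Bool) (v : ℕ) : ℕ := lin (embCols i) v

/-- The syndrome of a cocycle. -/
def syn (i : Bool) (F : ℕ) : ℕ := lin (synCols i) F

/-- The map on syndromes induced by pulling back along the map coded by `c`. -/
def induced (i : Bool) (c v : ℕ) : ℕ := syn i (pull i c (emb i v))

theorem addX_cob (i : Bool) : AddX (cob i) := by
  intro a b
  rw [cob, cob, cob, ← ofB_xor]
  congr 1
  funext t
  simp only [Nat.testBit_xor]
  cases a.testBit (bp i t) <;> cases a.testBit (bq i t) <;> cases a.testBit (br i t) <;> simp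

theorem addX_pull (i : Bool) (c : ℕ) : AddX (pull i c) := by
  intro a b
  rw [pull, pull, pull, ← ofB_xor]
  congr 1
  funext t
  simp only [Nat.testBit_xor]

theorem addX_emb (i : Bool) : AddX (emb i) := addX_lin _

theorem addX_syn (i : Bool) : AddX (syn i) := addX_lin _

theorem addX_induced (i : Bool) (c : ℕ) : AddX (induced i c) :=
  (addX_syn i).comp ((addX_pull i c).comp (addX_emb i))

theorem emb_lt (i : Bool) (v : ℕ) : emb i v < 2 ^ 26 :=
  lin_lt 26 _ (by revert i; decide +kernel) _

theorem syn_lt (i : Bool) (F : ℕ) : syn i F < 2 ^ 13 :=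
  lin_lt 13 _ (by revert i; decide +kernel) _

theorem syn_cob (i : Bool) : ∀ h < 2 ^ 13, syn i (cob i h) = 0 :=
  ((addX_syn i).comp (addX_cob i)).ext addX_zero 13 (by revert i; decide +kernel)

theorem syn_emb (i : Bool) : ∀ v < 2 ^ 13, syn i (emb i v) = v :=
  ((addX_syn i).comp (addX_emb i)).ext addX_id 13 (by revert i; decide +kernel)

/-- A cocycle differs from the representative of its syndrome by an explicit coboundary. -/
theorem cob_xor_emb_syn (i : Bool) :
    ∀ F < 2 ^ 26, cob i (lin (potCols i) F) ^^^ emb i (syn i F) = F :=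
  (((addX_cob i).comp (addX_lin _)).xor ((addX_emb i).comp (addX_syn i))).ext addX_id 26
    (by revert i; decide +kernel)

theorem field_packCols_basis : ∀ i, ∀ t < (auts i).length, ∀ j < 13,
    ((lin (packCols i) (2 ^ j)) >>> (13 * t)) &&& 8191 = induced i ((auts i).getD t 0) (2 ^ j) := by
  decide +kernel

theorem field_packCols (i : Bool) (t : ℕ) (ht : t < (auts i).length) :
    ∀ v < 2 ^ 13, ((lin (packCols i) v) >>> (13 * t)) &&& 8191 = induced i ((auts i)[t]) v := by
  apply ((addX_field (13 * t)).comp (addX_lin _)).ext (addX_induced i _) 13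
  intro j hj
  have := field_packCols_basis i t ht j hj
  rwa [List.getD_eq_getElem _ _ ht] at this

theorem allGE_iff (v : ℕ) (g : ℕ → ℕ) (l : List ℕ) (X : ℕ)
    (h : ∀ t (ht : t < l.length), (X >>> (13 * t)) &&& 8191 = g l[t]) :
    allGE v l X = true ↔ ∀ c ∈ l, v ≤ g c := by
  induction l generalizing X with
  | nil => simp [allGE]
  | cons c l ih =>
    have h0 : Nat.land X 8191 = g c := h 0 (Nat.succ_pos _)
    have h1 := ih (X >>> 13) (by
      intro t ht
      have := h (t + 1) (by simpa using ht)
      rw [← Nat.shiftRight_add]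
      rwa [show 13 * (t + 1) = 13 + 13 * t by ring] at this)
    have h2 : allGE v (c :: l) X =
      bif Nat.ble v (Nat.land X 8191) then allGE v l (X >>> 13) else false := rfl
    rw [h2, h0, List.forall_mem_cons, ← h1, ← Nat.ble_eq]
    cases Nat.ble v (g c) <;> simp

theorem minimal_iff (i : Bool) (v : ℕ) (hv : v < 2 ^ 13) :
    minimal i v = true ↔ ∀ c ∈ auts i, v ≤ induced i c v :=
  allGE_iff v (fun c => induced i c v) _ _ fun t ht => field_packCols i t ht v hv

theorem auts_hom : ∀ i, ∀ c ∈ auts i, ∀ p q : Fin 13, p ≠ q → dig c p < 13 ∧ dig c p ≠ dig c q ∧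
    opN i (dig c p) (dig c q) = dig c (op i p q) := by decide +kernel

theorem cnt_eq (i : Bool) (n v : ℕ) :
    cnt i n v = ((Finset.Ico (2 ^ n * v) (2 ^ n * (v + 1))).filter fun w => minimal i w).card := by
  induction n generalizing v with
  | zero =>
    have : Finset.Ico (2 ^ 0 * v) (2 ^ 0 * (v + 1)) = {v} := by ext; simp
    rw [this, Finset.filter_singleton, cnt]
    cases minimal i v <;> simp
  | succ n ih =>
    have h : cnt i (n + 1) v = cnt i n (2 * v) + cnt i n (2 * v + 1) := rfl
    have h1 : 2 ^ n * (2 * v) = 2 ^ (n + 1) * v := by ring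
    have h2 : 2 ^ n * (2 * v + 1 + 1) = 2 ^ (n + 1) * (v + 1) := by ring
    rw [h, ih, ih, h1, h2, ← Finset.card_union_of_disjoint, ← Finset.filter_union,
      Finset.Ico_union_Ico_eq_Ico]
    · rw [← h1]; exact Nat.mul_le_mul_left _ (by omega)
    · rw [← h2]; exact Nat.mul_le_mul_left _ (by omega)
    · exact Finset.disjoint_filter_filter (Finset.Ico_disjoint_Ico_consecutive _ _ _)

/-! ### Classification of the homomorphisms between the two systems -/

theorem beq_eq_false {a b : ℕ} : Nat.beq a b = false ↔ a ≠ b := by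
  rw [Ne, ← Nat.beq_eq, Bool.not_eq_true]

/-- The code of a self-map of `Fin 13`. -/
def codeOf (f : Fin 13 → Fin 13) : ℕ :=
  [(f 0 : ℕ), f 1, f 2, f 3, f 4, f 5, f 6, f 7, f 8, f 9, f 10, f 11, f 12].foldr
    (fun x s => Nat.add x (Nat.mul 16 s)) 0

theorem dig_add (x s t : ℕ) (hx : x < 16) :
    dig (Nat.add x (Nat.mul 16 s)) 0 = x ∧ dig (Nat.add x (Nat.mul 16 s)) (t + 1) = dig s t := by
  have h : ∀ c y, dig c y = (c / 16 ^ y) % 16 := by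
    intro c y
    have : dig c y = (c >>> (4 * y)) &&& (2 ^ 4 - 1) := rfl
    rw [this, Nat.and_two_pow_sub_one_eq_mod, Nat.shiftRight_eq_div_pow, pow_mul]
    norm_num
  have h2 : Nat.add x (Nat.mul 16 s) = x + 16 * s := rfl
  rw [h, h, h, h2]
  constructor
  · simp; omega
  · rw [pow_succ', ← Nat.div_div_eq_div_mul]
    congr 2
    omega

theorem dig_foldr (l : List ℕ) (hl : ∀ x ∈ l, x < 16) (t : ℕ) (ht : t < l.length) :
    dig (l.foldr (fun x s => Nat.add x (Nat.mul 16 s)) 0) t = l[t] := by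
  induction l generalizing t with
  | nil => simp at ht
  | cons x l ih =>
    rw [List.foldr_cons]
    cases t with
    | zero => exact (dig_add x _ 0 (hl x (by simp))).1
    | succ t =>
      rw [(dig_add x _ t (hl x (by simp))).2]
      exact ih (fun y hy => hl y (by simp [hy])) t (by simpa using ht)

theorem dig_codeOf (f : Fin 13 → Fin 13) (p : Fin 13) : dig (codeOf f) p = f p := by
  rw [codeOf, dig_foldr _ (by simp; omega) _ (by simp)]
  fin_cases p <;> rfl

theorem gen_seq : ∀ i, op i 0 1 = 2 ∧ op i 0 3 = 4 ∧ op i 1 4 = 5 ∧ op i 0 5 = 6 ∧ op i 1 6 = 7 ∧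
    op i 0 7 = 8 ∧ op i 1 8 = 9 ∧ op i 0 9 = 10 ∧ op i 1 10 = 11 ∧ op i 0 11 = 12 := by
  decide +kernel

/-- An injective homomorphism `Q i → Q j` exists only for `i = j`, and is then one of the listed
automorphisms. -/
theorem hom_classification (i j : Bool) (f : Fin 13 → Fin 13) (hf : Function.Injective f)
    (h : ∀ p q, p ≠ q → op j (f p) (f q) = f (op i p q)) : i = j ∧ codeOf f ∈ auts i := by
  obtain ⟨g2, g4, g5, g6, g7, g8, g9, g10, g11, g12⟩ := gen_seq i
  have hN : ∀ p q r : Fin 13, p ≠ q → op i p q = r → opN j (f p) (f q) = f r := by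
    intro p q r hpq hr
    rw [← op_val, h p q hpq, hr]
  have hcode : genCode j (f 0) (f 1) (f 3) = codeOf f := by
    rw [genCode, hN 0 1 2 (by decide) g2, hN 0 3 4 (by decide) g4]
    rw [hN 1 4 5 (by decide) g5, hN 0 5 6 (by decide) g6, hN 1 6 7 (by decide) g7,
      hN 0 7 8 (by decide) g8, hN 1 8 9 (by decide) g9, hN 0 9 10 (by decide) g10,
      hN 1 10 11 (by decide) g11, hN 0 11 12 (by decide) g12]
    rfl
  have hhom : isHom i j (codeOf f) = true := by
    rw [isHom, List.all_eq_true]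
    intro b hb
    obtain ⟨x, y, hxy, h1, h2, h3⟩ := of_mem_blocks i b hb
    rw [h1, h2, h3, dig_codeOf, dig_codeOf, dig_codeOf, hN x y _ hxy rfl]
    simp
  have hne : Nat.beq (f 0) (f 1) = false := by
    rw [beq_eq_false]
    intro h0
    exact absurd (hf (Fin.ext h0)) (by decide)
  have hc := homCheck_all i j (f 0) (f 0).2 (f 1) (f 1).2 (f 3) (f 3).2
  rw [homCheck, hcode, hhom, hne] at hc
  simp only [Bool.not_true, Bool.or_self, Bool.false_or, Bool.and_eq_true, beq_iff_eq,
    List.any_eq_true] at hc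
  obtain ⟨hij, c, hc, hcc⟩ := hc
  rw [Nat.beq_eq] at hcc
  exact ⟨hij, hcc ▸ hc⟩

/-! ### Classification of the Steiner triple systems of order 13 -/

/-- The collinearity relation of a Steiner triple system on `Fin 13`. -/
structure IsSTSRel (R : Fin 13 → Fin 13 → Fin 13 → Prop) : Prop where
  ne : ∀ {a b c}, R a b c → a ≠ b
  swap : ∀ {a b c}, R a b c → R b a c
  flip : ∀ {a b c}, R a b c → R a c b
  uniq : ∀ {a b c d}, R a b c → R a b d → c = d
  ex : ∀ a b, a ≠ b → ∃ c, R a b c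

/-- `lab` labels `k` points by `0, …, k - 1`, and the triples of the bit set `S`, which use only
these labels, name blocks of `R`. -/
structure Labels (R : Fin 13 → Fin 13 → Fin 13 → Prop) (S k : ℕ) (lab : ℕ → Fin 13) : Prop where
  inj : ∀ x < k, ∀ y < k, lab x = lab y → x = y
  bits : ∀ p < 13, ∀ q < 13, ∀ r < 13, S.testBit (pos p q r) = true →
    p < k ∧ q < k ∧ r < k ∧ R (lab p) (lab q) (lab r)

/-- `R` is isomorphic to `Q i` for some `i`. -/
def Classified (R : Fin 13 → Fin 13 → Fin 13 → Prop) : Prop :=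
  ∃ i, ∃ f : Fin 13 → Fin 13, ∀ p q, p ≠ q → R (f p) (f q) (f (op i p q))

theorem pos_eq (p q r : ℕ) : pos p q r = 169 * p + 13 * q + r := rfl

theorem testBit_addBlock (S p q r n : ℕ) : (addBlock S p q r).testBit n = true →
    S.testBit n = true ∨ n = pos p q r ∨ n = pos p r q ∨ n = pos q p r ∨ n = pos q r p ∨
      n = pos r p q ∨ n = pos r q p := by
  have h1 : ∀ x s, Nat.lor (Nat.shiftLeft 1 x) s = 2 ^ x ||| s := by
    intro x s
    change (1 <<< x) ||| s = _
    rw [Nat.one_shiftLeft]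
  simp only [addBlock, List.foldr_cons, List.foldr_nil, h1, Nat.testBit_or, Nat.testBit_two_pow,
    Bool.or_eq_true, decide_eq_true_eq]
  rintro (h | h | h | h | h | h | h) <;> simp [h]

theorem Labels.addBlock {R : Fin 13 → Fin 13 → Fin 13 → Prop} (hR : IsSTSRel R) {S k : ℕ}
    {lab : ℕ → Fin 13} (hL : Labels R S k lab) {p q r : ℕ} (hp : p < k) (hq : q < k) (hr : r < k)
    (hp' : p < 13) (hq' : q < 13) (hr' : r < 13) (h : R (lab p) (lab q) (lab r)) :
    Labels R (addBlock S p q r) k lab := by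
  refine ⟨hL.inj, ?_⟩
  intro x hx y hy z hz hb
  rcases testBit_addBlock S p q r _ hb with hb | hb
  · exact hL.bits x hx y hy z hz hb
  · have key : ∀ {a b c}, a < 13 → b < 13 → c < 13 → pos x y z = pos a b c →
        x = a ∧ y = b ∧ z = c := by
      intro a b c ha hb hc he
      simp only [pos_eq] at he
      omega
    rcases hb with hb | hb | hb | hb | hb | hb
    · obtain ⟨rfl, rfl, rfl⟩ := key hp' hq' hr' hb
      exact ⟨hp, hq, hr, h⟩
    · obtain ⟨rfl, rfl, rfl⟩ := key hp' hr' hq' hb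
      exact ⟨hp, hr, hq, hR.flip h⟩
    · obtain ⟨rfl, rfl, rfl⟩ := key hq' hp' hr' hb
      exact ⟨hq, hp, hr, hR.swap h⟩
    · obtain ⟨rfl, rfl, rfl⟩ := key hq' hr' hp' hb
      exact ⟨hq, hr, hp, hR.flip (hR.swap h)⟩
    · obtain ⟨rfl, rfl, rfl⟩ := key hr' hp' hq' hb
      exact ⟨hr, hp, hq, hR.swap (hR.flip h)⟩
    · obtain ⟨rfl, rfl, rfl⟩ := key hr' hq' hp' hb
      exact ⟨hr, hq, hp, hR.flip (hR.swap (hR.flip h))⟩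

theorem Labels.extend {R : Fin 13 → Fin 13 → Fin 13 → Prop} {S k : ℕ}
    {lab : ℕ → Fin 13} (hL : Labels R S k lab) {c : Fin 13} (hc : ∀ x < k, lab x ≠ c) :
    Labels R S (k + 1) (Function.update lab k c) := by
  have hne : ∀ x < k, Function.update lab k c x = lab x := fun x hx =>
    Function.update_of_ne (by omega) _ _
  constructor
  · intro x hx y hy he
    rcases Nat.lt_succ_iff_lt_or_eq.1 hx with hx | rfl <;>
      rcases Nat.lt_succ_iff_lt_or_eq.1 hy with hy | rfl
    · rw [hne x hx, hne y hy] at he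
      exact hL.inj x hx y hy he
    · rw [hne x hx, Function.update_self] at he
      exact absurd he (hc x hx)
    · rw [hne y hy, Function.update_self] at he
      exact absurd he.symm (hc y hy)
    · rfl
  · intro p hp q hq r hr hb
    obtain ⟨h1, h2, h3, h4⟩ := hL.bits p hp q hq r hr hb
    refine ⟨by omega, by omega, by omega, ?_⟩
    rwa [hne p h1, hne q h2, hne r h3]

theorem Labels.le {R : Fin 13 → Fin 13 → Fin 13 → Prop} {S k : ℕ}
    {lab : ℕ → Fin 13} (hL : Labels R S k lab) : k ≤ 13 := by
  have := Fintype.card_le_of_injective (fun x : Fin k => lab x)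
    (fun x y h => Fin.ext (hL.inj x x.2 y y.2 h))
  simpa using this

theorem Labels.exists_new {R : Fin 13 → Fin 13 → Fin 13 → Prop} {S k : ℕ}
    {lab : ℕ → Fin 13} (_ : Labels R S k lab) (hk : k < 13) : ∃ c, ∀ x < k, lab x ≠ c := by
  by_contra hcon
  push Not at hcon
  choose g hg hlab using hcon
  have := Fintype.card_le_of_injective (fun c : Fin 13 => (⟨g c, hg c⟩ : Fin k)) (by
    intro c d hcd
    have hgg : g c = g d := congrArg Fin.val hcd
    rw [← hlab c, ← hlab d, hgg])
  simp at this
  omega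

/-- The pruning in `cand` is sound: if `{p, q, r}` is a block, then no triple of `S` joins `p` to
`r` with another third point. -/
theorem row_ok {R : Fin 13 → Fin 13 → Fin 13 → Prop} (hR : IsSTSRel R) {S k : ℕ}
    {lab : ℕ → Fin 13} (hL : Labels R S k lab) {p q r : ℕ} (hq : q < k)
    (hp' : p < 13) (hr' : r < 13) (h : r < k → R (lab p) (lab q) (lab r)) :
    Nat.beq (Nat.land (row S p r) (Nat.xor 8191 (Nat.shiftLeft 1 q))) 0 = true := by
  rw [Nat.beq_eq]
  by_contra hne
  obtain ⟨t, ht⟩ := Nat.exists_testBit_of_ne_zero hne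
  have ht' : (((S >>> pos p r 0) &&& (2 ^ 13 - 1)) &&& ((2 ^ 13 - 1) ^^^ (1 <<< q))).testBit t
      = true := ht
  rw [Nat.testBit_and, Nat.testBit_and, Nat.testBit_shiftRight, Nat.testBit_two_pow_sub_one,
    Nat.one_shiftLeft, Nat.testBit_xor, Nat.testBit_two_pow, Nat.testBit_two_pow_sub_one] at ht'
  simp only [Bool.and_eq_true, decide_eq_true_eq] at ht'
  obtain ⟨⟨h1, h2⟩, h3⟩ := ht'
  have h4 : S.testBit (pos p r t) = true := by
    rw [← h1]
    congr 1
  obtain ⟨-, h5, h6, h7⟩ := hL.bits p hp' r hr' t h2 h4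
  have h8 : t = q := hL.inj t h6 q hq (hR.uniq h7 (hR.flip (h h5)))
  simp [h8, h8 ▸ h2] at h3

theorem forCand_sound {S k p q : ℕ} {f : ℕ → ℕ → ℕ → Option ℕ} (l : List ℕ) {s s' : ℕ}
    (h : forCand S k p q f l s = some s') : ∀ r ∈ l, cand S k p q r = true →
    ∃ t t', f (addBlock S p q r) (bif Nat.beq r k then Nat.add k 1 else k) t = some t' := by
  induction l generalizing s with
  | nil => simp
  | cons r0 l ih =>
    intro r hr hc
    rw [forCand] at h
    cases hc0 : cand S k p q r0 with
    | false =>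
      rw [hc0, cond_false] at h
      rcases List.mem_cons.1 hr with rfl | hr
      · rw [hc] at hc0; exact absurd hc0 (by simp)
      · exact ih h r hr hc
    | true =>
      rw [hc0, cond_true] at h
      cases hf : f (addBlock S p q r0) (bif Nat.beq r0 k then Nat.add k 1 else k) s with
      | none => rw [hf] at h; simp at h
      | some s1 =>
        rw [hf] at h
        rcases List.mem_cons.1 hr with rfl | hr
        · exact ⟨_, _, hf⟩
        · exact ih h r hr hc

theorem leaf_sound {R : Fin 13 → Fin 13 → Fin 13 → Prop} (hR : IsSTSRel R) {S k : ℕ}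
    {lab : ℕ → Fin 13} (hL : Labels R S k lab) (i : Bool) (c : ℕ)
    (h : leafCheck S i c = true) : Classified R := by
  refine ⟨i, fun p => lab (dig c p), fun p q hpq => ?_⟩
  apply collinear_induction i (fun p q r => R (lab (dig c p)) (lab (dig c q)) (lab (dig c r)))
    (fun _ _ _ => hR.swap) (fun _ _ _ => hR.flip) p q hpq
  rw [leafCheck, List.all_eq_true] at h
  have := h _ (mem_blocks i (blk i p q) (blk_lt i p q))
  simp only [Bool.and_eq_true, Nat.ble_eq] at this
  obtain ⟨⟨⟨h1, h2⟩, h3⟩, h4⟩ := this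
  exact (hL.bits _ (by omega) _ (by omega) _ (by omega) h4).2.2.2

/-- A successful search proves the classification for every system compatible with its start. -/
theorem dfs_sound {R : Fin 13 → Fin 13 → Fin 13 → Prop} (hR : IsSTSRel R) (n : ℕ) :
    ∀ (S k s s' : ℕ) (lab : ℕ → Fin 13), Labels R S k lab → dfs n S k s = some s' →
      Classified R := by
  induction n with
  | zero => intro S k s s' lab _ h; simp [dfs] at h
  | succ n ih =>
    intro S k s s' lab hL h
    rw [dfs] at h
    dsimp only at h
    generalize Nat.land s 255 = t at h
    generalize Nat.shiftRight s 8 = s1 at h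
    cases h200 : Nat.ble 200 t with
    | true =>
      rw [h200, cond_true] at h
      cases hleaf : leafCheck S (Nat.beq t 201) (Nat.land s1 4503599627370495) with
      | true => exact leaf_sound hR hL _ _ hleaf
      | false => rw [hleaf] at h; simp at h
    | false =>
      rw [h200, cond_false] at h
      have ht : t < 200 := by
        by_contra hcon
        rw [Nat.ble_eq_true_of_le (by omega)] at h200
        exact absurd h200 (by simp)
      have hp' : Nat.div t 13 < 16 := Nat.div_lt_of_lt_mul (by omega)
      have hq' : Nat.mod t 13 < 13 := Nat.mod_lt _ (by omega)
      generalize Nat.div t 13 = p at h hp'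
      generalize Nat.mod t 13 = q at h hq'
      cases hpq : Nat.beq p q with
      | true =>
        rw [hpq, cond_true] at h
        cases hk : Nat.blt k 13 with
        | false => rw [hk] at h; simp at h
        | true =>
          rw [hk, cond_true] at h
          rw [Nat.blt_eq] at hk
          obtain ⟨c, hc⟩ := hL.exists_new hk
          exact ih _ _ _ _ _ (hL.extend hc) h
      | false =>
        rw [hpq, cond_false] at h
        have hpq' : p ≠ q := by
          rintro rfl
          simp at hpq
        cases hlt : (Nat.blt p k && Nat.blt q k) with
        | false => rw [hlt] at h; simp at h
        | true =>
          rw [hlt, cond_true] at h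
          simp only [Bool.and_eq_true, Nat.blt_eq] at hlt
          obtain ⟨hp, hq⟩ := hlt
          have hk := hL.le
          have hp13 : p < 13 := by omega
          have hne : lab p ≠ lab q := fun he => hpq' (hL.inj p hp q hq he)
          obtain ⟨c, hc⟩ := hR.ex _ _ hne
          have main : ∀ r < 13, r ≤ k → r ≠ p → r ≠ q → (r < k → lab r = c) →
              ∃ t t', dfs n (addBlock S p q r) (bif Nat.beq r k then Nat.add k 1 else k) t
                = some t' := by
            intro r hr hrk hrp hrq hrc
            apply forCand_sound _ h r
            · simp only [List.mem_cons, List.not_mem_nil, or_false]; omega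
            · have h1 := row_ok hR hL hq hp13 hr (fun hlt => (hrc hlt).symm ▸ hc)
              have h2 := row_ok hR hL hp hq' hr (fun hlt => (hrc hlt).symm ▸ hR.swap hc)
              rw [cand, h1, h2, Nat.ble_eq_true_of_le hrk,
                beq_eq_false.2 hrp, beq_eq_false.2 hrq]
              rfl
          by_cases hold : ∃ r < k, lab r = c
          · obtain ⟨r, hr, rfl⟩ := hold
            obtain ⟨t, t', ht⟩ := main r (by omega) hr.le
              (by rintro rfl; exact hR.ne (hR.flip hc) rfl)
              (by rintro rfl; exact hR.ne (hR.flip (hR.swap hc)) rfl) (fun _ => rfl)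
            rw [beq_eq_false.2 (by omega), cond_false] at ht
            exact ih _ _ _ _ _ (hL.addBlock hR hp hq hr hp13 hq' (by omega) hc) ht
          · have hnew : ∀ x < k, lab x ≠ c := fun x hx he => hold ⟨x, hx, he⟩
            have hL' := hL.extend hnew
            have hk' := hL'.le
            obtain ⟨t, t', ht⟩ := main k (by omega) le_rfl (by omega) (by omega) (by omega)
            rw [Nat.beq_refl, cond_true] at ht
            refine ih _ _ _ _ _ (hL'.addBlock hR (by omega : p < k + 1) (by omega : q < k + 1)
              (by omega : k < k + 1) hp13 hq' (by omega) ?_) ht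
            rw [Function.update_of_ne (by omega), Function.update_of_ne (by omega),
              Function.update_self]
            exact hc

/-- Every Steiner triple system of order 13 is isomorphic to `Q false` or `Q true`. -/
theorem classified {R : Fin 13 → Fin 13 → Fin 13 → Prop} (hR : IsSTSRel R) : Classified R := by
  obtain ⟨s', hs⟩ := Option.isSome_iff_exists.1 dfs_succeeds
  refine dfs_sound hR 50 0 2 cert s' (fun x => if x = 0 then 0 else 1) ⟨?_, ?_⟩ hs
  · intro x hx y hy h
    interval_cases x <;> interval_cases y <;> simp_all
  · intro p _ q _ r _ h
    simp at h

/-! ### Steiner loops -/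

/-- A Steiner loop with neutral element `e`. Adding a neutral element to a Steiner triple system,
with `a · b` the third point of the triple through `a ≠ b` and `a · a = e`, gives such a loop. -/
structure IsSteinerLoop {L : Type*} (m : L → L → L) (e : L) : Prop where
  one_mul : ∀ x, m e x = x
  comm : ∀ x y, m x y = m y x
  self : ∀ x, m x x = e
  cancel : ∀ x y, m x (m x y) = y

/-- The elements that correspond to Veblen points, together with the neutral element. -/
def Central {L : Type*} (m : L → L → L) (z : L) : Prop := ∀ x y, m (m z x) (m z y) = m x y

/-- Isomorphism of binary operations. -/
def LIso {L L' : Type*} (m : L → L → L) (m' : L' → L' → L') : Prop :=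
  ∃ f : L ≃ L', ∀ x y, f (m x y) = m' (f x) (f y)

theorem LIso.symm {L L' : Type*} {m : L → L → L} {m' : L' → L' → L'} (h : LIso m m') :
    LIso m' m := by
  obtain ⟨f, hf⟩ := h
  exact ⟨f.symm, fun x y => by rw [Equiv.symm_apply_eq, hf]; simp⟩

theorem LIso.trans {L L' N : Type*} {m : L → L → L} {m' : L' → L' → L'}
    {n : N → N → N} (h : LIso m m') (h' : LIso m' n) : LIso m n := by
  obtain ⟨f, hf⟩ := h
  obtain ⟨g, hg⟩ := h'
  exact ⟨f.trans g, fun x y => by simp [hf, hg]⟩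

namespace IsSteinerLoop

variable {L : Type*} {m : L → L → L} {e : L}

theorem mul_one (h : IsSteinerLoop m e) (x : L) : m x e = x := by rw [h.comm, h.one_mul]

theorem eq_of_mul (h : IsSteinerLoop m e) {x y z : L} (hxy : m x y = z) : m x z = y := by
  rw [← hxy, h.cancel]

theorem mul_left_inj (h : IsSteinerLoop m e) {x y z : L} (hxy : m x y = m x z) : y = z := by
  rw [← h.cancel x y, hxy, h.cancel]

theorem eq_of_mul_eq_one (h : IsSteinerLoop m e) {x y : L} (hxy : m x y = e) : x = y :=
  (h.mul_left_inj (hxy.trans (h.self x).symm)).symm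

theorem transport (h : IsSteinerLoop m e) {L' : Type*} {m' : L' → L' → L'} (f : L ≃ L')
    (hf : ∀ x y, f (m x y) = m' (f x) (f y)) : IsSteinerLoop m' (f e) := by
  constructor
  · intro x
    obtain ⟨x, rfl⟩ := f.surjective x
    rw [← hf, h.one_mul]
  · intro x y
    obtain ⟨x, rfl⟩ := f.surjective x
    obtain ⟨y, rfl⟩ := f.surjective y
    rw [← hf, ← hf, h.comm]
  · intro x
    obtain ⟨x, rfl⟩ := f.surjective x
    rw [← hf, h.self]
  · intro x y
    obtain ⟨x, rfl⟩ := f.surjective x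
    obtain ⟨y, rfl⟩ := f.surjective y
    rw [← hf, ← hf, h.cancel]

theorem map_one (h : IsSteinerLoop m e) {L' : Type*} {m' : L' → L' → L'} {e' : L'}
    (h' : IsSteinerLoop m' e') (f : L ≃ L') (hf : ∀ x y, f (m x y) = m' (f x) (f y)) :
    f e = e' := by
  rw [← h.self e, hf, h'.self]

theorem central_assoc (h : IsSteinerLoop m e) {z : L} (hz : Central m z) (x y : L) :
    m (m z x) y = m z (m x y) := by
  have h1 := hz x (m x y)
  rw [h.cancel] at h1
  have h2 := h.eq_of_mul h1
  exact h2

end IsSteinerLoop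

theorem Central.map {L L' : Type*} {m : L → L → L} {m' : L' → L' → L'} {z : L}
    (hz : Central m z) (f : L ≃ L') (hf : ∀ x y, f (m x y) = m' (f x) (f y)) :
    Central m' (f z) := by
  intro x y
  obtain ⟨x, rfl⟩ := f.surjective x
  obtain ⟨y, rfl⟩ := f.surjective y
  rw [← hf, ← hf, ← hf, ← hf, hz]

/-! ### Steiner triple systems as Steiner loops -/

/-- `m` is the Steiner loop of the Steiner triple system `T`, with `none` as neutral element. -/
structure IsLoopOf {α : Type*} [DecidableEq α] (T : Set (Finset α))
    (m : Option α → Option α → Option α) : Prop where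
  loop : IsSteinerLoop m none
  mem : ∀ a b c : α, ({a, b, c} : Finset α) ∈ T ↔ a ≠ b ∧ m (some a) (some b) = some c
  sts : IsSTS T

section

variable {α : Type*} [DecidableEq α]

theorem card_three_iff {a b c : α} :
    ({a, b, c} : Finset α).card = 3 ↔ a ≠ b ∧ a ≠ c ∧ b ≠ c := by
  constructor
  · intro h
    refine ⟨?_, ?_, ?_⟩ <;> rintro rfl
    · have := Finset.card_le_two (a := a) (b := c)
      simp at h
      omega
    · have := Finset.card_le_two (a := b) (b := a)
      simp at h
      omega
    · have := Finset.card_le_two (a := a) (b := b)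
      simp at h
      omega
  · rintro ⟨h1, h2, h3⟩
    exact Finset.card_eq_three.2 ⟨a, b, c, h1, h2, h3, rfl⟩

theorem ne_of_mem {T : Set (Finset α)} (hT : IsSTS T) {a b c : α}
    (h : ({a, b, c} : Finset α) ∈ T) : a ≠ b ∧ a ≠ c ∧ b ≠ c :=
  card_three_iff.1 (hT.1 _ h)

theorem exists_third {T : Set (Finset α)} (hT : IsSTS T) {a b : α} (hab : a ≠ b) :
    ∃ c, ({a, b, c} : Finset α) ∈ T := by
  obtain ⟨t, ⟨ht, hat, hbt⟩, -⟩ := hT.2 a b hab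
  obtain ⟨x, y, z, hxy, hxz, hyz, rfl⟩ := Finset.card_eq_three.1 (hT.1 t ht)
  simp only [Finset.mem_insert, Finset.mem_singleton] at hat hbt
  rcases hat with rfl | rfl | rfl <;> rcases hbt with rfl | rfl | rfl
  · exact absurd rfl hab
  · exact ⟨_, ht⟩
  · exact ⟨y, by convert ht using 1; ext; simp; tauto⟩
  · exact ⟨z, by convert ht using 1; ext; simp; tauto⟩
  · exact absurd rfl hab
  · exact ⟨x, by convert ht using 1; ext; simp; tauto⟩
  · exact ⟨y, by convert ht using 1; ext; simp; tauto⟩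
  · exact ⟨x, by convert ht using 1; ext; simp; tauto⟩
  · exact absurd rfl hab

theorem third_unique {T : Set (Finset α)} (hT : IsSTS T) {a b c d : α}
    (hc : ({a, b, c} : Finset α) ∈ T) (hd : ({a, b, d} : Finset α) ∈ T) : c = d := by
  obtain ⟨hab, hac, hbc⟩ := ne_of_mem hT hc
  have h := (hT.2 a b hab).unique ⟨hc, by simp, by simp⟩ ⟨hd, by simp, by simp⟩
  have : c ∈ ({a, b, d} : Finset α) := by rw [← h]; simp
  simp only [Finset.mem_insert, Finset.mem_singleton] at this
  rcases this with h | h | h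
  · exact absurd h.symm hac
  · exact absurd h.symm hbc
  · exact h

theorem swap12 (a b c : α) : ({a, b, c} : Finset α) = {b, a, c} := Finset.insert_comm _ _ _

theorem swap23 (a b c : α) : ({a, b, c} : Finset α) = {a, c, b} := by
  rw [Finset.pair_comm]

/-- Every Steiner triple system has a Steiner loop. -/
theorem exists_loop {T : Set (Finset α)} (hT : IsSTS T) : ∃ m, IsLoopOf T m := by
  classical
  have hex : ∀ a b : α, ∃ c, a ≠ b → ({a, b, c} : Finset α) ∈ T := by
    intro a b
    by_cases hab : a = b
    · exact ⟨a, fun h => absurd hab h⟩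
    · obtain ⟨c, hc⟩ := exists_third hT hab
      exact ⟨c, fun _ => hc⟩
  choose t ht using hex
  have huniq : ∀ a b c, ({a, b, c} : Finset α) ∈ T → t a b = c := fun a b c h =>
    third_unique hT (ht a b (ne_of_mem hT h).1) h
  let m : Option α → Option α → Option α := fun x y =>
    match x, y with
    | none, y => y
    | some a, none => some a
    | some a, some b => if a = b then none else some (t a b)
  have hm : ∀ a b, m (some a) (some b) = if a = b then none else some (t a b) := fun _ _ => rfl
  refine ⟨m, ⟨fun _ => rfl, ?_, ?_, ?_⟩, ?_, hT⟩
  · rintro (_ | a) (_ | b)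
    · rfl
    · rfl
    · rfl
    · rw [hm, hm]
      by_cases hab : a = b
      · simp [hab]
      · rw [if_neg hab, if_neg (Ne.symm hab), huniq b a (t a b)]
        rw [swap12]
        exact ht a b hab
  · rintro (_ | a)
    · rfl
    · simp [hm]
  · rintro (_ | a) (_ | b)
    · rfl
    · rfl
    · rw [show m (some a) none = some a from rfl]
      simp [hm]
    · by_cases hab : a = b
      · simp only [hm, hab, if_true]
        rfl
      · have h1 := ht a b hab
        have h2 := (ne_of_mem hT h1).2.1
        rw [hm a b, if_neg hab, hm, if_neg h2, huniq a (t a b) b]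
        rw [swap23]
        exact h1
  · intro a b c
    constructor
    · intro h
      have hab := (ne_of_mem hT h).1
      exact ⟨hab, by rw [hm, if_neg hab, huniq a b c h]⟩
    · rintro ⟨hab, h⟩
      rw [hm, if_neg hab, Option.some.injEq] at h
      rw [← h]
      exact ht a b hab

/-- Every Steiner loop comes from a Steiner triple system. -/
theorem exists_sts {m : Option α → Option α → Option α} (hm : IsSteinerLoop m none) :
    ∃ T, IsLoopOf T m := by
  let T : Set (Finset α) :=
    {s | ∃ a b c, s = {a, b, c} ∧ a ≠ b ∧ m (some a) (some b) = some c}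
  -- distinctness and total symmetry of the relation `a · b = c`
  have hne : ∀ {a b c : α}, a ≠ b → m (some a) (some b) = some c → a ≠ c ∧ b ≠ c := by
    intro a b c _ h
    refine ⟨?_, ?_⟩
    · rintro rfl
      have := hm.mul_left_inj (h.trans (hm.mul_one _).symm)
      simp at this
    · rintro rfl
      rw [hm.comm] at h
      have := hm.mul_left_inj (h.trans (hm.mul_one _).symm)
      simp at this
  have hmem : ∀ a b c : α, ({a, b, c} : Finset α) ∈ T ↔ a ≠ b ∧ m (some a) (some b) = some c := by
    intro a b c
    constructor
    · rintro ⟨x, y, z, hs, hxy, h⟩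
      obtain ⟨hxz, hyz⟩ := hne hxy h
      have hc : ({a, b, c} : Finset α).card = 3 :=
        hs ▸ card_three_iff.2 ⟨hxy, hxz, hyz⟩
      obtain ⟨hab, hac, hbc⟩ := card_three_iff.1 hc
      refine ⟨hab, ?_⟩
      have ha : a ∈ ({x, y, z} : Finset α) := by rw [← hs]; simp
      have hb : b ∈ ({x, y, z} : Finset α) := by rw [← hs]; simp
      have hc : c ∈ ({x, y, z} : Finset α) := by rw [← hs]; simp
      have h1 : m (some y) (some x) = some z := by rw [hm.comm, h]
      have h2 := hm.eq_of_mul h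
      have h3 := hm.eq_of_mul h1
      have h4 : m (some z) (some x) = some y := by rw [hm.comm, h2]
      have h5 : m (some z) (some y) = some x := by rw [hm.comm, h3]
      simp only [Finset.mem_insert, Finset.mem_singleton] at ha hb hc
      rcases ha with rfl | rfl | rfl <;> rcases hb with rfl | rfl | rfl <;>
        rcases hc with rfl | rfl | rfl <;> first | assumption | contradiction
    · rintro ⟨hab, h⟩
      exact ⟨a, b, c, rfl, hab, h⟩
  refine ⟨T, hm, hmem, ?_, ?_⟩
  · rintro s ⟨a, b, c, rfl, hab, h⟩
    exact card_three_iff.2 ⟨hab, hne hab h⟩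
  · intro a b hab
    have hsome : ∃ c, m (some a) (some b) = some c := by
      cases h : m (some a) (some b) with
      | none => exact absurd (Option.some.inj (hm.eq_of_mul_eq_one h)) hab
      | some c => exact ⟨c, rfl⟩
    obtain ⟨c, hc⟩ := hsome
    refine ⟨{a, b, c}, ⟨(hmem a b c).2 ⟨hab, hc⟩, by simp, by simp⟩, ?_⟩
    rintro s ⟨⟨x, y, z, rfl, hxy, h⟩, has, hbs⟩
    have hT : ({x, y, z} : Finset α) ∈ T := (hmem x y z).2 ⟨hxy, h⟩
    have key : ∀ d, ({a, b, d} : Finset α) ∈ T → ({a, b, d} : Finset α) = {a, b, c} := by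
      intro d hd
      have := ((hmem a b d).1 hd).2
      rw [hc, Option.some.injEq] at this
      rw [this]
    simp only [Finset.mem_insert, Finset.mem_singleton] at has hbs
    rcases has with rfl | rfl | rfl <;> rcases hbs with rfl | rfl | rfl <;>
      first
      | exact absurd rfl hab
      | exact key _ hT
      | (rw [swap12] at hT ⊢; exact key _ hT)
      | (rw [swap23] at hT ⊢; exact key _ hT)
      | (rw [swap12, swap23] at hT ⊢; exact key _ hT)
      | (rw [swap23, swap12] at hT ⊢; exact key _ hT)
      | (rw [swap12, swap23, swap12] at hT ⊢; exact key _ hT)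

theorem IsLoopOf.veblen_iff {T : Set (Finset α)} {m : Option α → Option α → Option α}
    (h : IsLoopOf T m) (x : α) : IsVeblen T x ↔ Central m (some x) := by
  have hm := h.loop
  constructor
  · intro hv
    have hσ : ∀ y, m (some x) (m (some x) y) = y := hm.cancel _
    -- the case in which Veblen's condition is not degenerate
    have key : ∀ a c : α, a ≠ x → c ≠ x → a ≠ c → m (some x) (some a) ≠ some c →
        m (m (some x) (some a)) (m (some x) (some c)) = m (some a) (some c) := by
      intro a c hax hcx hac hne
      obtain ⟨b, hb⟩ : ∃ b, m (some x) (some a) = some b := by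
        cases h : m (some x) (some a) with
        | none => exact absurd (Option.some.inj (hm.eq_of_mul_eq_one h)).symm hax
        | some c => exact ⟨c, rfl⟩
      obtain ⟨d, hd⟩ : ∃ d, m (some x) (some c) = some d := by
        cases h : m (some x) (some c) with
        | none => exact absurd (Option.some.inj (hm.eq_of_mul_eq_one h)).symm hcx
        | some c => exact ⟨c, rfl⟩
      obtain ⟨t, ht⟩ : ∃ t, m (some a) (some c) = some t := by
        cases h : m (some a) (some c) with
        | none => exact absurd (Option.some.inj (hm.eq_of_mul_eq_one h)) hac
        | some c => exact ⟨c, rfl⟩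
      have h1 := (h.mem x a b).2 ⟨hax.symm, hb⟩
      have h2 := (h.mem x c d).2 ⟨hcx.symm, hd⟩
      have h3 := (h.mem a c t).2 ⟨hac, ht⟩
      rw [swap23, swap12] at h3
      have h4 := hv a b c d t h1 h2 h3
      rw [swap12, swap23] at h4
      rw [hb, hd, ht]
      exact ((h.mem b d t).1 h4).2
    intro y w
    rcases y with _ | a
    · rw [hm.mul_one, hσ, hm.one_mul]
    rcases w with _ | c
    · rw [hm.mul_one, hm.mul_one, hm.comm, hσ]
    by_cases hax : a = x
    · rw [hax, hm.self, hm.one_mul]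
    by_cases hcx : c = x
    · rw [hcx, hm.self, hm.mul_one, hm.comm]
    by_cases hac : a = c
    · rw [hac, hm.self, hm.self]
    by_cases hne : m (some x) (some a) = some c
    · rw [hne, ← hm.eq_of_mul hne]
      exact hm.comm _ _
    · exact key a c hax hcx hac hne
  · intro hz a b c d t h1 h2 h3
    obtain ⟨-, hb⟩ := (h.mem _ _ _).1 h1
    obtain ⟨-, hd⟩ := (h.mem _ _ _).1 h2
    rw [swap12, swap23] at h3
    obtain ⟨hac, ht⟩ := (h.mem _ _ _).1 h3
    have := hz (some a) (some c)
    rw [hb, hd, ht] at this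
    rw [swap12, swap23]
    refine (h.mem _ _ _).2 ⟨?_, this⟩
    rintro rfl
    exact hac (Option.some.inj (hm.mul_left_inj (hb.trans hd.symm)))

theorem IsLoopOf.iso_iff {β : Type*} [DecidableEq β] {T : Set (Finset α)} {T' : Set (Finset β)}
    {m : Option α → Option α → Option α} {m' : Option β → Option β → Option β}
    (h : IsLoopOf T m) (h' : IsLoopOf T' m') : STSIso T T' ↔ LIso m m' := by
  constructor
  · rintro ⟨f, hf⟩
    have himg : ∀ a b c : α, ({a, b, c} : Finset α).image f = {f a, f b, f c} := by
      intro a b c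
      simp [Finset.image_insert]
    refine ⟨f.optionCongr, ?_⟩
    rintro (_ | a) (_ | b)
    · simp [h.loop.self, h'.loop.self]
    · simp [h.loop.one_mul, h'.loop.one_mul]
    · simp [h.loop.mul_one, h'.loop.mul_one]
    · by_cases hab : a = b
      · simp [hab, h.loop.self, h'.loop.self]
      · obtain ⟨c, hc⟩ := exists_third h.sts hab
        have h1 := (h.mem a b c).1 hc
        rw [hf, himg, h'.mem] at hc
        simp [h1.2, hc.2]
  · rintro ⟨f, hf⟩
    have hnone := h.loop.map_one h'.loop f hf
    let g : α ≃ β := f.removeNone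
    have hg : ∀ a, some (g a) = f (some a) := by
      intro a
      apply Equiv.removeNone_some
      cases hfa : f (some a) with
      | none => exact absurd (f.injective (hfa.trans hnone.symm)) (by simp)
      | some b => exact ⟨b, rfl⟩
    have himg : ∀ a b c : α, ({a, b, c} : Finset α).image g = {g a, g b, g c} := by
      intro a b c
      simp [Finset.image_insert]
    refine ⟨g, fun t => ?_⟩
    have key : ∀ a b c : α, ({a, b, c} : Finset α) ∈ T ↔
        ({a, b, c} : Finset α).image g ∈ T' := by
      intro a b c
      rw [himg, h.mem, h'.mem, hg, hg, hg, ← hf, f.injective.eq_iff, g.injective.ne_iff]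
    constructor
    · intro ht
      obtain ⟨a, b, c, -, -, -, rfl⟩ := Finset.card_eq_three.1 (h.sts.1 t ht)
      exact (key a b c).1 ht
    · intro ht
      have hcard := h'.sts.1 _ ht
      rw [Finset.card_image_of_injective _ g.injective] at hcard
      obtain ⟨a, b, c, -, -, -, rfl⟩ := Finset.card_eq_three.1 hcard
      exact (key a b c).2 ht

end

/-! ### Central extensions of the systems of order 13 -/

/-- The Steiner loop of `Q i`, with neutral element `none`. -/
def quo (i : Bool) : Option (Fin 13) → Option (Fin 13) → Option (Fin 13)
  | none, y => y
  | some p, none => some p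
  | some p, some q => if p = q then none else some (op i p q)

/-- The cocycle on the Steiner loop of `Q i` given by the bits of `F`, one for each block. -/
def coc (i : Bool) (F : ℕ) : Option (Fin 13) → Option (Fin 13) → Bool
  | some p, some q => if p = q then false else F.testBit (blk i p q)
  | _, _ => false

/-- The central extension of the Steiner loop of `Q i` by the group of order two with cocycle
`F`. Its neutral element is `(none, false)`. -/
def ext (i : Bool) (F : ℕ) (x y : Option (Fin 13) × Bool) : Option (Fin 13) × Bool :=
  (quo i x.1 y.1, (x.2 ^^ y.2) ^^ coc i F x.1 y.1)

theorem quo_loop (i : Bool) : IsSteinerLoop (quo i) none := by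
  refine ⟨fun _ => rfl, ?_, ?_, ?_⟩ <;> revert i <;> decide +kernel

/-- The systems of order 13 have no Veblen points. -/
theorem quo_not_central : ∀ i k, ∃ x y,
    quo i (quo i (some k) x) (quo i (some k) y) ≠ quo i x y := by decide +kernel

theorem coc_comm (i : Bool) (F : ℕ) (x y : Option (Fin 13)) : coc i F x y = coc i F y x := by
  rcases x with _ | p <;> rcases y with _ | q <;> try rfl
  simp only [coc, blk_comm i p q, eq_comm (a := p)]

theorem coc_self (i : Bool) (F : ℕ) (x : Option (Fin 13)) : coc i F x x = false := by
  rcases x with _ | p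
  · rfl
  · simp [coc]

theorem coc_quo (i : Bool) (F : ℕ) (x y : Option (Fin 13)) :
    coc i F x (quo i x y) = coc i F x y := by
  rcases x with _ | p <;> rcases y with _ | q
  · rfl
  · rfl
  · simp [coc, quo]
  · by_cases hpq : p = q
    · simp [coc, quo, hpq]
    · simp only [coc, quo, if_neg hpq]
      rw [if_neg (op_ne i p q hpq), blk_op i p q hpq]

theorem ext_loop (i : Bool) (F : ℕ) : IsSteinerLoop (ext i F) (none, false) := by
  have hq := quo_loop i
  refine ⟨?_, ?_, ?_, ?_⟩
  · rintro ⟨x, a⟩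
    rcases x with _ | p <;> simp [ext, quo, coc]
  · rintro ⟨x, a⟩ ⟨y, b⟩
    simp only [ext]
    rw [hq.comm x y, coc_comm i F x y, Bool.xor_comm a b]
  · rintro ⟨x, a⟩
    simp [ext, hq.self, coc_self]
  · rintro ⟨x, a⟩ ⟨y, b⟩
    simp only [ext]
    rw [hq.cancel, coc_quo]
    cases a <;> cases b <;> cases coc i F x y <;> rfl

theorem ext_none (i : Bool) (F : ℕ) (a : Bool) (x : Option (Fin 13)) (b : Bool) :
    ext i F (none, a) (x, b) = (x, a ^^ b) := by
  rcases x with _ | p <;> simp [ext, quo, coc]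

theorem ext_central (i : Bool) (F : ℕ) (a : Bool) : Central (ext i F) (none, a) := by
  rintro ⟨x, b⟩ ⟨y, c⟩
  rw [ext_none, ext_none]
  simp only [ext]
  cases a <;> cases b <;> cases c <;> rfl

theorem ext_central_iff (i : Bool) (F : ℕ) (z : Option (Fin 13) × Bool) :
    Central (ext i F) z ↔ z.1 = none := by
  obtain ⟨z, a⟩ := z
  constructor
  · intro hz
    rcases z with _ | k
    · rfl
    · obtain ⟨x, y, hxy⟩ := quo_not_central i k
      exact absurd (congrArg Prod.fst (hz (x, false) (y, false))) hxy
  · rintro (rfl : z = none)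
    exact ext_central i F a

/-! ### Isomorphisms between extensions -/

theorem testBit_pull (i : Bool) (c G : ℕ) (f : Fin 13 → Fin 13) (hc : ∀ p : Fin 13, dig c p = f p)
    (hne : ∀ p q, p ≠ q → f p ≠ f q) (hf : ∀ p q, p ≠ q → op i (f p) (f q) = f (op i p q))
    (p q : Fin 13) (hpq : p ≠ q) :
    (pull i c G).testBit (blk i p q) = G.testBit (blk i (f p) (f q)) := by
  obtain ⟨h1, h2, -⟩ := block_spec i (blk i p q) (blk_lt i p q)
  refine (collinear_induction i (fun x y r => (f x ≠ f y ∧ op i (f x) (f y) = f r) ∧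
    (pull i c G).testBit (blk i p q) = G.testBit (blk i (f x) (f y)))
    ?_ ?_ p q hpq ⟨⟨hne _ _ h1, ?_⟩, ?_⟩).2
  · rintro x y r ⟨⟨h1, h2⟩, h3⟩
    exact ⟨⟨h1.symm, by rw [op_comm, h2]⟩, by rw [h3, blk_comm]⟩
  · rintro x y r ⟨⟨h1, h2⟩, h3⟩
    refine ⟨⟨?_, ?_⟩, ?_⟩
    · rw [← h2]; exact op_ne i _ _ h1
    · rw [← h2, op_op i _ _ h1]
    · rw [h3, ← h2, blk_op i _ _ h1]
  · rw [hf _ _ h1, h2]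
  · rw [pull, testBit_ofB _ (blk_lt i p q), hc, hc]
    rfl

theorem testBit_cob (i : Bool) (h : ℕ) (p q : Fin 13) (hpq : p ≠ q) :
    (cob i h).testBit (blk i p q) =
      (h.testBit p ^^ (h.testBit q ^^ h.testBit (op i p q))) := by
  refine collinear_induction i (fun x y r => (cob i h).testBit (blk i p q) =
      (h.testBit x ^^ (h.testBit y ^^ h.testBit r))) ?_ ?_ p q hpq ?_
  · intro x y r h1
    rw [h1, Bool.xor_left_comm]
  · intro x y r h1
    rw [h1, Bool.xor_comm (h.testBit y)]
  · rw [cob, testBit_ofB _ (blk_lt i p q)]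

/-- Cocycles that differ by an automorphism of the base and a coboundary give isomorphic
extensions. -/
theorem liso_of_eq (i : Bool) (c : ℕ) (hc : c ∈ auts i) (F G h : ℕ)
    (hF : F = cob i h ^^^ pull i c G) : LIso (ext i F) (ext i G) := by
  have hlt : ∀ p : Fin 13, dig c p < 13 := fun p => by
    obtain ⟨q, hq⟩ := exists_ne p
    exact (auts_hom i c hc p q hq.symm).1
  let f : Fin 13 → Fin 13 := fun p => ⟨dig c p, hlt p⟩
  have hne : ∀ p q, p ≠ q → f p ≠ f q := fun p q hpq he =>
    (auts_hom i c hc p q hpq).2.1 (congrArg Fin.val he)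
  have hinj : Function.Injective f := fun p q he => by
    by_contra hpq
    exact hne p q hpq he
  have hf : ∀ p q, p ≠ q → op i (f p) (f q) = f (op i p q) := fun p q hpq =>
    Fin.ext ((op_val i _ _).trans (auts_hom i c hc p q hpq).2.2)
  let H : Option (Fin 13) → Bool := fun x => x.elim false fun p => h.testBit p
  let g : Option (Fin 13) × Bool → Option (Fin 13) × Bool := fun x => (x.1.map f, x.2 ^^ H x.1)
  have hg : Function.Injective g := by
    rintro ⟨x, a⟩ ⟨y, b⟩ he
    have h1 : x = y := Option.map_injective hinj (congrArg Prod.fst he)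
    subst h1
    have h2 : (a ^^ H x) = (b ^^ H x) := congrArg Prod.snd he
    rw [Bool.xor_right_inj.mp (by rwa [Bool.xor_comm (H x), Bool.xor_comm (H x)] :
      (H x ^^ a) = (H x ^^ b))]
  refine ⟨Equiv.ofBijective g (Finite.injective_iff_bijective.1 hg), ?_⟩
  rintro ⟨x, a⟩ ⟨y, b⟩
  change g _ = ext i G (g _) (g _)
  rcases x with _ | p
  · rw [ext_none]
    change _ = ext i G (none, a ^^ false) _
    rw [ext_none]
    simp [g]
  rcases y with _ | q
  · rw [(ext_loop i F).comm, ext_none, (ext_loop i G).comm]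
    change _ = ext i G (none, b ^^ false) _
    rw [ext_none]
    simp [g]
  by_cases hpq : p = q
  · subst hpq
    cases a <;> cases b <;> cases hh : h.testBit p <;> simp [g, H, ext, quo, coc, hh]
  · have hb : F.testBit (blk i p q) = ((h.testBit p ^^ (h.testBit q ^^ h.testBit (op i p q))) ^^
        G.testBit (blk i (f p) (f q))) := by
      rw [hF, Nat.testBit_xor, testBit_cob i h p q hpq,
        testBit_pull i c G f (fun _ => rfl) hne hf p q hpq]
    have hpq' := hne p q hpq
    simp only [g, H, ext, quo, coc, Option.map_some, if_neg hpq, if_neg hpq', Option.elim_some,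
      hf p q hpq, hb]
    congr 1
    cases h.testBit p <;> cases h.testBit q <;> cases h.testBit (op i p q) <;>
      cases a <;> cases b <;> simp

/-- Isomorphic extensions have isomorphic bases, and their cocycles differ by an automorphism of
the base and a coboundary. -/
theorem eq_of_liso (i j : Bool) (F G : ℕ) (hF : F < 2 ^ 26) (h : LIso (ext i F) (ext j G)) :
    i = j ∧ ∃ c ∈ auts i, ∃ h < 2 ^ 13, F = cob i h ^^^ pull i c G := by
  obtain ⟨g, hg⟩ := h
  have h0 := (ext_loop i F).map_one (ext_loop j G) g hg
  have h1 : g (none, true) = (none, true) := by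
    have hz := (ext_central_iff j G _).1 ((ext_central i F true).map g hg)
    have hne : g (none, true) ≠ (none, false) := fun he => by
      have := g.injective (he.trans h0.symm)
      simp at this
    generalize g (none, true) = w at hz hne
    obtain ⟨x, a⟩ := w
    obtain rfl : x = none := hz
    cases a
    · exact absurd rfl hne
    · rfl
  have hnone : ∀ a, g (none, a) = (none, a) := by
    intro a
    cases a <;> assumption
  have hsome : ∀ p, ∃ q b, g (some p, false) = (some q, b) := by
    intro p
    cases he : g (some p, false) with
    | mk x b =>
      cases x with
      | none => exact absurd (g.injective (he.trans (hnone b).symm)) (by simp)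
      | some q => exact ⟨q, b, rfl⟩
  choose f u hu using hsome
  have hfu : ∀ p a, g (some p, a) = (some (f p), a ^^ u p) := by
    intro p a
    have := hg (none, a) (some p, false)
    rwa [ext_none, hnone, hu, ext_none, Bool.xor_false] at this
  have hinj : Function.Injective f := by
    intro p q he
    have h2 : g (some p, u p) = g (some q, u q) := by simp [hfu, he]
    have h3 := g.injective h2
    simp only [Prod.mk.injEq, Option.some.injEq] at h3
    exact h3.1
  have hmul : ∀ p q, p ≠ q → op j (f p) (f q) = f (op i p q) ∧
      (F.testBit (blk i p q) ^^ u (op i p q)) =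
        ((u p ^^ u q) ^^ G.testBit (blk j (f p) (f q))) := by
    intro p q hpq
    have hpq' : f p ≠ f q := fun he => hpq (hinj he)
    have h2 := hg (some p, false) (some q, false)
    simp only [ext, quo, coc, if_neg hpq, if_neg hpq', hfu, Prod.mk.injEq, Option.some.injEq,
      Bool.false_xor] at h2
    exact ⟨h2.1.symm, h2.2⟩
  obtain ⟨rfl, hc⟩ := hom_classification i j f hinj fun p q hpq => (hmul p q hpq).1
  refine ⟨rfl, codeOf f, hc, Nat.ofBits u, Nat.ofBits_lt_two_pow _, ?_⟩
  have hlt : cob i (Nat.ofBits u) ^^^ pull i (codeOf f) G < 2 ^ 26 :=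
    Nat.xor_lt_two_pow (ofB_lt _) (ofB_lt _)
  apply eq_of_testBit hF hlt
  intro b hb
  obtain ⟨h2, -, h4⟩ := block_spec i b hb
  have h5 := (hmul _ _ h2).2
  have h6 := testBit_cob i (Nat.ofBits u) _ _ h2
  have h7 := testBit_pull i (codeOf f) G f (dig_codeOf f) (fun p q hpq he => hpq (hinj he))
    (fun p q hpq => (hmul p q hpq).1) _ _ h2
  have hu : ∀ p : Fin 13, (Nat.ofBits u).testBit p = u p := fun p =>
    Nat.testBit_ofBits_lt _ _ p.2
  rw [hu, hu, hu] at h6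
  rw [Nat.testBit_xor]
  rw [h4] at h5 h6 h7
  rw [h6, h7]
  revert h5
  cases F.testBit b <;> cases u (op i (bp i b) (bq i b)) <;> cases u (bp i b) <;>
    cases u (bq i b) <;> simp

/-- The code of the identity map of `{0,…,12}`: its hexadecimal digits are `0, 1, …, 12`, lowest
first. -/
def idCode : ℕ := 3582863703552528

theorem one_mem_auts : ∀ i, idCode ∈ auts i := by decide +kernel

theorem dig_one : ∀ p : Fin 13, dig idCode p = p := by decide +kernel

theorem pull_one (i : Bool) (G : ℕ) (hG : G < 2 ^ 26) : pull i idCode G = G := by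
  apply eq_of_testBit (ofB_lt _) hG
  intro b hb
  obtain ⟨h2, -, h4⟩ := block_spec i b hb
  have h7 := testBit_pull i idCode G id dig_one (fun _ _ h => h) (fun _ _ _ => rfl) _ _ h2
  rwa [id, id, h4] at h7

theorem liso_emb_syn (i : Bool) (F : ℕ) (hF : F < 2 ^ 26) :
    LIso (ext i F) (ext i (emb i (syn i F))) :=
  liso_of_eq i _ (one_mem_auts i) F _ _ (by
    rw [pull_one i _ (emb_lt i _), cob_xor_emb_syn i F hF])

theorem liso_induced (i : Bool) (c : ℕ) (hc : c ∈ auts i) (v : ℕ) :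
    LIso (ext i (emb i (induced i c v))) (ext i (emb i v)) :=
  (liso_emb_syn i (pull i c (emb i v)) (ofB_lt _)).symm.trans
    (liso_of_eq i c hc _ _ 0 (by rw [(addX_cob i).zero, Nat.zero_xor]))

theorem induced_of_liso (i j : Bool) (v w : ℕ) (hv : v < 2 ^ 13)
    (h : LIso (ext i (emb i v)) (ext j (emb j w))) :
    i = j ∧ ∃ c ∈ auts i, v = induced i c w := by
  obtain ⟨rfl, c, hc, t, ht, he⟩ := eq_of_liso i j _ _ (emb_lt i v) h
  refine ⟨rfl, c, hc, ?_⟩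
  rw [← syn_emb i v hv, he, addX_syn i, syn_cob i t ht, Nat.zero_xor]
  rfl

/-- Every orbit of syndromes has a minimal element. -/
theorem exists_minimal (i : Bool) (v : ℕ) (hv : v < 2 ^ 13) :
    ∃ w < 2 ^ 13, minimal i w = true ∧ LIso (ext i (emb i v)) (ext i (emb i w)) := by
  induction v using Nat.strong_induction_on with
  | _ v ih =>
    by_cases hmin : minimal i v = true
    · exact ⟨v, hv, hmin, Equiv.refl _, fun _ _ => rfl⟩
    · rw [minimal_iff i v hv] at hmin
      push Not at hmin
      obtain ⟨c, hc, hlt⟩ := hmin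
      obtain ⟨w, hw, hwm, hiso⟩ := ih _ hlt (syn_lt i _)
      exact ⟨w, hw, hwm, (liso_induced i c hc v).symm.trans hiso⟩

/-- Different minimal syndromes give non-isomorphic extensions. -/
theorem minimal_unique (i j : Bool) (v w : ℕ) (hv : v < 2 ^ 13) (hw : w < 2 ^ 13)
    (hvm : minimal i v = true) (hwm : minimal j w = true)
    (h : LIso (ext i (emb i v)) (ext j (emb j w))) : i = j ∧ v = w := by
  obtain ⟨rfl, c, hc, hvw⟩ := induced_of_liso i j v w hv h
  obtain ⟨-, d, hd, hwv⟩ := induced_of_liso i i w v hw h.symm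
  refine ⟨rfl, le_antisymm ?_ ?_⟩
  · rw [hwv]
    exact (minimal_iff i v hv).1 hvm d hd
  · rw [hvw]
    exact (minimal_iff i w hw).1 hwm c hc

/-! ### Steiner loops of order 28 with a central element -/

/-- The involution `z ·` has no fixed points, so its orbits have a transversal, indexed by
`Option (Fin 13)` with the neutral element at `none`. -/
theorem exists_transversal {m : Option (Fin 27) → Option (Fin 27) → Option (Fin 27)}
    (hm : IsSteinerLoop m none) {z : Option (Fin 27)} (hz : z ≠ none) :
    ∃ g : Option (Fin 13) × Bool ≃ Option (Fin 27), g (none, false) = none ∧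
      ∀ k, g (k, true) = m z (g (k, false)) := by
  classical
  let key : Option (Fin 27) → ℕ := fun x => x.elim 0 fun a => a + 1
  have hkey : Function.Injective key := by
    rintro (_ | a) (_ | b) h
    · rfl
    · simp [key] at h
    · simp [key] at h
    · simp only [key, Option.elim_some, Nat.add_right_cancel_iff] at h
      rw [Fin.ext h]
  have hfix : ∀ x, m z x ≠ x := by
    intro x hx
    rw [hm.comm] at hx
    exact hz (hm.mul_left_inj (hx.trans (hm.mul_one x).symm))
  let A := {x : Option (Fin 27) // key x < key (m z x)}
  let g : A × Bool → Option (Fin 27) := fun x => if x.2 then m z x.1.1 else x.1.1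
  have hg : Function.Bijective g := by
    constructor
    · rintro ⟨⟨x, hx⟩, a⟩ ⟨⟨y, hy⟩, b⟩ h
      -- if the flags differ, then `x` and `y` are exchanged by `z ·`
      have hcon : ∀ {x y}, key x < key (m z x) → key y < key (m z y) → x = m z y → False := by
        intro x y hx hy h
        rw [h, hm.cancel] at hx
        omega
      cases a <;> cases b
      · have h' : x = y := h
        subst h'
        rfl
      · exact (hcon hx hy h).elim
      · exact (hcon hy hx (Eq.symm h)).elim
      · have h' : x = y := hm.mul_left_inj h
        subst h'
        rfl
    · intro y
      rcases Nat.lt_trichotomy (key y) (key (m z y)) with h | h | h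
      · exact ⟨(⟨y, h⟩, false), rfl⟩
      · exact absurd (hkey h).symm (hfix y)
      · exact ⟨(⟨m z y, by rwa [hm.cancel]⟩, true), hm.cancel z y⟩
  have hcard : Fintype.card A = Fintype.card (Option (Fin 13)) := by
    have := Fintype.card_of_bijective hg
    simp only [Fintype.card_prod, Fintype.card_bool, Fintype.card_option, Fintype.card_fin] at this
    simp only [Fintype.card_option, Fintype.card_fin]
    omega
  have hnone : key none < key (m z none) := by
    rw [hm.mul_one]
    obtain ⟨a, rfl⟩ := Option.ne_none_iff_exists'.1 hz
    simp [key]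
  let n : A := ⟨none, hnone⟩
  let e₀ : Option (Fin 13) ≃ A := (Fintype.equivOfCardEq hcard).symm
  let e : Option (Fin 13) ≃ A := e₀.trans (Equiv.swap (e₀ none) n)
  refine ⟨(Equiv.prodCongr e (Equiv.refl Bool)).trans (Equiv.ofBijective g hg), ?_, fun k => rfl⟩
  change (Equiv.swap (e₀ none) n (e₀ none)).1 = none
  rw [Equiv.swap_apply_left]

/-- A Steiner loop of order 28 with a nontrivial central element is one of the extensions. -/
theorem exists_ext {m : Option (Fin 27) → Option (Fin 27) → Option (Fin 27)}
    (hm : IsSteinerLoop m none) {z : Option (Fin 27)} (hz : z ≠ none) (hc : Central m z) :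
    ∃ i, ∃ F < 2 ^ 26, LIso m (ext i F) := by
  obtain ⟨g, hg0, hg1⟩ := exists_transversal hm hz
  have hzg : ∀ k a, m z (g (k, a)) = g (k, !a) := by
    intro k a
    cases a
    · exact (hg1 k).symm
    · rw [hg1, hm.cancel]
      rfl
  -- base operation and cocycle with respect to the transversal
  let n : Option (Fin 13) → Option (Fin 13) → Option (Fin 13) := fun k l =>
    (g.symm (m (g (k, false)) (g (l, false)))).1
  let c : Option (Fin 13) → Option (Fin 13) → Bool := fun k l =>
    (g.symm (m (g (k, false)) (g (l, false)))).2
  have h00 : ∀ k l, m (g (k, false)) (g (l, false)) = g (n k l, c k l) := by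
    intro k l
    simp [n, c]
  have hmul : ∀ k a l b, m (g (k, a)) (g (l, b)) = g (n k l, (a ^^ b) ^^ c k l) := by
    have h10 : ∀ k l b, m (g (k, true)) (g (l, b)) = m z (m (g (k, false)) (g (l, b))) := by
      intro k l b
      rw [hg1, hm.central_assoc hc]
    intro k a l b
    cases a <;> cases b
    · simpa using h00 k l
    · rw [hm.comm, h10, hm.comm (g (l, false)), h00, hzg]
      simp
    · rw [h10, h00, hzg]
      simp
    · rw [h10, hm.comm (g (k, false)), h10, hm.cancel, hm.comm, h00]
      simp
  have hn : IsSteinerLoop n none ∧ (∀ k l, c k l = c l k) ∧ (∀ k l, c k (n k l) = c k l) ∧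
      (∀ l, c none l = false) ∧ ∀ k, c k k = false := by
    have hone : ∀ l, n none l = l ∧ c none l = false := by
      intro l
      have h := h00 none l
      rw [hg0, hm.one_mul] at h
      have h' := g.injective h
      simp only [Prod.mk.injEq] at h'
      exact ⟨h'.1.symm, h'.2.symm⟩
    have hcomm : ∀ k l, n k l = n l k ∧ c k l = c l k := by
      intro k l
      have h := h00 k l
      rw [hm.comm, h00] at h
      have h' := g.injective h
      simp only [Prod.mk.injEq] at h'
      exact ⟨h'.1.symm, h'.2.symm⟩
    have hself : ∀ k, n k k = none ∧ c k k = false := by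
      intro k
      have h := h00 k k
      rw [hm.self, ← hg0] at h
      have h' := g.injective h
      simp only [Prod.mk.injEq] at h'
      exact ⟨h'.1.symm, h'.2.symm⟩
    have hcan : ∀ k l, n k (n k l) = l ∧ c k (n k l) = c k l := by
      intro k l
      have h := hm.cancel (g (k, false)) (g (l, false))
      rw [h00, hmul] at h
      have h' := g.injective h
      simp only [Prod.mk.injEq] at h'
      refine ⟨h'.1, ?_⟩
      have h2 := h'.2
      revert h2
      cases c k l <;> simp
    exact ⟨⟨fun l => (hone l).1, fun k l => (hcomm k l).1, fun k => (hself k).1,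
      fun k l => (hcan k l).1⟩, fun k l => (hcomm k l).2, fun k l => (hcan k l).2,
      fun l => (hone l).2, fun k => (hself k).2⟩
  obtain ⟨hn, hccomm, hcn, hcnone, hcself⟩ := hn
  -- the base is the loop of a Steiner triple system of order 13
  obtain ⟨T, hT⟩ := exists_sts hn
  have hR : IsSTSRel fun a b c => ({a, b, c} : Finset (Fin 13)) ∈ T :=
    { ne := fun h => (ne_of_mem hT.sts h).1
      swap := fun h => by rwa [swap12]
      flip := fun h => by rwa [swap23]
      uniq := fun h h' => third_unique hT.sts h h'
      ex := fun a b hab => exists_third hT.sts hab }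
  obtain ⟨i, f, hf⟩ := classified hR
  have hne : ∀ p q, p ≠ q → f p ≠ f q := fun p q hpq => (ne_of_mem hT.sts (hf p q hpq)).1
  have hinj : Function.Injective f := fun p q he => by
    by_contra hpq
    exact hne p q hpq he
  have hfn : ∀ p q, p ≠ q → n (some (f p)) (some (f q)) = some (f (op i p q)) := fun p q hpq =>
    ((hT.mem _ _ _).1 (hf p q hpq)).2
  let F := ofB fun b => c (some (f (bp i b))) (some (f (bq i b)))
  have hF : ∀ p q, p ≠ q → F.testBit (blk i p q) = c (some (f p)) (some (f q)) := by
    intro p q hpq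
    obtain ⟨h1, h2, -⟩ := block_spec i (blk i p q) (blk_lt i p q)
    refine (collinear_induction i (fun x y r => n (some (f x)) (some (f y)) = some (f r) ∧
      F.testBit (blk i p q) = c (some (f x)) (some (f y))) ?_ ?_ p q hpq ⟨?_, ?_⟩).2
    · rintro x y r ⟨h1, h2⟩
      exact ⟨by rw [hn.comm, h1], by rw [h2, hccomm]⟩
    · rintro x y r ⟨h1, h2⟩
      exact ⟨hn.eq_of_mul h1, by rw [h2, ← h1, hcn]⟩
    · rw [hfn _ _ h1, h2]
    · rw [testBit_ofB _ (blk_lt i p q)]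
  refine ⟨i, F, ofB_lt _, LIso.symm ?_⟩
  let f' : Fin 13 ≃ Fin 13 := Equiv.ofBijective f (Finite.injective_iff_bijective.1 hinj)
  refine ⟨(Equiv.prodCongr f'.optionCongr (Equiv.refl Bool)).trans g, ?_⟩
  rintro ⟨x, a⟩ ⟨y, b⟩
  change g ((quo i x y).map f, (a ^^ b) ^^ coc i F x y) = m (g (x.map f, a)) (g (y.map f, b))
  rw [hmul]
  congr 2
  · rcases x with _ | p
    · exact (hn.one_mul _).symm
    rcases y with _ | q
    · exact (hn.mul_one _).symm
    by_cases hpq : p = q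
    · subst hpq
      rw [hn.self]
      simp [quo]
    · simp [quo, hpq, hfn p q hpq]
  · congr 1
    rcases x with _ | p
    · exact (hcnone _).symm
    rcases y with _ | q
    · exact ((hccomm _ _).trans (hcnone _)).symm
    by_cases hpq : p = q
    · subst hpq
      rw [hcself, coc_self]
    · simp only [coc, if_neg hpq, Option.map_some, hF p q hpq]

/-- Every extension comes from a Steiner triple system of order 27, which has exactly one Veblen
point because only `(none, true)` is a nontrivial central element. -/
theorem exists_sts_of_ext (i : Bool) (F : ℕ) :
    ∃ T : Set (Finset (Fin 27)), (IsSTS T ∧ ∃! x, IsVeblen T x) ∧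
      ∃ m, IsLoopOf T m ∧ LIso m (ext i F) := by
  have hcard : Fintype.card (Option (Fin 13) × Bool) = Fintype.card (Option (Fin 27)) := by simp
  let e₀ : Option (Fin 13) × Bool ≃ Option (Fin 27) := Fintype.equivOfCardEq hcard
  let g : Option (Fin 13) × Bool ≃ Option (Fin 27) :=
    e₀.trans (Equiv.swap (e₀ (none, false)) none)
  have hg0 : g (none, false) = none := Equiv.swap_apply_left _ _
  let m : Option (Fin 27) → Option (Fin 27) → Option (Fin 27) := fun x y =>
    g (ext i F (g.symm x) (g.symm y))
  have hg : ∀ x y, g (ext i F x y) = m (g x) (g y) := by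
    intro x y
    simp [m]
  have hg' : ∀ x y, g.symm (m x y) = ext i F (g.symm x) (g.symm y) := by
    intro x y
    simp [m]
  have hm : IsSteinerLoop m none := hg0 ▸ (ext_loop i F).transport g hg
  obtain ⟨T, hT⟩ := exists_sts hm
  refine ⟨T, ⟨hT.sts, ?_⟩, m, hT, g.symm, hg'⟩
  have hz : g (none, true) ≠ none := fun he => by
    have := g.injective (he.trans hg0.symm)
    simp at this
  obtain ⟨x, hx⟩ := Option.ne_none_iff_exists'.1 hz
  refine ⟨x, ?_, ?_⟩
  · change IsVeblen T x
    rw [hT.veblen_iff, ← hx]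
    exact (ext_central i F true).map g hg
  · intro y hy
    have h1 := (ext_central_iff i F _).1 (((hT.veblen_iff y).1 hy).map g.symm hg')
    cases h2 : g.symm (some y) with
    | mk k a =>
      rw [h2] at h1
      obtain rfl : k = none := h1
      rw [Equiv.symm_apply_eq] at h2
      cases a
      · rw [hg0] at h2
        simp at h2
      · rw [hx] at h2
        exact Option.some.inj h2

/-! ### Counting -/

/-- The minimal syndromes: canonical representatives of the isomorphism classes. -/
abbrev Reps : Type :=
  Σ i : Bool, {v // v ∈ (Finset.Ico (2 ^ 13 * 0) (2 ^ 13 * (0 + 1))).filter fun w => minimal i w}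

theorem card_reps : Nat.card Reps = 1736 := by
  rw [Nat.card_eq_fintype_card, Fintype.card_sigma]
  simp only [Fintype.card_coe, Fintype.sum_bool, ← cnt_eq, cnt_false, cnt_true]

theorem mem_reps (i : Bool) (v : ℕ) :
    v ∈ (Finset.Ico (2 ^ 13 * 0) (2 ^ 13 * (0 + 1))).filter (fun w => minimal i w) ↔
      v < 2 ^ 13 ∧ minimal i v = true := by
  simp

end STS27

/-- Up to isomorphism, there are exactly 1736 Steiner triple systems of order 27
containing exactly one Veblen point. -/
theorem sts27_exactly_one_veblen_count :
    Nat.card (Quot (fun S₁ S₂ : {T : Set (Finset (Fin 27)) //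
        IsSTS T ∧ ∃! x : Fin 27, IsVeblen T x} => STSIso S₁.1 S₂.1)) = 1736 := by
  classical
  have hloop : ∀ S : {T : Set (Finset (Fin 27)) // IsSTS T ∧ ∃! x : Fin 27, IsVeblen T x},
      ∃ m, STS27.IsLoopOf S.1 m := fun S => STS27.exists_loop S.2.1
  choose m hm using hloop
  have hiso : ∀ S₁ S₂, STSIso S₁.1 S₂.1 ↔ STS27.LIso (m S₁) (m S₂) := fun S₁ S₂ =>
    (hm S₁).iso_iff (hm S₂)
  have heqv : Equivalence (fun S₁ S₂ : {T : Set (Finset (Fin 27)) //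
      IsSTS T ∧ ∃! x : Fin 27, IsVeblen T x} => STSIso S₁.1 S₂.1) := by
    refine ⟨fun S => ?_, fun {S₁ S₂} h => ?_, fun {S₁ S₂ S₃} h h' => ?_⟩
    · exact (hiso S S).2 ⟨Equiv.refl _, fun _ _ => rfl⟩
    · exact (hiso _ _).2 ((hiso _ _).1 h).symm
    · exact (hiso _ _).2 (((hiso _ _).1 h).trans ((hiso _ _).1 h'))
  -- a system realizing each representative
  have hrep : ∀ y : STS27.Reps, ∃ S : {T : Set (Finset (Fin 27)) //
      IsSTS T ∧ ∃! x : Fin 27, IsVeblen T x},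
      STS27.LIso (m S) (STS27.ext y.1 (STS27.emb y.1 y.2.1)) := by
    intro y
    obtain ⟨T, hT, n, hn, hl⟩ := STS27.exists_sts_of_ext y.1 (STS27.emb y.1 y.2.1)
    refine ⟨⟨T, hT⟩, ?_⟩
    have h := ((hm ⟨T, hT⟩).iso_iff hn).1 (heqv.refl ⟨T, hT⟩)
    exact h.trans hl
  choose S hS using hrep
  rw [← STS27.card_reps]
  symm
  apply Nat.card_eq_of_bijective (fun y => Quot.mk _ (S y))
  constructor
  · rintro ⟨i, v, hv⟩ ⟨j, w, hw⟩ h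
    have h1 := (hiso _ _).1 (heqv.eqvGen_iff.1 (Quot.eqvGen_exact h))
    have h2 := ((hS ⟨i, v, hv⟩).symm.trans h1).trans (hS ⟨j, w, hw⟩)
    have hv' := (STS27.mem_reps i v).1 hv
    have hw' := (STS27.mem_reps j w).1 hw
    obtain ⟨rfl, rfl⟩ := STS27.minimal_unique i j v w hv'.1 hw'.1 hv'.2 hw'.2 h2
    rfl
  · intro q
    induction q using Quot.ind with
    | _ s =>
      obtain ⟨x, hx, -⟩ := s.2.2
      obtain ⟨i, F, hF, h1⟩ := STS27.exists_ext (hm s).loop (Option.some_ne_none x)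
        (((hm s).veblen_iff x).1 hx)
      obtain ⟨w, hw, hmin, h2⟩ := STS27.exists_minimal i _ (STS27.syn_lt i F)
      have h3 := (h1.trans (STS27.liso_emb_syn i F hF)).trans h2
      refine ⟨⟨i, w, (STS27.mem_reps i w).2 ⟨hw, hmin⟩⟩, Quot.sound ?_⟩
      exact (hiso _ _).2 ((hS _).trans h3.symm)
end
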